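/- Let H be the star-expansion of a forest. Then for every integer ℓ ≥ 3, there exists a real number τ > 0 such that every graph G that is H-free and, for every m ≥ ℓ, is (complement of C_m)-free, satisfies max(α(G), ω(G)) ≥ |G|^τ; that is, the set {H, C̄_ℓ, C̄_{ℓ+1}, C̄_{ℓ+2}, …} has the Erdős–Hajnal property. -/

import Mathlib

open SimpleGraph

/-- The independence (stable set) number of a graph: the clique number of the complement. -/
noncomputable def alphaNum {V : Type*} (G : SimpleGraph V) : ℕ := Gᶜ.cliqueNum

/-- The clique number of a graph. -/
noncomputable def omegaNum {V : Type*} (G : SimpleGraph V) : ℕ := G.cliqueNum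

/-- κ(G) = α(G)·ω(G). -/
noncomputable def kappaNum {V : Type*} (G : SimpleGraph V) : ℕ := alphaNum G * omegaNum G

/-- The star-expansion of `H`: for each vertex `b` of `H`, add a new vertex `a_b` adjacent
to `b` only, and add one further vertex `v` adjacent to all of the `a_b` and nothing else. -/
def starExpansion {W : Type*} (H : SimpleGraph W) : SimpleGraph (W ⊕ W ⊕ Unit) :=
  SimpleGraph.fromRel (fun x y =>
    match x, y with
    | Sum.inl b, Sum.inl b' => H.Adj b b'
    | Sum.inl b, Sum.inr (Sum.inl a) => b = a
    | Sum.inr (Sum.inl _), Sum.inr (Sum.inr _) => True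
    | _, _ => False)

section Rodl

open Classical in
/-- The neighbours of `x` inside the finite set `Y`. -/
noncomputable def nbs {V : Type*} (G : SimpleGraph V) (Y : Finset V) (x : V) : Finset V :=
  Y.filter (G.Adj x)

variable {V : Type*}

lemma mem_nbs {G : SimpleGraph V} {Y : Finset V} {x y : V} :
    y ∈ nbs G Y x ↔ y ∈ Y ∧ G.Adj x y := by
  simp [nbs]

lemma nbs_subset (G : SimpleGraph V) (Y : Finset V) (x : V) : nbs G Y x ⊆ Y :=
  fun _ h => (mem_nbs.1 h).1

lemma nbs_mono (G : SimpleGraph V) {Y Z : Finset V} (h : Y ⊆ Z) (x : V) :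
    nbs G Y x ⊆ nbs G Z x :=
  fun _ hy => mem_nbs.2 ⟨h (mem_nbs.1 hy).1, (mem_nbs.1 hy).2⟩

lemma card_nbs_mono (G : SimpleGraph V) {Y Z : Finset V} (h : Y ⊆ Z) (x : V) :
    (nbs G Y x).card ≤ (nbs G Z x).card :=
  Finset.card_le_card (nbs_mono G h x)

lemma sum_nbs_comm (G : SimpleGraph V) (A B : Finset V) :
    ∑ a ∈ A, (nbs G B a).card = ∑ b ∈ B, (nbs G A b).card := by
  classical
  have h := Finset.sum_card_bipartiteAbove_eq_sum_card_bipartiteBelow (s := A) (t := B)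
    (fun a b => G.Adj a b)
  simp only [Finset.bipartiteAbove, Finset.bipartiteBelow] at h
  convert h using 1
  · refine Finset.sum_congr rfl fun a _ => ?_
    congr 1
  · refine Finset.sum_congr rfl fun a _ => ?_
    congr 1
    ext y; simp [nbs, G.adj_comm]

open Classical in
/-- If the vertices of `A` have few neighbours in `B`, then most vertices of `B` have few
neighbours in `A`. -/
lemma two_mul_card_filter_le (G : SimpleGraph V) {A B : Finset V} {P : ℕ}
    (h : ∀ a ∈ A, P * (nbs G B a).card ≤ B.card) :
    2 * (B.filter (fun b => 2 * A.card < P * (nbs G A b).card)).card ≤ B.card := by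
  rcases Finset.eq_empty_or_nonempty A with rfl | hA
  · have : B.filter (fun b => 2 * (∅ : Finset V).card < P * (nbs G ∅ b).card) = ∅ := by
      apply Finset.filter_eq_empty_iff.2
      intro x _
      simp [nbs]
    rw [this]; simp
  have h1 : P * ∑ b ∈ B, (nbs G A b).card ≤ A.card * B.card := by
    rw [← sum_nbs_comm, Finset.mul_sum]
    calc _ ≤ ∑ a ∈ A, B.card := Finset.sum_le_sum h
      _ = _ := by simp
  have h2 : (B.filter (fun b => 2 * A.card < P * (nbs G A b).card)).card * (2 * A.card)
      ≤ P * ∑ b ∈ B, (nbs G A b).card := by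
    rw [Finset.mul_sum]
    calc _ ≤ ∑ b ∈ B.filter (fun b => 2 * A.card < P * (nbs G A b).card),
          P * (nbs G A b).card := by
          rw [← smul_eq_mul]
          refine Finset.card_nsmul_le_sum _ _ _ fun x hx => ?_
          exact (Finset.mem_filter.1 hx).2.le
      _ ≤ _ := Finset.sum_le_sum_of_subset (Finset.filter_subset _ _)
  have hA' : 0 < A.card := Finset.card_pos.2 hA
  have := h2.trans h1
  nlinarith

/-- A one-sided sparse pair in `G` or its complement, or a rainbow copy of `H`. -/
lemma rainbow_or_sparse (G : SimpleGraph V) (E M s : ℕ) (hE : E ≤ M) (hM : 1 ≤ M) (hs : 1 ≤ s) :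
    ∀ h, h ≤ M → ∀ (H : SimpleGraph (Fin h)) (X : Fin h → Finset V),
      (∀ i j, i ≠ j → Disjoint (X i) (X j)) → (∀ i, M ^ h * s ≤ (X i).card) →
      (∃ x : Fin h → V, (∀ i, x i ∈ X i) ∧ ∀ i j, G.Adj (x i) (x j) ↔ H.Adj i j) ∨
      ∃ A B : Finset V, (∃ i, A ⊆ X i) ∧ (∃ j, B ⊆ X j) ∧ Disjoint A B ∧ s ≤ A.card ∧
        s ≤ B.card ∧ ((∀ a ∈ A, E * (nbs G B a).card ≤ B.card) ∨
          ∀ a ∈ A, E * (nbs Gᶜ B a).card ≤ B.card) := by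
  classical
  intro h
  induction h with
  | zero => intro _ H X _ _; left; exact ⟨Fin.elim0, fun i => i.elim0, fun i => i.elim0⟩
  | succ h ih =>
    intro hh H X hd hX
    let Gj : Fin h → SimpleGraph V := fun j => if H.Adj 0 j.succ then G else Gᶜ
    by_cases hgood : ∃ x ∈ X 0, ∀ j : Fin h, (X j.succ).card ≤ E * (nbs (Gj j) (X j.succ) x).card
    · obtain ⟨x, hx, hxj⟩ := hgood
      have := ih (by omega) (H.comap Fin.succ) (fun j => nbs (Gj j) (X j.succ) x) ?_ ?_
      · rcases this with ⟨y, hy, hyA⟩ | ⟨A, B, ⟨i, hi⟩, ⟨j, hj⟩, hrest⟩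
        · left
          have hadj : ∀ j : Fin h, G.Adj x (y j) ↔ H.Adj 0 j.succ := by
            intro j
            have := (mem_nbs.1 (hy j)).2
            by_cases hH : H.Adj 0 j.succ
            · simp only [Gj, hH, if_true] at this; simp [hH, this]
            · simp only [Gj, hH, if_false] at this
              simp only [compl_adj] at this
              simp [hH, this.2]
          refine ⟨Fin.cons x y, ?_, ?_⟩
          · intro i
            refine Fin.cases ?_ (fun i => ?_) i
            · simpa using hx
            · simpa using nbs_subset _ _ _ (hy i)
          · intro i j
            refine Fin.cases ?_ (fun i => ?_) i <;> refine Fin.cases ?_ (fun j => ?_) j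
            · simp
            · simpa using hadj j
            · simpa [G.adj_comm, H.adj_comm] using hadj i
            · simpa using hyA i j
        · right
          exact ⟨A, B, ⟨i.succ, hi.trans (nbs_subset _ _ _)⟩, ⟨j.succ, hj.trans (nbs_subset _ _ _)⟩,
            hrest⟩
      · intro i j hij
        exact (hd i.succ j.succ (by simpa using hij)).mono (nbs_subset _ _ _) (nbs_subset _ _ _)
      · intro i
        have h1 := hX i.succ
        have h2 := hxj i
        have h3 : E * (nbs (Gj i) (X i.succ) x).card ≤ M * (nbs (Gj i) (X i.succ) x).card :=
          Nat.mul_le_mul_right _ hE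
        rw [pow_succ] at h1
        have : M * (M ^ h * s) ≤ M * (nbs (Gj i) (X i.succ) x).card := by
          calc _ = M ^ h * M * s := by ring
            _ ≤ _ := h1.trans (h2.trans h3)
        exact Nat.le_of_mul_le_mul_left this (by omega)
    · right
      push Not at hgood
      have hpow : ∀ i, M * s ≤ (X i).card := fun i => by
        refine le_trans ?_ (hX i)
        rw [pow_succ]
        have : 1 ≤ M ^ h := Nat.one_le_pow _ _ hM
        nlinarith [Nat.mul_le_mul this (le_refl (M * s))]
      let bad : Fin h → Finset V := fun j => (X 0).filter
        (fun x => E * (nbs (Gj j) (X j.succ) x).card < (X j.succ).card)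
      have hcov : X 0 ⊆ Finset.univ.biUnion bad := by
        intro x hx
        obtain ⟨j, hj⟩ := hgood x hx
        simp only [Finset.mem_biUnion, Finset.mem_univ, true_and]
        exact ⟨j, Finset.mem_filter.2 ⟨hx, hj⟩⟩
      have : ∃ j, s ≤ (bad j).card := by
        by_contra hcon
        push Not at hcon
        have h1 := Finset.card_le_card hcov
        have h2 : (Finset.univ.biUnion bad).card ≤ ∑ j, (bad j).card := Finset.card_biUnion_le
        have h3 : ∑ j, (bad j).card ≤ ∑ _j : Fin h, s := Finset.sum_le_sum fun j _ => (hcon j).le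
        simp at h3
        have h4 := hpow 0
        have : h * s < M * s := Nat.mul_lt_mul_of_pos_right (by omega) (by omega)
        omega
      obtain ⟨j, hj⟩ := this
      have hb : ∀ a ∈ bad j, E * (nbs (Gj j) (X j.succ) a).card ≤ (X j.succ).card :=
        fun a ha => (Finset.mem_filter.1 ha).2.le
      refine ⟨bad j, X j.succ, ⟨0, Finset.filter_subset _ _⟩, ⟨j.succ, subset_rfl⟩,
        (hd 0 j.succ (Fin.succ_ne_zero j).symm).mono_left (Finset.filter_subset _ _), hj, ?_, ?_⟩
      · have := hpow j.succ
        nlinarith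
      · by_cases hH : H.Adj 0 j.succ
        · left; simpa only [Gj, hH, if_true] using hb
        · right; simpa only [Gj, hH, if_false] using hb

open Classical in
lemma exists_equal_sizes (G : SimpleGraph V) {A B : Finset V} {E w : ℕ}
    (hA : 2 * w ≤ A.card) (hB : 2 * w ≤ B.card)
    (h : ∀ a ∈ A, (4 * E) * (nbs G B a).card ≤ B.card) :
    ∃ A₁ ⊆ A, ∃ B₁ ⊆ B, A₁.card = w ∧ B₁.card = w ∧ ∀ a ∈ A₁, E * (nbs G B₁ a).card ≤ w := by
  have h1 := two_mul_card_filter_le G h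
  have h2 := Finset.card_filter_add_card_filter_not (s := B)
    (fun b => 2 * A.card < (4 * E) * (nbs G A b).card)
  obtain ⟨B₁, hB₁, hB₁c⟩ := Finset.exists_subset_card_eq
    (s := B.filter (fun b => ¬ 2 * A.card < (4 * E) * (nbs G A b).card)) (n := w) (by omega)
  have h3 : ∀ b ∈ B₁, (2 * E) * (nbs G A b).card ≤ A.card := fun b hb => by
    have := (Finset.mem_filter.1 (hB₁ hb)).2
    push Not at this
    nlinarith
  have h4 := two_mul_card_filter_le G h3
  have h5 := Finset.card_filter_add_card_filter_not (s := A)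
    (fun b => 2 * B₁.card < (2 * E) * (nbs G B₁ b).card)
  obtain ⟨A₁, hA₁, hA₁c⟩ := Finset.exists_subset_card_eq
    (s := A.filter (fun b => ¬ 2 * B₁.card < (2 * E) * (nbs G B₁ b).card)) (n := w) (by omega)
  refine ⟨A₁, hA₁.trans (Finset.filter_subset _ _), B₁, hB₁.trans (Finset.filter_subset _ _),
    hA₁c, hB₁c, fun a ha => ?_⟩
  have := (Finset.mem_filter.1 (hA₁ ha)).2
  push Not at this
  rw [hB₁c] at this
  nlinarith

/-- Every large set can be split into disjoint sets of prescribed size. -/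
lemma exists_blocks (X : Finset V) (s : ℕ) : ∀ h : ℕ, h * s ≤ X.card →
    ∃ Y : Fin h → Finset V, (∀ i j, i ≠ j → Disjoint (Y i) (Y j)) ∧
      ∀ i, Y i ⊆ X ∧ (Y i).card = s := by
  classical
  intro h
  induction h generalizing X with
  | zero => intro _; exact ⟨Fin.elim0, fun i => i.elim0, fun i => i.elim0⟩
  | succ h ih =>
    intro hX
    obtain ⟨Z, hZ, hZc⟩ := Finset.exists_subset_card_eq (s := X) (n := s) (by nlinarith)
    obtain ⟨Y, hY, hYX⟩ := ih (X \ Z) (by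
      rw [Finset.card_sdiff_of_subset hZ, hZc]
      have : (h + 1) * s = h * s + s := by ring
      omega)
    refine ⟨Fin.cons Z Y, ?_, ?_⟩
    · intro i j
      refine Fin.cases ?_ (fun i => ?_) i <;> refine Fin.cases ?_ (fun j => ?_) j <;> intro hij
      · exact absurd rfl hij
      · simpa using (Finset.disjoint_sdiff.mono_right (hYX j).1)
      · simpa using (Finset.disjoint_sdiff.mono_right (hYX i).1).symm
      · simpa using hY i j (by simpa using hij)
    · intro i
      refine Fin.cases ?_ (fun i => ?_) i
      · simpa using ⟨hZ, hZc⟩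
      · simpa using ⟨(hYX i).1.trans Finset.sdiff_subset, (hYX i).2⟩

lemma exists_sparse_pair {h : ℕ} (H : SimpleGraph (Fin h)) (E : ℕ) :
    ∃ D : ℕ, ∀ {V : Type*} (G : SimpleGraph V), ¬ Nonempty (H ↪g G) →
      ∀ (w : ℕ) (X : Finset V), D * w ≤ X.card →
      ∃ A ⊆ X, ∃ B ⊆ X, Disjoint A B ∧ A.card = w ∧ B.card = w ∧
        ((∀ a ∈ A, E * (nbs G B a).card ≤ w) ∨ ∀ a ∈ A, E * (nbs Gᶜ B a).card ≤ w) := by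
  classical
  let M := 4 * E + h + 1
  refine ⟨h * (M ^ h * 2), fun {V} G hH w X hX => ?_⟩
  rcases Nat.eq_zero_or_pos w with rfl | hw
  · exact ⟨∅, by simp, ∅, by simp, by simp, rfl, rfl, Or.inl (by simp)⟩
  obtain ⟨Y, hY, hYX⟩ := exists_blocks X (M ^ h * (2 * w)) h (by
    calc _ = h * (M ^ h * 2) * w := by ring
      _ ≤ _ := hX)
  rcases rainbow_or_sparse G (4 * E) M (2 * w) (by omega) (by omega) (by omega) h (by omega) H Y hY
    (fun i => (hYX i).2.ge) with ⟨x, hx, hxa⟩ | ⟨A, B, ⟨i, hi⟩, ⟨j, hj⟩, hd, hA, hB, hAB⟩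
  · exfalso
    refine hH ⟨⟨⟨x, fun i j hij => ?_⟩, fun {a b} => hxa a b⟩⟩
    by_contra hne
    have h1 := hx j
    rw [← hij] at h1
    exact Finset.disjoint_left.1 (hY i j hne) (hx i) h1
  · have hAX := hi.trans (hYX i).1
    have hBX := hj.trans (hYX j).1
    rcases hAB with hAB | hAB
    · obtain ⟨A₁, hA₁, B₁, hB₁, h1, h2, h3⟩ := exists_equal_sizes G hA hB hAB
      exact ⟨A₁, hA₁.trans hAX, B₁, hB₁.trans hBX, hd.mono hA₁ hB₁, h1, h2, Or.inl h3⟩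
    · obtain ⟨A₁, hA₁, B₁, hB₁, h1, h2, h3⟩ := exists_equal_sizes Gᶜ hA hB hAB
      exact ⟨A₁, hA₁.trans hAX, B₁, hB₁.trans hBX, hd.mono hA₁ hB₁, h1, h2, Or.inr h3⟩

/-- `p` disjoint blocks of size `w` inside `X` with sparse pairs between them. -/
def SparseBlocks (G : SimpleGraph V) (E w p : ℕ) (X : Finset V) : Prop :=
  ∃ B : Fin p → Finset V, (∀ i, B i ⊆ X ∧ (B i).card = w) ∧
    (∀ i j, i ≠ j → Disjoint (B i) (B j)) ∧
    ∀ i j, i ≠ j → ∀ a ∈ B i, E * (nbs G (B j) a).card ≤ w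

lemma SparseBlocks.mono {G : SimpleGraph V} {E w p : ℕ} {X Y : Finset V}
    (h : SparseBlocks G E w p X) (hXY : X ⊆ Y) : SparseBlocks G E w p Y := by
  obtain ⟨B, h1, h2, h3⟩ := h
  exact ⟨B, fun i => ⟨(h1 i).1.trans hXY, (h1 i).2⟩, h2, h3⟩

lemma sparseBlocks_zero (G : SimpleGraph V) (E w : ℕ) (X : Finset V) :
    SparseBlocks G E w 0 X :=
  ⟨Fin.elim0, fun i => i.elim0, fun i => i.elim0, fun i => i.elim0⟩

lemma SparseBlocks.succ {G : SimpleGraph V} {E w p D : ℕ} {A B X : Finset V}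
    (hA : A ⊆ X) (hB : B ⊆ X) (hd : Disjoint A B) (hD : 2 ≤ D) (hBc : B.card = D * w)
    (hs : ∀ a ∈ A, (E * D * (2 * p + 1)) * (nbs G B a).card ≤ D * w)
    (h : SparseBlocks G E w p A) : SparseBlocks G E w (p + 1) X := by
  classical
  rcases Nat.eq_zero_or_pos w with rfl | hw
  · exact ⟨fun _ => ∅, by simp, by simp, by simp⟩
  obtain ⟨Y, hYA, hYd, hYs⟩ := h
  let bad : Fin p → Finset V := fun i => B.filter fun b => w < E * (nbs G (Y i) b).card
  have hbad : ∀ i, (2 * p + 1) * (bad i).card ≤ D * w := by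
    intro i
    have h1 : (bad i).card * w ≤ E * ∑ b ∈ B, (nbs G (Y i) b).card := by
      rw [Finset.mul_sum]
      calc _ ≤ ∑ b ∈ bad i, E * (nbs G (Y i) b).card := by
            rw [← smul_eq_mul]
            exact Finset.card_nsmul_le_sum _ _ _ fun x hx => (Finset.mem_filter.1 hx).2.le
        _ ≤ _ := Finset.sum_le_sum_of_subset (Finset.filter_subset _ _)
    rw [← sum_nbs_comm] at h1
    have h2 : (E * D * (2 * p + 1)) * ∑ a ∈ Y i, (nbs G B a).card ≤ w * (D * w) := by
      rw [Finset.mul_sum]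
      calc _ ≤ ∑ a ∈ Y i, D * w := Finset.sum_le_sum fun a ha => hs a ((hYA i).1 ha)
        _ = _ := by simp [(hYA i).2]
    have h3 : (D * (2 * p + 1)) * ((bad i).card * w) ≤ w * (D * w) := by
      calc _ ≤ (D * (2 * p + 1)) * (E * ∑ a ∈ Y i, (nbs G B a).card) :=
            Nat.mul_le_mul_left _ h1
        _ = (E * D * (2 * p + 1)) * ∑ a ∈ Y i, (nbs G B a).card := by ring
        _ ≤ _ := h2
    have h4 : (D * w) * ((2 * p + 1) * (bad i).card) ≤ (D * w) * w := by nlinarith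
    have h5 := Nat.le_of_mul_le_mul_left h4 (by positivity)
    nlinarith
  have hsum : 2 * (Finset.univ.biUnion bad).card ≤ D * w := by
    have h2 : (Finset.univ.biUnion bad).card ≤ ∑ j, (bad j).card := Finset.card_biUnion_le
    have h3 : (2 * p + 1) * ∑ j, (bad j).card ≤ p * (D * w) := by
      rw [Finset.mul_sum]
      calc _ ≤ ∑ j : Fin p, D * w := Finset.sum_le_sum fun j _ => hbad j
        _ = _ := by simp
    by_contra hcon
    push Not at hcon
    have : p * (D * w) ≤ p * (2 * (Finset.univ.biUnion bad).card) := Nat.mul_le_mul_left _ hcon.le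
    have h6 : (2 * p + 1) * (Finset.univ.biUnion bad).card ≤ (2 * p + 1) * ∑ j, (bad j).card :=
      Nat.mul_le_mul_left _ h2
    have : 0 < D * w := by positivity
    nlinarith
  have hcard : w ≤ (B \ Finset.univ.biUnion bad).card := by
    have := Finset.le_card_sdiff (Finset.univ.biUnion bad) B
    have : 2 * w ≤ D * w := Nat.mul_le_mul_right _ hD
    omega
  obtain ⟨Z, hZ, hZc⟩ := Finset.exists_subset_card_eq hcard
  have hZB : Z ⊆ B := hZ.trans Finset.sdiff_subset
  refine ⟨Fin.cons Z Y, ?_, ?_, ?_⟩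
  · intro i
    refine Fin.cases ?_ (fun i => ?_) i
    · simpa using ⟨hZB.trans hB, hZc⟩
    · simpa using ⟨(hYA i).1.trans hA, (hYA i).2⟩
  · intro i j
    refine Fin.cases ?_ (fun i => ?_) i <;> refine Fin.cases ?_ (fun j => ?_) j <;> intro hij
    · exact absurd rfl hij
    · simpa using (hd.mono (hYA j).1 hZB).symm
    · simpa using (hd.mono (hYA i).1 hZB)
    · simpa using hYd i j (by simpa using hij)
  · intro i j
    refine Fin.cases ?_ (fun i => ?_) i <;> refine Fin.cases ?_ (fun j => ?_) j <;> intro hij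
    · exact absurd rfl hij
    · simp only [Fin.cons_zero, Fin.cons_succ]
      intro a ha
      by_contra hcon
      push Not at hcon
      have h1 := Finset.mem_sdiff.1 (hZ ha)
      apply h1.2
      simp only [Finset.mem_biUnion, Finset.mem_univ, true_and]
      exact ⟨j, Finset.mem_filter.2 ⟨h1.1, hcon⟩⟩
    · simp only [Fin.cons_zero, Fin.cons_succ]
      intro a ha
      have h1 := hs a ((hYA i).1 ha)
      have h2 := card_nbs_mono G hZB a
      have h3 : D * (E * (nbs G Z a).card) ≤ D * w := by
        calc _ = (E * D * 1) * (nbs G Z a).card := by ring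
          _ ≤ (E * D * (2 * p + 1)) * (nbs G B a).card := by gcongr; omega
          _ ≤ _ := h1
      exact Nat.le_of_mul_le_mul_left h3 (by omega)
    · simpa using hYs i j (by simpa using hij)

lemma exists_sparseBlocks {h : ℕ} (H : SimpleGraph (Fin h)) (E : ℕ) : ∀ n p q : ℕ, p + q = n →
    ∃ D : ℕ, ∀ {V : Type*} (G : SimpleGraph V), ¬ Nonempty (H ↪g G) →
      ∀ (w : ℕ) (X : Finset V), D * w ≤ X.card →
      SparseBlocks G E w p X ∨ SparseBlocks Gᶜ E w q X := by
  intro n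
  induction n with
  | zero =>
    intro p q hpq
    obtain rfl : p = 0 := by omega
    exact ⟨0, fun G _ w X _ => Or.inl (sparseBlocks_zero _ _ _ _)⟩
  | succ n ih =>
    intro p q hpq
    rcases p with _ | p
    · exact ⟨0, fun G _ w X _ => Or.inl (sparseBlocks_zero _ _ _ _)⟩
    rcases q with _ | q
    · exact ⟨0, fun G _ w X _ => Or.inr (sparseBlocks_zero _ _ _ _)⟩
    obtain ⟨D₁, h₁⟩ := ih p (q + 1) (by omega)
    obtain ⟨D₂, h₂⟩ := ih (p + 1) q (by omega)
    let D := D₁ + D₂ + 2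
    obtain ⟨D₃, h₃⟩ := exists_sparse_pair H (E * D * (2 * (p + q) + 1))
    refine ⟨D₃ * D, fun G hH w X hX => ?_⟩
    obtain ⟨A, hA, B, hB, hd, hAc, hBc, hAB⟩ := h₃ G hH (D * w) X (by rw [← mul_assoc]; exact hX)
    rcases hAB with hAB | hAB
    · rcases h₁ G hH w A (by rw [hAc]; gcongr; omega) with h | h
      · left
        refine SparseBlocks.succ (D := D) hA hB hd (by omega) hBc (fun a ha => ?_) h
        refine le_trans ?_ (hAB a ha)
        gcongr
        omega
      · exact Or.inr (h.mono hA)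
    · rcases h₂ G hH w A (by rw [hAc]; gcongr; omega) with h | h
      · exact Or.inl (h.mono hA)
      · right
        refine SparseBlocks.succ (D := D) hA hB hd (by omega) hBc (fun a ha => ?_) h
        refine le_trans ?_ (hAB a ha)
        gcongr
        omega

lemma SparseBlocks.exists_sparse {G : SimpleGraph V} {E w : ℕ} {X : Finset V}
    (h : SparseBlocks G E w E X) :
    ∃ Y ⊆ X, Y.card = E * w ∧ ∀ x ∈ Y, (nbs G Y x).card ≤ 2 * w := by
  classical
  obtain ⟨B, hB, hd, hs⟩ := h
  refine ⟨Finset.univ.biUnion B, ?_, ?_, ?_⟩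
  · exact Finset.biUnion_subset.2 fun i _ => (hB i).1
  · rw [Finset.card_biUnion fun i _ j _ hij => hd i j hij]
    simp [(hB _).2]
  · intro x hx
    obtain ⟨i, -, hi⟩ := Finset.mem_biUnion.1 hx
    have hE : 0 < E := Fin.pos i
    have h1 : nbs G (Finset.univ.biUnion B) x ⊆ Finset.univ.biUnion fun j => nbs G (B j) x := by
      intro y hy
      obtain ⟨hy, ha⟩ := mem_nbs.1 hy
      obtain ⟨j, -, hj⟩ := Finset.mem_biUnion.1 hy
      exact Finset.mem_biUnion.2 ⟨j, Finset.mem_univ _, mem_nbs.2 ⟨hj, ha⟩⟩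
    have h2 := (Finset.card_le_card h1).trans Finset.card_biUnion_le
    have h3 : E * ∑ j, (nbs G (B j) x).card ≤ E * (2 * w) := by
      rw [← Finset.add_sum_erase _ _ (Finset.mem_univ i), mul_add]
      have h4 : (nbs G (B i) x).card ≤ w := (Finset.card_le_card (nbs_subset _ _ _)).trans (hB i).2.le
      have h5 : E * ∑ j ∈ Finset.univ.erase i, (nbs G (B j) x).card ≤ E * w := by
        rw [Finset.mul_sum]
        calc _ ≤ ∑ j ∈ Finset.univ.erase i, w :=
              Finset.sum_le_sum fun j hj => hs i j (Finset.ne_of_mem_erase hj).symm x hi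
          _ = (Finset.univ.erase i).card * w := by simp
          _ ≤ _ := by
            gcongr
            exact (Finset.card_erase_le).trans (by simp)
      nlinarith
    exact h2.trans (Nat.le_of_mul_le_mul_left h3 hE)

/-- Rödl's theorem. -/
theorem rodl {h : ℕ} (H : SimpleGraph (Fin h)) (E : ℕ) :
    ∃ D : ℕ, ∀ {V : Type*} (G : SimpleGraph V), ¬ Nonempty (H ↪g G) →
      ∀ (w : ℕ) (X : Finset V), D * w ≤ X.card →
      ∃ Y ⊆ X, Y.card = E * w ∧
        ((∀ x ∈ Y, (nbs G Y x).card ≤ 2 * w) ∨ ∀ x ∈ Y, (nbs Gᶜ Y x).card ≤ 2 * w) := by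
  obtain ⟨D, hD⟩ := exists_sparseBlocks H E (E + E) E E rfl
  refine ⟨D, fun G hH w X hX => ?_⟩
  rcases hD G hH w X hX with h | h
  · obtain ⟨Y, h1, h2, h3⟩ := h.exists_sparse
    exact ⟨Y, h1, h2, Or.inl h3⟩
  · obtain ⟨Y, h1, h2, h3⟩ := h.exists_sparse
    exact ⟨Y, h1, h2, Or.inr h3⟩

end Rodl

section Ramsey

lemma exists_large_fiber {α κ : Type*} [Fintype κ] [DecidableEq κ] (f : α → κ) (T : Finset α)
    (m : ℕ) (hT : Fintype.card κ * m ≤ T.card) [Nonempty κ] :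
    ∃ c, m ≤ (T.filter fun x => f x = c).card := by
  by_contra hcon
  push Not at hcon
  have h1 := Finset.card_eq_sum_card_fiberwise (f := f) (s := T) (t := Finset.univ)
    (fun x _ => Finset.mem_coe.2 (Finset.mem_univ _))
  have h2 : ∑ c, (T.filter fun x => f x = c).card < ∑ _c : κ, m :=
    Finset.sum_lt_sum_of_nonempty Finset.univ_nonempty fun c _ => hcon c
  simp at h2
  omega

/-- Ramsey's theorem for finite colourings of `r`-element sets of natural numbers. -/
theorem finite_ramsey (r : ℕ) : ∀ (κ : Type*) [Finite κ] [Nonempty κ] (m : ℕ), ∃ N, ∀ S : Finset ℕ,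
    N ≤ S.card → ∀ f : Finset ℕ → κ, ∃ T ⊆ S, T.card = m ∧
      ∃ c, ∀ K ⊆ T, K.card = r → f K = c := by
  classical
  induction r with
  | zero =>
    intro κ _ _ m
    refine ⟨m, fun S hS f => ?_⟩
    obtain ⟨T, hT, hTc⟩ := Finset.exists_subset_card_eq hS
    refine ⟨T, hT, hTc, f ∅, fun K _ hK => ?_⟩
    rw [Finset.card_eq_zero.1 hK]
  | succ r ih =>
    intro κ _ _ m
    have := Fintype.ofFinite κ
    have pre : ∀ n : ℕ, ∃ N, ∀ S : Finset ℕ, N ≤ S.card → ∀ f : Finset ℕ → κ,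
        ∃ T ⊆ S, T.card = n ∧ ∃ g : ℕ → κ, ∀ x ∈ T, ∀ K ⊆ T, (∀ y ∈ K, x < y) → K.card = r →
          f (insert x K) = g x := by
      intro n
      induction n with
      | zero =>
        exact ⟨0, fun S _ f => ⟨∅, by simp, rfl, fun _ => Classical.arbitrary κ, by simp⟩⟩
      | succ n ihn =>
        obtain ⟨N₁, h₁⟩ := ihn
        obtain ⟨N₂, h₂⟩ := ih κ N₁
        refine ⟨N₂ + 1, fun S hS f => ?_⟩
        have hne : S.Nonempty := Finset.card_pos.1 (by omega)
        set x := S.min' hne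
        have hx : x ∈ S := Finset.min'_mem _ _
        obtain ⟨S', hS', hS'c, c, hc⟩ := h₂ (S.erase x) (by
          rw [Finset.card_erase_of_mem hx]; omega) (fun K => f (insert x K))
        obtain ⟨T, hT, hTc, g, hg⟩ := h₁ S' hS'c.ge f
        have hxT : ∀ y ∈ T, x < y := fun y hy => by
          have := Finset.mem_erase.1 (hS' (hT hy))
          exact lt_of_le_of_ne (Finset.min'_le _ _ this.2) (Ne.symm this.1)
        refine ⟨insert x T, ?_, ?_, Function.update g x c, ?_⟩
        · exact Finset.insert_subset hx ((hT.trans hS').trans (Finset.erase_subset _ _))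
        · rw [Finset.card_insert_of_notMem (fun h => lt_irrefl _ (hxT x h)), hTc]
        · intro y hy K hK hyK hKc
          have hxK : K ⊆ T := by
            intro z hz
            rcases Finset.mem_insert.1 (hK hz) with rfl | h
            · rcases Finset.mem_insert.1 hy with rfl | h'
              · exact absurd (hyK _ hz) (lt_irrefl _)
              · exact absurd (hyK _ hz) (not_lt.2 (hxT y h').le)
            · exact h
          rcases Finset.mem_insert.1 hy with rfl | h'
          · rw [Function.update_self]
            exact hc K (hxK.trans hT) hKc
          · rw [Function.update_of_ne (ne_of_gt (hxT y h'))]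
            exact hg y h' K hxK hyK hKc
    obtain ⟨N, hN⟩ := pre (Fintype.card κ * m)
    refine ⟨N, fun S hS f => ?_⟩
    obtain ⟨T, hT, hTc, g, hg⟩ := hN S hS f
    obtain ⟨c, hc⟩ := exists_large_fiber g T m hTc.ge
    obtain ⟨U, hU, hUc⟩ := Finset.exists_subset_card_eq hc
    have hUT : U ⊆ T := hU.trans (Finset.filter_subset _ _)
    refine ⟨U, hUT.trans hT, hUc, c, fun K hK hKc => ?_⟩
    have hne : K.Nonempty := Finset.card_pos.1 (by omega)
    have hx := Finset.min'_mem K hne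
    have h1 := hg _ (hUT (hK hx)) (K.erase (K.min' hne))
      ((Finset.erase_subset _ _).trans (hK.trans hUT))
      (fun y hy => Finset.min'_lt_of_mem_erase_min' _ _ hy)
      (by rw [Finset.card_erase_of_mem hx]; omega)
    rw [Finset.insert_erase hx] at h1
    rw [h1]
    exact (Finset.mem_filter.1 (hU (hK hx))).2

/-- Simultaneous Ramsey theorem for all sizes up to `r`. -/
theorem finite_ramsey_le (r : ℕ) (κ : ℕ → Type*) [∀ t, Finite (κ t)] [∀ t, Nonempty (κ t)] (m : ℕ) :
    ∃ N, ∀ S : Finset ℕ, N ≤ S.card → ∀ f : (t : ℕ) → Finset ℕ → κ t, ∃ T ⊆ S, T.card = m ∧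
      ∀ t < r, ∃ c, ∀ K ⊆ T, K.card = t → f t K = c := by
  induction r with
  | zero =>
    refine ⟨m, fun S hS f => ?_⟩
    obtain ⟨T, hT, hTc⟩ := Finset.exists_subset_card_eq hS
    exact ⟨T, hT, hTc, by simp⟩
  | succ r ih =>
    obtain ⟨N, hN⟩ := ih
    obtain ⟨N', hN'⟩ := finite_ramsey r (κ r) N
    refine ⟨N', fun S hS f => ?_⟩
    obtain ⟨T, hT, hTc, c, hc⟩ := hN' S hS (f r)
    obtain ⟨U, hU, hUc, h⟩ := hN T hTc.ge f
    refine ⟨U, hU.trans hT, hUc, fun t ht => ?_⟩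
    rcases Nat.lt_succ_iff_lt_or_eq.1 ht with h' | rfl
    · exact h t h'
    · exact ⟨c, fun K hK hKc => hc K (hK.trans hU) hKc⟩

end Ramsey

section Transfer

variable {V : Type*}

/-- A rainbow set: its vertices have distinct colours from `Γ` and lie in the right blocks. -/
def Rainbow (χ : V → ℕ) (X : ℕ → Finset V) (Γ : Finset ℕ) (S : Finset V) : Prop :=
  (∀ x ∈ S, χ x ∈ Γ ∧ x ∈ X (χ x)) ∧ Set.InjOn χ S

/-- Every small rainbow set reappears on every other set of colours of the same size, even when
the blocks are replaced by subsets of size at least `s`. -/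
def Transfer (G : SimpleGraph V) (χ : V → ℕ) (X : ℕ → Finset V) (Γ : Finset ℕ) (τ s : ℕ) : Prop :=
  ∀ S, Rainbow χ X Γ S → S.card ≤ τ → ∀ K ⊆ Γ, K.card = S.card →
    ∃ σ : ℕ → ℕ, (∀ x ∈ S, σ (χ x) ∈ K) ∧
      (∀ x ∈ S, ∀ y ∈ S, χ x < χ y → σ (χ x) < σ (χ y)) ∧
      ∀ X' : ℕ → Finset V, (∀ j ∈ K, X' j ⊆ X j ∧ s ≤ (X' j).card) →
        ∃ φ : V → V, (∀ x ∈ S, φ x ∈ X' (σ (χ x))) ∧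
          ∀ x ∈ S, ∀ y ∈ S, (G.Adj (φ x) (φ y) ↔ G.Adj x y)

/-- The pattern `H` occurs on the colours listed by `κ`. -/
def Present (G : SimpleGraph V) (X : ℕ → Finset V) {t : ℕ} (κ : Fin t → ℕ)
    (H : SimpleGraph (Fin t)) : Prop :=
  ∃ x : Fin t → V, (∀ a, x a ∈ X (κ a)) ∧ ∀ a b, G.Adj (x a) (x b) ↔ H.Adj a b

/-- The patterns occurring on a finite set of colours. -/
def patterns (G : SimpleGraph V) (X : ℕ → Finset V) (t : ℕ) (K : Finset ℕ) :
    Set (SimpleGraph (Fin t)) :=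
  {H | ∃ h : K.card = t, Present G X (K.orderEmbOfFin h) H}

lemma patterns_mono (G : SimpleGraph V) {X Y : ℕ → Finset V} {K : Finset ℕ} (t : ℕ)
    (h : ∀ j ∈ K, X j ⊆ Y j) : patterns G X t K ⊆ patterns G Y t K := by
  rintro H ⟨hK, x, hx, hxa⟩
  exact ⟨hK, x, fun a => h _ (Finset.orderEmbOfFin_mem _ _ _) (hx a), hxa⟩

open Classical in
lemma exists_stable_patterns (τ : ℕ) (Γ : Finset ℕ) (C : ℕ) : ∃ C' : ℕ, ∀ {V : Type*}
    (G : SimpleGraph V) (X : ℕ → Finset V) (s₀ : ℕ), (∀ j ∈ Γ, C' * s₀ ≤ (X j).card) →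
    ∃ X' : ℕ → Finset V, ∃ s, s₀ ≤ s ∧ (∀ j ∈ Γ, X' j ⊆ X j ∧ C * s ≤ (X' j).card) ∧
      ∀ X'' : ℕ → Finset V, (∀ j ∈ Γ, X'' j ⊆ X' j ∧ s ≤ (X'' j).card) →
        ∀ t ≤ τ, ∀ K ⊆ Γ, patterns G X' t K ⊆ patterns G X'' t K := by
  let P := Finset ↥Γ × (Σ t : Fin (τ + 1), SimpleGraph (Fin t))
  have hfin : Finite P := inferInstance
  have := Fintype.ofFinite P
  let toK : Finset ↥Γ → Finset ℕ := fun K => K.map (Function.Embedding.subtype _)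
  have hto : ∀ K, toK K ⊆ Γ := by
    intro K x hx
    obtain ⟨y, -, rfl⟩ := Finset.mem_map.1 hx
    exact y.2
  refine ⟨(C + 1) ^ (Fintype.card P + 1), fun {V} G X s₀ hX => ?_⟩
  let PS : (ℕ → Finset V) → Finset P := fun X =>
    Finset.univ.filter fun p => p.2.2 ∈ patterns G X p.2.1 (toK p.1)
  have key : ∀ n, ∀ X : ℕ → Finset V, (PS X).card ≤ n →
      (∀ j ∈ Γ, (C + 1) ^ (n + 1) * s₀ ≤ (X j).card) →
      ∃ X' : ℕ → Finset V, ∃ s, s₀ ≤ s ∧ (∀ j ∈ Γ, X' j ⊆ X j ∧ C * s ≤ (X' j).card) ∧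
        ∀ X'' : ℕ → Finset V, (∀ j ∈ Γ, X'' j ⊆ X' j ∧ s ≤ (X'' j).card) → PS X' ⊆ PS X'' := by
    intro n
    induction n with
    | zero =>
      intro X hP hX
      refine ⟨X, s₀, le_rfl, fun j hj => ⟨subset_rfl, ?_⟩, fun X'' _ => ?_⟩
      · have := hX j hj
        simp at this
        nlinarith
      · rw [Finset.card_eq_zero.1 (Nat.le_zero.1 hP)]
        simp
    | succ n ih =>
      intro X hP hX
      by_cases hall : ∀ X'' : ℕ → Finset V, (∀ j ∈ Γ, X'' j ⊆ X j ∧ (C + 1) ^ (n + 1) * s₀ ≤ (X'' j).card) →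
          PS X ⊆ PS X''
      · refine ⟨X, (C + 1) ^ (n + 1) * s₀, ?_, fun j hj => ⟨subset_rfl, ?_⟩, hall⟩
        · exact Nat.le_mul_of_pos_left _ (by positivity)
        · refine le_trans ?_ (hX j hj)
          rw [pow_succ (C + 1) (n + 1)]
          nlinarith [Nat.zero_le ((C + 1) ^ (n + 1) * s₀)]
      · push Not at hall
        obtain ⟨X'', hX'', hne⟩ := hall
        have hsub : PS X'' ⊆ PS X := by
          intro p hp
          simp only [PS, Finset.mem_filter, Finset.mem_univ, true_and] at hp ⊢
          exact patterns_mono G _ (fun j hj => (hX'' j (hto _ hj)).1) hp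
        have hlt : (PS X'').card < (PS X).card :=
          Finset.card_lt_card ⟨hsub, hne⟩
        obtain ⟨X', s, hs, h1, h2⟩ := ih X'' (by omega) (fun j hj => (hX'' j hj).2)
        exact ⟨X', s, hs, fun j hj => ⟨(h1 j hj).1.trans (hX'' j hj).1, (h1 j hj).2⟩, h2⟩
  obtain ⟨X', s, hs, h1, h2⟩ := key _ X (Finset.card_le_univ _) hX
  refine ⟨X', s, hs, h1, fun X'' hX'' t ht K hK H hH => ?_⟩
  have hKe : toK (K.subtype (· ∈ Γ)) = K := by
    ext x
    simp only [toK, Finset.mem_map, Finset.mem_subtype, Function.Embedding.coe_subtype,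
      Subtype.exists, exists_and_left, exists_prop, exists_eq_right_right]
    exact ⟨fun h => h.1, fun h => ⟨h, hK h⟩⟩
  have h3 : ((K.subtype (· ∈ Γ), ⟨⟨t, by omega⟩, H⟩) : P) ∈ PS X' := by
    simp only [PS, Finset.mem_filter, Finset.mem_univ, true_and]
    rw [hKe]
    exact hH
  have h4 := h2 X'' hX'' h3
  simp only [PS, Finset.mem_filter, Finset.mem_univ, true_and] at h4
  rw [hKe] at h4
  exact h4

lemma transfer_of_patterns {G : SimpleGraph V} {χ : V → ℕ} {X : ℕ → Finset V} {Γ : Finset ℕ}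
    {τ s : ℕ} (hs : ∀ j ∈ Γ, s ≤ (X j).card)
    (hstab : ∀ X' : ℕ → Finset V, (∀ j ∈ Γ, X' j ⊆ X j ∧ s ≤ (X' j).card) →
        ∀ t ≤ τ, ∀ K ⊆ Γ, patterns G X t K ⊆ patterns G X' t K)
    (hhom : ∀ t ≤ τ, ∀ K ⊆ Γ, ∀ K' ⊆ Γ, K.card = t → K'.card = t →
      patterns G X t K = patterns G X t K') :
    Transfer G χ X Γ τ s := by
  classical
  intro S hS hSτ K hK hKc
  set K₀ := S.image χ with hK₀
  have hK₀c : K₀.card = S.card := Finset.card_image_of_injOn hS.2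
  have hK₀Γ : K₀ ⊆ Γ := by
    intro j hj
    obtain ⟨x, hx, rfl⟩ := Finset.mem_image.1 hj
    exact (hS.1 x hx).1
  have hmem : ∀ a, ∃ x ∈ S, χ x = K₀.orderEmbOfFin hK₀c a := fun a =>
    Finset.mem_image.1 (Finset.orderEmbOfFin_mem K₀ hK₀c a)
  choose z hzS hzχ using hmem
  have hrank : ∀ x ∈ S, ∃ a, K₀.orderEmbOfFin hK₀c a = χ x := by
    intro x hx
    have : χ x ∈ Set.range (K₀.orderEmbOfFin hK₀c) := by
      rw [Finset.range_orderEmbOfFin]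
      exact Finset.mem_coe.2 (Finset.mem_image_of_mem _ hx)
    exact this
  have hne : ∀ x ∈ S, Nonempty (Fin S.card) := fun x hx => ⟨(hrank x hx).choose⟩
  let rk : ℕ → ℕ := fun n => if h : ∃ a, K₀.orderEmbOfFin hK₀c a = n then
    K.orderEmbOfFin hKc h.choose else 0
  have hrk : ∀ a, rk (K₀.orderEmbOfFin hK₀c a) = K.orderEmbOfFin hKc a := by
    intro a
    have h : ∃ b, K₀.orderEmbOfFin hK₀c b = K₀.orderEmbOfFin hK₀c a := ⟨a, rfl⟩
    simp only [rk, dif_pos h]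
    congr 1
    exact (K₀.orderEmbOfFin hK₀c).injective h.choose_spec
  refine ⟨rk, ?_, ?_, ?_⟩
  · intro x hx
    obtain ⟨a, ha⟩ := hrank x hx
    rw [← ha, hrk]
    exact Finset.orderEmbOfFin_mem _ _ _
  · intro x hx y hy hxy
    obtain ⟨a, ha⟩ := hrank x hx
    obtain ⟨b, hb⟩ := hrank y hy
    rw [← ha, ← hb, hrk, hrk]
    rw [← ha, ← hb] at hxy
    simpa using hxy
  · intro X' hX'
    let X'' : ℕ → Finset V := fun j => if j ∈ K then X' j else X j
    have hX'' : ∀ j ∈ Γ, X'' j ⊆ X j ∧ s ≤ (X'' j).card := by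
      intro j hj
      by_cases h : j ∈ K
      · simpa [X'', h] using hX' j h
      · simpa [X'', h] using hs j hj
    have h1 : G.comap z ∈ patterns G X S.card K₀ := by
      refine ⟨hK₀c, z, fun a => ?_, fun a b => Iff.rfl⟩
      rw [← hzχ a]
      exact (hS.1 _ (hzS a)).2
    rw [hhom _ hSτ K₀ hK₀Γ K hK hK₀c hKc] at h1
    obtain ⟨_, y, hy, hya⟩ := hstab X'' hX'' _ hSτ K hK h1
    let φ : V → V := fun x => if h : ∃ a, z a = x then y h.choose else x
    have hzinj : Function.Injective z := by
      intro a b hab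
      apply (K₀.orderEmbOfFin hK₀c).injective
      rw [← hzχ, ← hzχ, hab]
    have hφ : ∀ a, φ (z a) = y a := by
      intro a
      have h : ∃ b, z b = z a := ⟨a, rfl⟩
      simp only [φ, dif_pos h]
      rw [hzinj h.choose_spec]
    have hz : ∀ x ∈ S, ∃ a, z a = x := by
      intro x hx
      obtain ⟨a, ha⟩ := hrank x hx
      refine ⟨a, hS.2 (hzS a) hx ?_⟩
      rw [hzχ, ha]
    refine ⟨φ, ?_, ?_⟩
    · intro x hx
      obtain ⟨a, rfl⟩ := hz x hx
      rw [hφ, hzχ, hrk]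
      have := hy a
      simpa [X'', Finset.orderEmbOfFin_mem K hKc a] using this
    · intro x hx x' hx'
      obtain ⟨a, rfl⟩ := hz x hx
      obtain ⟨b, rfl⟩ := hz x' hx'
      rw [hφ, hφ]
      exact hya a b

/-- Passing to subblocks and fewer colours, one may assume the transfer property. -/
theorem exists_transfer (τ g C : ℕ) : ∃ N C' : ℕ, ∀ {V : Type*} (G : SimpleGraph V) (χ : V → ℕ)
    (X : ℕ → Finset V) (s₀ : ℕ), (∀ j < N, C' * s₀ ≤ (X j).card) →
    ∃ Γ : Finset ℕ, (∀ j ∈ Γ, j < N) ∧ Γ.card = g ∧ ∃ X' : ℕ → Finset V, ∃ s, s₀ ≤ s ∧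
      (∀ j ∈ Γ, X' j ⊆ X j ∧ C * s ≤ (X' j).card) ∧ Transfer G χ X' Γ τ s := by
  obtain ⟨N, hN⟩ := finite_ramsey_le (τ + 1) (fun t => Set (SimpleGraph (Fin t))) g
  obtain ⟨C', hC'⟩ := exists_stable_patterns τ (Finset.range N) (C + 1)
  refine ⟨N, C', fun {V} G χ X s₀ hX => ?_⟩
  obtain ⟨X', s, hs, h1, h2⟩ := hC' G X s₀ (fun j hj => hX j (Finset.mem_range.1 hj))
  obtain ⟨Γ, hΓ, hΓc, hhom⟩ := hN (Finset.range N) (by simp) (fun t K => patterns G X' t K)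
  refine ⟨Γ, fun j hj => Finset.mem_range.1 (hΓ hj), hΓc, X', s, hs, fun j hj => ⟨(h1 j (hΓ hj)).1, ?_⟩, ?_⟩
  · exact le_trans (Nat.mul_le_mul_right _ (by omega)) (h1 j (hΓ hj)).2
  · classical
    have hcard : ∀ j ∈ Finset.range N, s ≤ (X' j).card := fun j hj =>
      le_trans (Nat.le_mul_of_pos_left _ (by omega)) (h1 j hj).2
    apply transfer_of_patterns (fun j hj => hcard j (hΓ hj))
    · intro X'' hX'' t ht K hK
      refine (h2 (fun j => if j ∈ Γ then X'' j else X' j) ?_ t ht K (hK.trans hΓ)).trans ?_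
      · intro j hj
        by_cases h : j ∈ Γ
        · simpa [h] using hX'' j h
        · simpa [h] using hcard j hj
      · apply patterns_mono
        intro j hj
        simp [hK hj]
    · intro t ht K hK K' hK' hKc hKc'
      obtain ⟨c, hc⟩ := hhom t (by omega)
      have e1 := hc K hK hKc
      have e2 := hc K' hK' hKc'
      rw [e1, e2]

end Transfer

section Binomial

variable {V : Type*}

open Classical in
/-- `S` induces a binomial tree of order `k` rooted at `r`. -/
def IsBinomial (G : SimpleGraph V) : ℕ → Finset V → V → Prop
  | 0, S, r => S = {r}
  | k + 1, S, r => ∃ S₁ S₂ r', IsBinomial G k S₁ r ∧ IsBinomial G k S₂ r' ∧ Disjoint S₁ S₂ ∧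
      S = S₁ ∪ S₂ ∧ ∀ x ∈ S₁, ∀ y ∈ S₂, (G.Adj x y ↔ x = r ∧ y = r')

variable {G : SimpleGraph V}

lemma IsBinomial.root_mem : ∀ {k : ℕ} {S : Finset V} {r : V}, IsBinomial G k S r → r ∈ S := by
  classical
  intro k
  induction k with
  | zero => intro S r h; rw [IsBinomial] at h; simp [h]
  | succ k ih =>
    rintro S r ⟨S₁, S₂, r', h₁, -, -, rfl, -⟩
    exact Finset.mem_union_left _ (ih h₁)

lemma IsBinomial.card_eq : ∀ {k : ℕ} {S : Finset V} {r : V}, IsBinomial G k S r →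
    S.card = 2 ^ k := by
  classical
  intro k
  induction k with
  | zero => intro S r h; rw [IsBinomial] at h; simp [h]
  | succ k ih =>
    rintro S r ⟨S₁, S₂, r', h₁, h₂, hd, rfl, -⟩
    rw [Finset.card_union_of_disjoint hd, ih h₁, ih h₂]
    ring

open Classical in
lemma IsBinomial.join {k : ℕ} {S₁ S₂ : Finset V} {r r' : V} (h₁ : IsBinomial G k S₁ r)
    (h₂ : IsBinomial G k S₂ r') (hd : Disjoint S₁ S₂)
    (h : ∀ x ∈ S₁, ∀ y ∈ S₂, (G.Adj x y ↔ x = r ∧ y = r')) :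
    IsBinomial G (k + 1) (S₁ ∪ S₂) r ∧ IsBinomial G (k + 1) (S₁ ∪ S₂) r' := by
  refine ⟨⟨S₁, S₂, r', h₁, h₂, hd, rfl, h⟩, ⟨S₂, S₁, r, h₂, h₁, hd.symm, Finset.union_comm _ _, ?_⟩⟩
  intro x hx y hy
  rw [G.adj_comm, h y hy x hx, and_comm]

lemma IsBinomial.exists_sub {j : ℕ} : ∀ {k : ℕ} {S : Finset V} {r : V}, IsBinomial G k S r →
    j ≤ k → ∃ S' ⊆ S, IsBinomial G j S' r := by
  classical
  intro k
  induction k with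
  | zero => intro S r h hj; obtain rfl : j = 0 := by omega
            exact ⟨S, subset_rfl, h⟩
  | succ k ih =>
    intro S r h hj
    rcases Nat.lt_or_ge k j with h' | h'
    · obtain rfl : j = k + 1 := by omega
      exact ⟨S, subset_rfl, h⟩
    · obtain ⟨S₁, S₂, r', h₁, h₂, hd, rfl, -⟩ := h
      obtain ⟨S', hS', hb⟩ := ih h₁ h'
      exact ⟨S', hS'.trans Finset.subset_union_left, hb⟩

open Classical in
lemma IsBinomial.image {φ : V → V} : ∀ {k : ℕ} {S : Finset V} {r : V}, IsBinomial G k S r →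
    Set.InjOn φ S → (∀ x ∈ S, ∀ y ∈ S, (G.Adj (φ x) (φ y) ↔ G.Adj x y)) →
    IsBinomial G k (S.image φ) (φ r) := by
  intro k
  induction k with
  | zero => intro S r h _ _; rw [IsBinomial] at h ⊢; simp [h]
  | succ k ih =>
    rintro S r ⟨S₁, S₂, r', h₁, h₂, hd, rfl, hadj⟩ hinj hφ
    have hs₁ : ∀ x ∈ S₁, x ∈ S₁ ∪ S₂ := fun x hx => Finset.mem_union_left _ hx
    have hs₂ : ∀ x ∈ S₂, x ∈ S₁ ∪ S₂ := fun x hx => Finset.mem_union_right _ hx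
    refine ⟨S₁.image φ, S₂.image φ, φ r', ih h₁ (hinj.mono fun x hx => hs₁ x hx)
      (fun x hx y hy => hφ x (hs₁ x hx) y (hs₁ y hy)),
      ih h₂ (hinj.mono fun x hx => hs₂ x hx) (fun x hx y hy => hφ x (hs₂ x hx) y (hs₂ y hy)), ?_,
      Finset.image_union _ _, ?_⟩
    · rw [Finset.disjoint_left]
      intro a ha hb
      obtain ⟨x, hx, rfl⟩ := Finset.mem_image.1 ha
      obtain ⟨y, hy, hxy⟩ := Finset.mem_image.1 hb
      have := hinj (hs₂ y hy) (hs₁ x hx) hxy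
      subst this
      exact Finset.disjoint_left.1 hd hx hy
    · intro a ha b hb
      obtain ⟨x, hx, rfl⟩ := Finset.mem_image.1 ha
      obtain ⟨y, hy, rfl⟩ := Finset.mem_image.1 hb
      rw [hφ x (hs₁ x hx) y (hs₂ y hy), hadj x hx y hy]
      constructor
      · rintro ⟨rfl, rfl⟩; exact ⟨rfl, rfl⟩
      · rintro ⟨e1, e2⟩
        exact ⟨hinj (hs₁ x hx) (hs₁ _ h₁.root_mem) e1, hinj (hs₂ y hy) (hs₂ _ h₂.root_mem) e2⟩

/-- Removing suitable leaves from a binomial tree gives the smaller binomial tree, each of whose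
vertices carries a private leaf. -/
lemma IsBinomial.exists_corona : ∀ {k : ℕ} {S : Finset V} {r : V}, IsBinomial G (k + 1) S r →
    ∃ S₀ ⊆ S, IsBinomial G k S₀ r ∧ ∃ leaf : V → V, ∀ x ∈ S₀, leaf x ∈ S ∧ leaf x ∉ S₀ ∧
      ∀ y ∈ S₀, (G.Adj y (leaf x) ↔ y = x) := by
  classical
  intro k
  induction k with
  | zero =>
    rintro S r ⟨S₁, S₂, r', h₁, h₂, hd, rfl, h⟩
    rw [IsBinomial] at h₁ h₂
    subst h₁ h₂
    refine ⟨{r}, Finset.subset_union_left, rfl, fun _ => r', fun x hx => ⟨by simp, ?_, ?_⟩⟩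
    · exact fun hr => Finset.disjoint_left.1 hd hr (by simp)
    · intro y hy
      rw [h y hy r' (by simp)]
      simp at hx hy
      simp [hx, hy]
  | succ k ih =>
    rintro S r ⟨S₁, S₂, r', h₁, h₂, hd, rfl, h⟩
    obtain ⟨A₁, hA₁, hb₁, l₁, hl₁⟩ := ih h₁
    obtain ⟨A₂, hA₂, hb₂, l₂, hl₂⟩ := ih h₂
    have hdA := hd.mono hA₁ hA₂
    refine ⟨A₁ ∪ A₂, Finset.union_subset_union hA₁ hA₂,
      ⟨A₁, A₂, r', hb₁, hb₂, hdA, rfl, fun x hx y hy => h x (hA₁ hx) y (hA₂ hy)⟩,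
      fun x => if x ∈ A₁ then l₁ x else l₂ x, ?_⟩
    intro x hx
    rcases Finset.mem_union.1 hx with hx | hx
    · simp only [hx, if_true]
      obtain ⟨e1, e2, e3⟩ := hl₁ x hx
      refine ⟨Finset.mem_union_left _ e1, ?_, ?_⟩
      · intro hm
        rcases Finset.mem_union.1 hm with hm | hm
        · exact e2 hm
        · exact Finset.disjoint_left.1 hd e1 (hA₂ hm)
      · intro y hy
        rcases Finset.mem_union.1 hy with hy | hy
        · exact e3 y hy
        · rw [G.adj_comm, h _ e1 _ (hA₂ hy)]
          constructor
          · rintro ⟨e, -⟩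
            exact absurd (e ▸ hb₁.root_mem) e2
          · rintro rfl
            exact absurd hy (Finset.disjoint_left.1 hdA hx)
    · have hx' : x ∉ A₁ := Finset.disjoint_right.1 hdA hx
      simp only [hx', if_false]
      obtain ⟨e1, e2, e3⟩ := hl₂ x hx
      refine ⟨Finset.mem_union_right _ e1, ?_, ?_⟩
      · intro hm
        rcases Finset.mem_union.1 hm with hm | hm
        · exact Finset.disjoint_left.1 hd (hA₁ hm) e1
        · exact e2 hm
      · intro y hy
        rcases Finset.mem_union.1 hy with hy | hy
        · rw [h _ (hA₁ hy) _ e1]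
          constructor
          · rintro ⟨-, e⟩
            exact absurd (e ▸ hb₂.root_mem) e2
          · rintro rfl
            exact absurd hy hx'
        · exact e3 y hy

/-- Adjacency in the tree on the natural numbers with parent function `p`. -/
def ParentAdj (p : ℕ → ℕ) (a b : ℕ) : Prop := (a < b ∧ p b = a) ∨ (b < a ∧ p a = b)

lemma parentAdj_comm (p : ℕ → ℕ) (a b : ℕ) : ParentAdj p a b ↔ ParentAdj p b a := or_comm

lemma parentAdj_irrefl (p : ℕ → ℕ) (a : ℕ) : ¬ ParentAdj p a a := by simp [ParentAdj]

/-- Adding a leaf extends an embedding of an initial segment of a tree. -/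
lemma parentAdj_extend {p : ℕ → ℕ} {n : ℕ} {f : ℕ → V} {v : V}
    (hf : ∀ a ≤ n, ∀ b ≤ n, (G.Adj (f a) (f b) ↔ ParentAdj p a b))
    (hv : ∀ a ≤ n, (G.Adj (f a) v ↔ a = p (n + 1))) :
    ∀ a ≤ n + 1, ∀ b ≤ n + 1, (G.Adj (Function.update f (n + 1) v a)
      (Function.update f (n + 1) v b) ↔ ParentAdj p a b) := by
  have key : ∀ a ≤ n, (G.Adj (f a) v ↔ ParentAdj p a (n + 1)) := by
    intro a ha
    rw [hv a ha, ParentAdj]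
    constructor
    · intro h; exact Or.inl ⟨by omega, h.symm⟩
    · rintro (⟨-, h⟩ | ⟨h, -⟩)
      · exact h.symm
      · omega
  intro a ha b hb
  rcases Nat.le_succ_iff_eq_or_le.1 ha with rfl | ha <;>
    rcases Nat.le_succ_iff_eq_or_le.1 hb with rfl | hb
  · simp [parentAdj_irrefl]
  · have : b ≠ n + 1 := by omega
    simp only [Nat.succ_eq_add_one, Function.update_self, Function.update_of_ne this]
    rw [G.adj_comm, parentAdj_comm]
    exact key b hb
  · have : a ≠ n + 1 := by omega
    simp only [Nat.succ_eq_add_one, Function.update_self, Function.update_of_ne this]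
    exact key a ha
  · rw [Function.update_of_ne (by omega), Function.update_of_ne (by omega)]
    exact hf a ha b hb

lemma IsBinomial.exists_tree (p : ℕ → ℕ) (hp : ∀ b, 0 < b → p b < b) : ∀ {n : ℕ} {S : Finset V}
    {r : V}, IsBinomial G n S r → ∃ f : ℕ → V, (∀ a ≤ n, f a ∈ S) ∧
      (∀ a ≤ n, ∀ b ≤ n, f a = f b → a = b) ∧
      ∀ a ≤ n, ∀ b ≤ n, (G.Adj (f a) (f b) ↔ ParentAdj p a b) := by
  intro n
  induction n with
  | zero =>
    intro S r h
    refine ⟨fun _ => r, fun _ _ => h.root_mem, fun a ha b hb _ => by omega, fun a ha b hb => ?_⟩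
    obtain rfl : a = 0 := by omega
    obtain rfl : b = 0 := by omega
    simp [parentAdj_irrefl]
  | succ n ih =>
    intro S r h
    obtain ⟨S₀, hS₀, hb, leaf, hleaf⟩ := h.exists_corona
    obtain ⟨f, hf, hinj, hadj⟩ := ih hb
    have hp' : p (n + 1) ≤ n := by have := hp (n + 1) (by omega); omega
    obtain ⟨l1, l2, l3⟩ := hleaf _ (hf _ hp')
    refine ⟨Function.update f (n + 1) (leaf (f (p (n + 1)))), ?_, ?_, parentAdj_extend hadj ?_⟩
    · intro a ha
      rcases Nat.le_succ_iff_eq_or_le.1 ha with rfl | ha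
      · simpa using l1
      · rw [Function.update_of_ne (by omega)]
        exact hS₀ (hf a ha)
    · intro a ha b hb
      rcases Nat.le_succ_iff_eq_or_le.1 ha with rfl | ha <;>
        rcases Nat.le_succ_iff_eq_or_le.1 hb with rfl | hb
      · intro _; rfl
      · simp only [Nat.succ_eq_add_one, Function.update_self]
        rw [Function.update_of_ne (by omega)]
        intro e
        exact absurd (e ▸ hf b hb) l2
      · simp only [Nat.succ_eq_add_one, Function.update_self]
        rw [Function.update_of_ne (by omega)]
        intro e
        exact absurd (e ▸ hf a ha) l2
      · rw [Function.update_of_ne (by omega), Function.update_of_ne (by omega)]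
        exact hinj a ha b hb
    · intro a ha
      rw [l3 _ (hf a ha)]
      exact ⟨fun e => hinj a ha _ hp' e, fun e => by rw [e]⟩

end Binomial

section Forest

variable {W : Type*}

lemma exists_subsingleton_neighbors [Fintype W] [Nonempty W] (F : SimpleGraph W)
    (hF : F.IsAcyclic) : ∃ w, ∀ u v, F.Adj w u → F.Adj w v → u = v := by
  classical
  obtain ⟨w₀⟩ := ‹Nonempty W›
  let c := F.connectedComponentMk w₀
  have hT := hF.isTree_connectedComponent c
  by_cases hn : Nontrivial c
  · obtain ⟨w, hw⟩ := hT.exists_vert_degree_one_of_nontrivial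
    refine ⟨w.1, fun u v hu hv => ?_⟩
    have hmem : ∀ u, F.Adj w.1 u → u ∈ c := by
      intro u hu
      have h : F.connectedComponentMk w.1 = c := w.2
      exact (ConnectedComponent.connectedComponentMk_eq_of_adj hu).symm.trans h
    rw [SimpleGraph.degree, Finset.card_eq_one] at hw
    obtain ⟨z, hz⟩ := hw
    have h1 : ∀ u (hu : F.Adj w.1 u), (⟨u, hmem u hu⟩ : c) = z := by
      intro u hu
      have : (⟨u, hmem u hu⟩ : c) ∈ c.toSimpleGraph.neighborFinset w := by
        rw [mem_neighborFinset]
        exact hu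
      rw [hz] at this
      exact Finset.mem_singleton.1 this
    have := (h1 u hu).trans (h1 v hv).symm
    simpa using this
  · refine ⟨w₀, fun u v hu _ => ?_⟩
    exfalso
    apply hn
    refine ⟨⟨⟨w₀, rfl⟩, ⟨u, ?_⟩, ?_⟩⟩
    · exact (ConnectedComponent.connectedComponentMk_eq_of_adj hu).symm
    · intro h
      exact hu.ne (congrArg Subtype.val h)

/-- Every finite forest is an induced subgraph of a tree built by adding leaves one at a time. -/
theorem forest_embeds_tree [Fintype W] (F : SimpleGraph W) (hF : F.IsAcyclic) :
    ∃ (p : ℕ → ℕ) (n : ℕ) (g : W → ℕ), (∀ b, 0 < b → p b < b) ∧ (∀ u, g u ≤ n) ∧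
      Function.Injective g ∧ ∀ u v, F.Adj u v ↔ ParentAdj p (g u) (g v) := by
  classical
  have key : ∀ m (A : Finset W), A.card = m → ∃ (p : ℕ → ℕ) (n : ℕ) (g : W → ℕ),
      (∀ b, 0 < b → p b < b) ∧ (∀ u ∈ A, g u ≤ n) ∧ (∀ u ∈ A, ∀ v ∈ A, g u = g v → u = v) ∧
      ∀ u ∈ A, ∀ v ∈ A, (F.Adj u v ↔ ParentAdj p (g u) (g v)) := by
    intro m
    induction m with
    | zero =>
      intro A hA
      rw [Finset.card_eq_zero.1 hA]
      exact ⟨fun _ => 0, 0, fun _ => 0, fun b hb => hb, by simp, by simp, by simp⟩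
    | succ m ih =>
      intro A hA
      have hne : A.Nonempty := Finset.card_pos.1 (by omega)
      have : Nonempty A := hne.to_subtype
      obtain ⟨⟨w, hw⟩, hwu⟩ := exists_subsingleton_neighbors (F.induce (A : Set W)) (hF.induce _)
      have hwu' : ∀ u ∈ A, ∀ v ∈ A, F.Adj w u → F.Adj w v → u = v := by
        intro u hu v hv h1 h2
        exact congrArg Subtype.val (hwu ⟨u, hu⟩ ⟨v, hv⟩ h1 h2)
      obtain ⟨p, n, g, hp, hgn, hginj, hadj⟩ := ih (A.erase w) (by
        rw [Finset.card_erase_of_mem hw]; omega)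
      -- place `w` at a new index `k`
      have ext : ∀ (p' : ℕ → ℕ) (k : ℕ), n < k → (∀ b, 0 < b → p' b < b) →
          (∀ b ≤ n, p' b = p b) → (∀ u ∈ A, u ≠ w → (F.Adj w u ↔ p' k = g u)) →
          ∃ (p : ℕ → ℕ) (n : ℕ) (g : W → ℕ),
          (∀ b, 0 < b → p b < b) ∧ (∀ u ∈ A, g u ≤ n) ∧ (∀ u ∈ A, ∀ v ∈ A, g u = g v → u = v) ∧
          ∀ u ∈ A, ∀ v ∈ A, (F.Adj u v ↔ ParentAdj p (g u) (g v)) := by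
        intro p' k hk hp' hpp hadjw
        have hgn' : ∀ u ∈ A, u ≠ w → g u ≤ n := fun u hu hne =>
          hgn u (Finset.mem_erase.2 ⟨hne, hu⟩)
        refine ⟨p', k, Function.update g w k, hp', ?_, ?_, ?_⟩
        · intro u hu
          by_cases h : u = w
          · simp [h]
          · rw [Function.update_of_ne h]
            exact (hgn' u hu h).trans hk.le
        · intro u hu v hv
          by_cases h : u = w <;> by_cases h' : v = w
          · intro _; rw [h, h']
          · rw [h, Function.update_self, Function.update_of_ne h']
            intro e; have := hgn' v hv h'; omega
          · rw [h', Function.update_self, Function.update_of_ne h]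
            intro e; have := hgn' u hu h; omega
          · rw [Function.update_of_ne h, Function.update_of_ne h']
            exact hginj u (Finset.mem_erase.2 ⟨h, hu⟩) v (Finset.mem_erase.2 ⟨h', hv⟩)
        · have hkey : ∀ u ∈ A, u ≠ w → (F.Adj w u ↔ ParentAdj p' k (g u)) := by
            intro u hu h
            rw [hadjw u hu h, ParentAdj]
            have := hgn' u hu h
            constructor
            · intro e; exact Or.inr ⟨by omega, e⟩
            · rintro (⟨e, -⟩ | ⟨-, e⟩)
              · omega
              · exact e
          intro u hu v hv
          by_cases h : u = w <;> by_cases h' : v = w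
          · rw [h, h']; simp [parentAdj_irrefl]
          · rw [h, Function.update_self, Function.update_of_ne h']
            exact hkey v hv h'
          · rw [h', Function.update_self, Function.update_of_ne h, F.adj_comm, parentAdj_comm]
            exact hkey u hu h
          · rw [Function.update_of_ne h, Function.update_of_ne h',
              hadj u (Finset.mem_erase.2 ⟨h, hu⟩) v (Finset.mem_erase.2 ⟨h', hv⟩)]
            have e1 := hpp _ (hgn' u hu h)
            have e2 := hpp _ (hgn' v hv h')
            simp only [ParentAdj, e1, e2]
      by_cases hnb : ∃ u ∈ A, F.Adj w u
      · obtain ⟨u₀, hu₀, hwu₀⟩ := hnb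
        have hne₀ : u₀ ≠ w := hwu₀.ne'
        have hg₀ := hgn u₀ (Finset.mem_erase.2 ⟨hne₀, hu₀⟩)
        refine ext (Function.update p (n + 1) (g u₀)) (n + 1) (by omega) ?_ ?_ ?_
        · intro b hb
          by_cases h : b = n + 1
          · rw [h, Function.update_self]; omega
          · rw [Function.update_of_ne h]; exact hp b hb
        · intro b hb
          rw [Function.update_of_ne (by omega)]
        · intro u hu hne
          rw [Function.update_self]
          constructor
          · intro h; rw [hwu' u hu u₀ hu₀ h hwu₀]
          · intro h
            rw [← hginj u₀ (Finset.mem_erase.2 ⟨hne₀, hu₀⟩) u (Finset.mem_erase.2 ⟨hne, hu⟩) h]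
            exact hwu₀
      · push Not at hnb
        refine ext (Function.update p (n + 2) (n + 1)) (n + 2) (by omega) ?_ ?_ ?_
        · intro b hb
          by_cases h : b = n + 2
          · rw [h, Function.update_self]; omega
          · rw [Function.update_of_ne h]; exact hp b hb
        · intro b hb
          rw [Function.update_of_ne (by omega)]
        · intro u hu hne
          rw [Function.update_self]
          have := hgn u (Finset.mem_erase.2 ⟨hne, hu⟩)
          constructor
          · intro h; exact absurd h (hnb u hu)
          · intro h; omega
  obtain ⟨p, n, g, h1, h2, h3, h4⟩ := key _ Finset.univ rfl
  exact ⟨p, n, g, h1, fun u => h2 u (Finset.mem_univ _),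
    fun u v h => h3 u (Finset.mem_univ _) v (Finset.mem_univ _) h,
    fun u v => h4 u (Finset.mem_univ _) v (Finset.mem_univ _)⟩

end Forest

section Gadget

variable {V : Type*}

/-- Blocks with bounded degrees and no large anticomplete pairs. -/
structure Coherent (G : SimpleGraph V) (χ : V → ℕ) (X : ℕ → Finset V) (Γ : Finset ℕ) (e : ℕ) :
    Prop where
  color : ∀ j ∈ Γ, ∀ x ∈ X j, χ x = j
  degree : ∀ i ∈ Γ, ∀ x ∈ X i, ∀ j ∈ Γ, (nbs G (X j) x).card ≤ e
  edge : ∀ i ∈ Γ, ∀ j ∈ Γ, i ≠ j → ∀ A ⊆ X i, ∀ B ⊆ X j, e ≤ A.card → e ≤ B.card →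
    ∃ a ∈ A, ∃ b ∈ B, G.Adj a b

open Classical in
/-- Many blocks whose vertices have comparable degrees into a common set `Y`. -/
def Gadget (G : SimpleGraph V) (X : ℕ → Finset V) (Γ : Finset ℕ) (τ s K L C₀ : ℕ) : Prop :=
  ∃ J ⊆ Γ, τ ≤ J.card ∧ ∃ j ∈ Γ, j ∉ J ∧ ∃ Y ⊆ X j, ∃ m, 1 ≤ m ∧ ∀ i ∈ J,
    K * s ≤ ((X i).filter fun x => m ≤ C₀ * (nbs G Y x).card).card ∧
    ((X i).filter fun x => m < (nbs G Y x).card).card ≤ L * s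

open Classical in
/-- The vertices of `A` with a neighbour in `S`. -/
noncomputable def nbrsOf (G : SimpleGraph V) (A S : Finset V) : Finset V :=
  A.filter fun x => ∃ y ∈ S, G.Adj x y

lemma mem_nbrsOf {G : SimpleGraph V} {A S : Finset V} {x : V} :
    x ∈ nbrsOf G A S ↔ x ∈ A ∧ ∃ y ∈ S, G.Adj x y := by
  simp [nbrsOf]

open Classical in
lemma nbrsOf_insert (G : SimpleGraph V) (A S : Finset V) (y : V) :
    nbrsOf G A (insert y S) = nbrsOf G A S ∪ nbs G (A \ nbrsOf G A S) y := by
  ext x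
  simp only [mem_nbrsOf, Finset.mem_insert, exists_eq_or_imp, Finset.mem_union, mem_nbs,
    Finset.mem_sdiff, G.adj_comm y x]
  generalize (∃ a ∈ S, G.Adj x a) = p
  by_cases h : p <;> simp [h]

open Classical in
lemma card_nbrsOf_insert (G : SimpleGraph V) (A S : Finset V) (y : V) :
    (nbrsOf G A (insert y S)).card =
      (nbrsOf G A S).card + (nbs G (A \ nbrsOf G A S) y).card := by
  rw [nbrsOf_insert, Finset.card_union_of_disjoint]
  exact Finset.disjoint_sdiff.mono_right (nbs_subset _ _ _)

open Classical in
/-- A set `S ⊆ Y` dominating between `s` and `s + e` vertices of `A` but at most that many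
vertices of the blocks `U u`. -/
lemma exists_unbalanced_dominator {G : SimpleGraph V} {A Y : Finset V} {U : ℕ → Finset V}
    {P : Finset ℕ} {s e m C₀ τ : ℕ} (hm : 1 ≤ m) (hP : P.card ≤ τ)
    (hA : 3 * C₀ * τ * s + s < A.card) (hAm : ∀ x ∈ A, m ≤ C₀ * (nbs G Y x).card)
    (hU : ∀ u ∈ P, (U u).card ≤ 3 * s) (hUm : ∀ u ∈ P, ∀ x ∈ U u, (nbs G Y x).card ≤ m)
    (hY : ∀ y ∈ Y, (nbs G A y).card ≤ e) :
    ∃ S ⊆ Y, s ≤ (nbrsOf G A S).card ∧ (nbrsOf G A S).card ≤ s + e ∧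
      ∑ u ∈ P, (nbrsOf G (U u) S).card ≤ (nbrsOf G A S).card := by
  let cand := Y.powerset.filter fun S => (nbrsOf G A S).card ≤ s + e ∧
    ∑ u ∈ P, (nbrsOf G (U u) S).card ≤ (nbrsOf G A S).card
  have hne : cand.Nonempty := by
    refine ⟨∅, ?_⟩
    rw [Finset.mem_filter]
    simp [nbrsOf]
  obtain ⟨S, hS, hmax⟩ := Finset.exists_max_image cand (fun S => (nbrsOf G A S).card) hne
  simp only [cand, Finset.mem_filter, Finset.mem_powerset] at hS hmax
  refine ⟨S, hS.1, ?_, hS.2.1, hS.2.2⟩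
  by_contra hlt
  push Not at hlt
  set N := A \ nbrsOf G A S with hN
  have hNc : 3 * C₀ * τ * s < N.card := by
    have := Finset.le_card_sdiff (nbrsOf G A S) A
    rw [← hN] at this
    omega
  have h1 : m * N.card ≤ C₀ * ∑ y ∈ Y, (nbs G N y).card := by
    rw [← sum_nbs_comm, Finset.mul_sum]
    calc m * N.card = ∑ x ∈ N, m := by simp [mul_comm]
      _ ≤ _ := Finset.sum_le_sum fun x hx => hAm x (Finset.mem_sdiff.1 hx).1
  have h2 : ∑ y ∈ Y, ∑ u ∈ P, (nbs G (U u) y).card ≤ τ * (3 * s * m) := by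
    rw [Finset.sum_comm]
    calc _ ≤ ∑ u ∈ P, 3 * s * m := by
          refine Finset.sum_le_sum fun u hu => ?_
          rw [← sum_nbs_comm]
          calc _ ≤ ∑ x ∈ U u, m := Finset.sum_le_sum fun x hx => hUm u hu x hx
            _ = (U u).card * m := by simp
            _ ≤ _ := Nat.mul_le_mul_right _ (hU u hu)
      _ = P.card * (3 * s * m) := by simp
      _ ≤ _ := Nat.mul_le_mul_right _ hP
  have h3 : ∃ y ∈ Y, ∑ u ∈ P, (nbs G (U u) y).card < (nbs G N y).card := by
    by_contra hcon
    push Not at hcon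
    have h4 := (Finset.sum_le_sum hcon).trans h2
    have h5 : C₀ * ∑ y ∈ Y, (nbs G N y).card ≤ C₀ * (τ * (3 * s * m)) := Nat.mul_le_mul_left _ h4
    have h6 : m * N.card ≤ m * (3 * C₀ * τ * s) := by
      refine (h1.trans h5).trans (le_of_eq ?_)
      ring
    have := Nat.le_of_mul_le_mul_left h6 (by omega)
    omega
  obtain ⟨y, hy, hyl⟩ := h3
  have hyA : (nbs G N y).card ≤ e :=
    (card_nbs_mono G Finset.sdiff_subset y).trans (hY y hy)
  have hcard := card_nbrsOf_insert G A S y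
  rw [← hN] at hcard
  have h7 := hmax (insert y S) ⟨Finset.insert_subset hy hS.1, by omega, ?_⟩
  · omega
  · rw [hcard]
    calc _ ≤ ∑ u ∈ P, ((nbrsOf G (U u) S).card + (nbs G (U u) y).card) := by
          refine Finset.sum_le_sum fun u _ => ?_
          rw [card_nbrsOf_insert]
          exact Nat.add_le_add_left (card_nbs_mono G Finset.sdiff_subset y) _
      _ ≤ _ := by
        rw [Finset.sum_add_distrib]
        have := hS.2.2
        omega

lemma Gadget.add_leaf {G : SimpleGraph V} {χ : V → ℕ} {X : ℕ → Finset V} {Γ : Finset ℕ}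
    {τ s K L C₀ e : ℕ} (hg : Gadget G X Γ τ s K L C₀) (hc : Coherent G χ X Γ e)
    (ht : Transfer G χ X Γ τ s) (hs : 1 ≤ s) (hes : e ≤ s) (hK : 3 * C₀ * τ + 2 ≤ K)
    (hX : ∀ i ∈ Γ, (L + 3) * s ≤ (X i).card) {S : Finset V} (hS : Rainbow χ X Γ S)
    (hSτ : S.card ≤ τ) {v : V} (hv : v ∈ S) :
    ∃ (φ : V → V) (y : V), (∀ x ∈ S, χ (φ x) ∈ Γ ∧ φ x ∈ X (χ (φ x))) ∧
      (∀ x ∈ S, ∀ x' ∈ S, χ (φ x) = χ (φ x') → x = x') ∧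
      (∀ x ∈ S, ∀ x' ∈ S, (G.Adj (φ x) (φ x') ↔ G.Adj x x')) ∧
      χ y ∈ Γ ∧ y ∈ X (χ y) ∧ (∀ x ∈ S, χ (φ x) ≠ χ y) ∧
      ∀ x ∈ S, (G.Adj (φ x) y ↔ x = v) := by
  classical
  obtain ⟨J, hJ, hJc, j, hj, hjJ, Y, hY, m, hm, hgd⟩ := hg
  obtain ⟨P, hP, hPc⟩ := Finset.exists_subset_card_eq (hSτ.trans hJc)
  obtain ⟨σ, hσP, hσm, hσ⟩ := ht S hS hSτ P (hP.trans hJ) hPc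
  have hσinj : ∀ x ∈ S, ∀ y ∈ S, σ (χ x) = σ (χ y) → x = y := by
    intro x hx y hy h
    apply hS.2 hx hy
    rcases lt_trichotomy (χ x) (χ y) with h' | h' | h'
    · have := hσm x hx y hy h'; omega
    · exact h'
    · have := hσm y hy x hx h'; omega
  set i₀ := σ (χ v) with hi₀
  have hi₀P : i₀ ∈ P := hσP v hv
  set A := (X i₀).filter fun x => m ≤ C₀ * (nbs G Y x).card with hA
  have hU : ∀ u, ∃ U : Finset V, u ∈ P → U ⊆ X u ∧ U.card = 3 * s ∧
      ∀ x ∈ U, (nbs G Y x).card ≤ m := by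
    intro u
    by_cases hu : u ∈ P
    · have h1 := (hgd u (hP hu)).2
      have h2 := Finset.card_filter_add_card_filter_not (s := X u) (fun x => m < (nbs G Y x).card)
      have h3 := hX u (hJ (hP hu))
      obtain ⟨U, hU, hUc⟩ := Finset.exists_subset_card_eq
        (s := (X u).filter (fun x => ¬ m < (nbs G Y x).card)) (n := 3 * s) (by
          rw [add_mul] at h3; omega)
      refine ⟨U, fun _ => ⟨hU.trans (Finset.filter_subset _ _), hUc, fun x hx => ?_⟩⟩
      exact not_lt.1 (Finset.mem_filter.1 (hU hx)).2
    · exact ⟨∅, fun h => absurd h hu⟩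
  choose U hU using hU
  obtain ⟨D, hD, hD1, hD2, hD3⟩ := exists_unbalanced_dominator (G := G) (A := A) (Y := Y) (U := U)
    (P := P) (s := s) (e := e) (m := m) (C₀ := C₀) (τ := τ) hm (by omega) (by
      have h1 := (hgd i₀ (hP hi₀P)).1
      have h2 : (3 * C₀ * τ + 2) * s ≤ K * s := Nat.mul_le_mul_right _ hK
      rw [← hA] at h1
      rw [add_mul] at h2
      omega)
    (fun x hx => (Finset.mem_filter.1 hx).2) (fun u hu => (hU u hu).2.1.le)
    (fun u hu => (hU u hu).2.2)
    (fun y hy => (card_nbs_mono G (Finset.filter_subset _ _) y).trans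
      (hc.degree j hj y (hY hy) i₀ (hJ (hP hi₀P))))
  let X' : ℕ → Finset V := fun u => if u = i₀ then nbrsOf G A D else U u \ nbrsOf G (U u) D
  obtain ⟨φ, hφX, hφa⟩ := hσ X' (by
    intro u hu
    by_cases h : u = i₀
    · simp only [X', h, if_true]
      exact ⟨fun x hx => (Finset.mem_filter.1 (mem_nbrsOf.1 hx).1).1, hD1⟩
    · simp only [X', h, if_false]
      refine ⟨Finset.sdiff_subset.trans (hU u hu).1, ?_⟩
      have h1 : (nbrsOf G (U u) D).card ≤ ∑ u ∈ P, (nbrsOf G (U u) D).card :=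
        Finset.single_le_sum (f := fun u => (nbrsOf G (U u) D).card) (fun _ _ => Nat.zero_le _) hu
      have h2 := Finset.le_card_sdiff (nbrsOf G (U u) D) (U u)
      have h3 := (hU u hu).2.1
      omega)
  have hφX' : ∀ x ∈ S, φ x ∈ X (σ (χ x)) := by
    intro x hx
    have h1 := hφX x hx
    by_cases h : σ (χ x) = i₀
    · simp only [X', h, if_true] at h1
      rw [h]
      exact (Finset.mem_filter.1 (mem_nbrsOf.1 h1).1).1
    · simp only [X', h, if_false] at h1
      exact (hU _ (hσP x hx)).1 (Finset.mem_sdiff.1 h1).1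
  have hχφ : ∀ x ∈ S, χ (φ x) = σ (χ x) := fun x hx =>
    hc.color _ (hJ (hP (hσP x hx))) _ (hφX' x hx)
  have hφv : φ v ∈ nbrsOf G A D := by
    have := hφX v hv
    simpa [X', hi₀] using this
  obtain ⟨-, y, hyD, hvy⟩ := mem_nbrsOf.1 hφv
  have hyX := hY (hD hyD)
  have hχy := hc.color j hj y hyX
  refine ⟨φ, y, ?_, ?_, hφa, ?_, ?_, ?_, ?_⟩
  · intro x hx
    rw [hχφ x hx]
    exact ⟨hJ (hP (hσP x hx)), hφX' x hx⟩
  · intro x hx x' hx' h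
    rw [hχφ x hx, hχφ x' hx'] at h
    exact hσinj x hx x' hx' h
  · rw [hχy]; exact hj
  · rw [hχy]; exact hyX
  · intro x hx h
    rw [hχφ x hx, hχy] at h
    exact hjJ (h ▸ hP (hσP x hx))
  · intro x hx
    constructor
    · intro h
      by_contra hne
      have h0 : σ (χ x) ≠ i₀ := fun h => hne (hσinj x hx v hv h)
      have h1 := hφX x hx
      simp only [X', h0, if_false] at h1
      obtain ⟨h2, h3⟩ := Finset.mem_sdiff.1 h1
      exact h3 (mem_nbrsOf.2 ⟨h2, y, hyD, h⟩)
    · rintro rfl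
      exact hvy

/-- A rainbow copy of the first `n + 1` vertices of the tree with parent function `p`. -/
def HasRainbowTree (G : SimpleGraph V) (χ : V → ℕ) (X : ℕ → Finset V) (Γ : Finset ℕ) (p : ℕ → ℕ)
    (n : ℕ) : Prop :=
  ∃ f : ℕ → V, (∀ a ≤ n, χ (f a) ∈ Γ ∧ f a ∈ X (χ (f a))) ∧
    (∀ a ≤ n, ∀ b ≤ n, χ (f a) = χ (f b) → a = b) ∧
    ∀ a ≤ n, ∀ b ≤ n, (G.Adj (f a) (f b) ↔ ParentAdj p a b)

lemma Gadget.hasRainbowTree {G : SimpleGraph V} {χ : V → ℕ} {X : ℕ → Finset V} {Γ : Finset ℕ}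
    {τ s K L C₀ e : ℕ} (hg : Gadget G X Γ τ s K L C₀) (hc : Coherent G χ X Γ e)
    (ht : Transfer G χ X Γ τ s) (hs : 1 ≤ s) (hes : e ≤ s) (hK : 3 * C₀ * τ + 2 ≤ K)
    (hX : ∀ i ∈ Γ, (L + 3) * s ≤ (X i).card) (hΓ : Γ.Nonempty)
    (p : ℕ → ℕ) (hp : ∀ b, 0 < b → p b < b) : ∀ n, n ≤ τ → HasRainbowTree G χ X Γ p n := by
  classical
  intro n
  induction n with
  | zero =>
    intro _
    obtain ⟨i, hi⟩ := hΓ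
    have : 0 < (X i).card := lt_of_lt_of_le (by positivity) (hX i hi)
    obtain ⟨x, hx⟩ := Finset.card_pos.1 this
    refine ⟨fun _ => x, fun _ _ => ?_, fun a ha b hb _ => by omega, fun a ha b hb => ?_⟩
    · rw [hc.color i hi x hx]; exact ⟨hi, hx⟩
    · obtain rfl : a = 0 := by omega
      obtain rfl : b = 0 := by omega
      simp [parentAdj_irrefl]
  | succ n ih =>
    intro hn
    obtain ⟨f, hf, hinj, hadj⟩ := ih (by omega)
    set S := (Finset.range (n + 1)).image f with hSdef
    have hfS : ∀ a ≤ n, f a ∈ S := fun a ha =>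
      Finset.mem_image_of_mem _ (Finset.mem_range.2 (by omega))
    have hSf : ∀ x ∈ S, ∃ a ≤ n, f a = x := by
      intro x hx
      obtain ⟨a, ha, rfl⟩ := Finset.mem_image.1 hx
      exact ⟨a, by have := Finset.mem_range.1 ha; omega, rfl⟩
    have hS : Rainbow χ X Γ S := by
      refine ⟨fun x hx => ?_, fun x hx y hy h => ?_⟩
      · obtain ⟨a, ha, rfl⟩ := hSf x hx
        exact hf a ha
      · obtain ⟨a, ha, rfl⟩ := hSf x hx
        obtain ⟨b, hb, rfl⟩ := hSf y hy
        rw [hinj a ha b hb h]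
    have hSc : S.card ≤ τ := Finset.card_image_le.trans (by simpa using hn)
    have hp' : p (n + 1) ≤ n := by have := hp (n + 1) (by omega); omega
    obtain ⟨φ, y, h1, h2, h3, h4, h5, h6, h7⟩ :=
      hg.add_leaf hc ht hs hes hK hX hS hSc (hfS _ hp')
    refine ⟨Function.update (φ ∘ f) (n + 1) y, ?_, ?_, parentAdj_extend ?_ ?_⟩
    · intro a ha
      rcases Nat.le_succ_iff_eq_or_le.1 ha with rfl | ha
      · simpa using ⟨h4, h5⟩
      · rw [Function.update_of_ne (by omega)]
        exact h1 _ (hfS a ha)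
    · intro a ha b hb
      rcases Nat.le_succ_iff_eq_or_le.1 ha with rfl | ha <;>
        rcases Nat.le_succ_iff_eq_or_le.1 hb with rfl | hb
      · intro _; rfl
      · simp only [Nat.succ_eq_add_one, Function.update_self]
        rw [Function.update_of_ne (by omega)]
        exact fun h => absurd h.symm (h6 _ (hfS b hb))
      · simp only [Nat.succ_eq_add_one, Function.update_self]
        rw [Function.update_of_ne (by omega)]
        exact fun h => absurd h (h6 _ (hfS a ha))
      · rw [Function.update_of_ne (by omega), Function.update_of_ne (by omega)]
        intro h
        have := h2 _ (hfS a ha) _ (hfS b hb) h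
        exact hinj a ha b hb (by rw [this])
    · intro a ha b hb
      rw [← hadj a ha b hb]
      exact h3 _ (hfS a ha) _ (hfS b hb)
    · intro a ha
      refine (h7 _ (hfS a ha)).trans ⟨fun e => hinj a ha _ hp' (by rw [e]), fun e => by rw [e]⟩

end Gadget

section Run

variable {V : Type*}

open Classical in
/-- The largest threshold exceeded by many values. -/
lemma exists_level (A : Finset V) (M : V → ℕ) {e k : ℕ} (hM : ∀ x ∈ A, M x ≤ e) (hk : 1 ≤ k)
    (h1 : k ≤ (A.filter fun x => 1 ≤ M x).card) :
    ∃ m, 1 ≤ m ∧ k ≤ (A.filter fun x => m ≤ M x).card ∧ (A.filter fun x => m < M x).card < k := by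
  let P : ℕ → Prop := fun m => k ≤ (A.filter fun x => m ≤ M x).card
  have he : 1 ≤ e := by
    by_contra he
    obtain ⟨x, hx⟩ := Finset.card_pos.1 (lt_of_lt_of_le hk h1)
    have := Finset.mem_filter.1 hx
    have := hM x this.1
    omega
  have h2 : P (Nat.findGreatest P e) := Nat.findGreatest_spec (P := P) he h1
  have h3 : 1 ≤ Nat.findGreatest P e := Nat.le_findGreatest he h1
  refine ⟨Nat.findGreatest P e, h3, h2, ?_⟩
  by_contra hcon
  push Not at hcon
  rcases Nat.lt_or_ge (Nat.findGreatest P e) e with h | h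
  · exact Nat.findGreatest_is_greatest (P := P) (Nat.lt_succ_self _) h hcon
  · obtain ⟨x, hx⟩ := Finset.card_pos.1 (lt_of_lt_of_le hk hcon)
    have := Finset.mem_filter.1 hx
    have := hM x this.1
    omega

/-- Pigeonhole: a large set covered by few sets meets one of them in a large set. -/
lemma exists_large_part {ι : Type*} (A : Finset V) (I : Finset ι) (hI : I.Nonempty)
    (R : ι → V → Prop) [∀ j, DecidablePred (R j)] (hR : ∀ x ∈ A, ∃ j ∈ I, R j x) {k : ℕ}
    (hA : I.card * k ≤ A.card) : ∃ j ∈ I, k ≤ (A.filter (R j)).card := by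
  classical
  by_contra hcon
  push Not at hcon
  have hcov : A ⊆ I.biUnion fun j => A.filter (R j) := by
    intro x hx
    obtain ⟨j, hj, hjx⟩ := hR x hx
    exact Finset.mem_biUnion.2 ⟨j, hj, Finset.mem_filter.2 ⟨hx, hjx⟩⟩
  have h1 := (Finset.card_le_card hcov).trans Finset.card_biUnion_le
  have h2 : ∑ j ∈ I, (A.filter (R j)).card < ∑ _j ∈ I, k :=
    Finset.sum_lt_sum_of_nonempty hI hcon
  simp at h2
  omega

/-- Partial tilings: `Cl` consists of vertices attached to exactly one vertex, the root, of a tile,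
and no tile sees the remaining parts `Y j` of the blocks. -/
structure RunState (G : SimpleGraph V) (χ : V → ℕ) (X : ℕ → Finset V) (J I : Finset ℕ)
    (Q : ℕ → ℕ → Finset V → V → Prop) (Y : ℕ → Finset V) (Cl : Finset V) : Prop where
  sub : ∀ j ∈ I, Y j ⊆ X j
  clean : ∀ y ∈ Cl, χ y ∈ I ∧ y ∈ X (χ y) ∧ ∃ i ∈ J, ∃ S r, Q i (χ y) S r ∧ G.Adj r y ∧
    (∀ x ∈ S, x ≠ r → ¬ G.Adj x y) ∧ ∀ j ∈ I, ∀ x ∈ S, ∀ z ∈ Y j, ¬ G.Adj x z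
  lost : ∀ j ∈ I, (X j).card ≤ (Y j).card + 4 * Cl.card
  fresh : ∀ y ∈ Cl, ∀ j ∈ I, y ∉ Y j

/-- Everything needed for one step and for the run: parameters and sources of tiles. -/
structure RunSetup (G : SimpleGraph V) (χ : V → ℕ) (X : ℕ → Finset V) (Γ J I : Finset ℕ)
    (Q₁ Q₂ : ℕ → ℕ → Finset V → V → Prop) (τ s K C₀ e : ℕ) : Prop where
  coh : Coherent G χ X Γ e
  subJ : J ⊆ Γ
  subI : I ⊆ Γ
  disj : Disjoint J I
  neJ : J.Nonempty
  neI : I.Nonempty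
  he : 1 ≤ e
  hes : e ≤ s
  hK : 1 ≤ K
  hX : ∀ i ∈ Γ, (K * I.card + 4 * (J.card * I.card) + 5) * s ≤ (X i).card
  tile₁ : ∀ i ∈ J, ∀ j ∈ I, ∀ Lt ⊆ J, (J \ Lt).card ≤ τ * I.card → ∀ A ⊆ X i, s ≤ A.card →
    ∀ X' : ℕ → Finset V, (∀ u ∈ Lt, X' u ⊆ X u ∧ s ≤ (X' u).card) →
      ∃ S r, Q₁ i j S r ∧ r ∈ A ∧ 4 * S.card ≤ C₀ ∧ r ∈ S ∧ ∀ x ∈ S, x ≠ r → ∃ u ∈ Lt, x ∈ X' u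
  tile₂ : ∀ i ∈ J, ∀ j ∈ I, ∀ A ⊆ X j, s ≤ A.card →
    ∀ X' : ℕ → Finset V, (∀ u ∈ I, X' u ⊆ X u ∧ s ≤ (X' u).card) →
      ∃ S r, Q₂ i j S r ∧ r ∈ A ∧ ∀ x ∈ S, x ≠ r → ∃ u ∈ I, x ∈ X' u

variable {G : SimpleGraph V} {χ : V → ℕ} {X : ℕ → Finset V} {Γ J I : Finset ℕ}
    {Q₁ Q₂ : ℕ → ℕ → Finset V → V → Prop} {τ s K C₀ e : ℕ}

lemma RunSetup.step (h : RunSetup G χ X Γ J I Q₁ Q₂ τ s K C₀ e) {Y : ℕ → Finset V}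
    {Cl : Finset V} (hst : RunState G χ X J I Q₁ Y Cl) (hCl : Cl.card < J.card * I.card * s) :
    Gadget G X Γ τ s K (K * I.card) C₀ ∨ ∃ Y' Cl', RunState G χ X J I Q₁ Y' Cl' ∧
      Cl.card < Cl'.card ∧ Cl'.card ≤ Cl.card + e := by
  classical
  have hcoh := h.coh
  have he := h.he
  have hes := h.hes
  set L := K * I.card with hL
  have hL1 : 1 ≤ L := Nat.mul_pos h.hK (Finset.card_pos.2 h.neI)
  have hX : ∀ i ∈ Γ, L * s + 4 * (J.card * I.card * s) + 5 * s ≤ (X i).card := by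
    intro i hi
    refine le_trans (le_of_eq ?_) (h.hX i hi)
    ring
  have hYc : ∀ j ∈ I, s ≤ (Y j).card := by
    intro j hj
    have h1 := hst.lost j hj
    have h2 := hX j (h.subI hj)
    have : 0 ≤ L * s := Nat.zero_le _
    omega
  let M : V → ℕ := fun x => I.sup fun j => (nbs G (Y j) x).card
  have hMj : ∀ x, ∀ j ∈ I, (nbs G (Y j) x).card ≤ M x := fun x j hj =>
    Finset.le_sup (f := fun j => (nbs G (Y j) x).card) hj
  have hMe : ∀ x, ∃ j ∈ I, M x = (nbs G (Y j) x).card := fun x =>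
    Finset.exists_mem_eq_sup I h.neI _
  have hMle : ∀ i ∈ J, ∀ x ∈ X i, M x ≤ e := by
    intro i hi x hx
    obtain ⟨j, hj, hjx⟩ := hMe x
    rw [hjx]
    exact (card_nbs_mono G (hst.sub j hj) x).trans (hcoh.degree i (h.subJ hi) x hx j (h.subI hj))
  have hlev : ∀ i, ∃ m, i ∈ J → 1 ≤ m ∧ L * s ≤ ((X i).filter fun x => m ≤ M x).card ∧
      ((X i).filter fun x => m < M x).card < L * s := by
    intro i
    by_cases hi : i ∈ J
    · obtain ⟨m, hm⟩ := exists_level (X i) M (e := e) (k := L * s) (hMle i hi)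
        (Nat.mul_pos hL1 (by omega)) (by
          by_contra hcon
          push Not at hcon
          have h2 := Finset.card_filter_add_card_filter_not (s := X i) (fun x => 1 ≤ M x)
          have h3 := hX i (h.subJ hi)
          obtain ⟨j, hj⟩ := h.neI
          have hij : i ≠ j := fun hh => Finset.disjoint_left.1 h.disj hi (hh ▸ hj)
          obtain ⟨a, ha, b, hb, hab⟩ := hcoh.edge i (h.subJ hi) j (h.subI hj) hij
            ((X i).filter fun x => ¬ 1 ≤ M x) (Finset.filter_subset _ _) (Y j) (hst.sub j hj)
            (by omega) (hes.trans (hYc j hj))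
          have h4 := (Finset.mem_filter.1 ha).2
          have h5 : 0 < (nbs G (Y j) a).card := Finset.card_pos.2 ⟨b, mem_nbs.2 ⟨hb, hab⟩⟩
          have := hMj a j hj
          omega)
      exact ⟨m, fun _ => hm⟩
    · exact ⟨0, fun hh => absurd hh hi⟩
  choose m hm using hlev
  obtain ⟨v, hv, hvmax⟩ := Finset.exists_max_image J m h.neJ
  let Lt := J.filter fun i => C₀ * m i ≤ m v
  by_cases hLt : (J \ Lt).card ≤ τ * I.card
  · right
    -- the root set
    obtain ⟨j, hj, hjA⟩ := exists_large_part ((X v).filter fun x => m v ≤ M x) I h.neI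
      (fun j x => M x = (nbs G (Y j) x).card) (fun x _ => hMe x) (k := s) (by
        refine le_trans ?_ (hm v hv).2.1
        exact Nat.mul_le_mul_right _ (by rw [hL]; exact Nat.le_mul_of_pos_left _ h.hK))
    set A := ((X v).filter fun x => m v ≤ M x).filter fun x => M x = (nbs G (Y j) x).card
    have hAX : A ⊆ X v := (Finset.filter_subset _ _).trans (Finset.filter_subset _ _)
    obtain ⟨S, r, hQ, hrA, hSc, hrS, hSX⟩ := h.tile₁ v hv j hj Lt (Finset.filter_subset _ _) hLt A
      hAX hjA (fun u => (X u).filter fun x => ¬ m u < M x) (by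
        intro u hu
        have huJ := (Finset.mem_filter.1 hu).1
        refine ⟨Finset.filter_subset _ _, ?_⟩
        have h2 := Finset.card_filter_add_card_filter_not (s := X u) (fun x => m u < M x)
        have h3 := hX u (h.subJ huJ)
        have h4 := (hm u huJ).2.2
        omega)
    have hrM : M r = (nbs G (Y j) r).card := (Finset.mem_filter.1 hrA).2
    have hrm : m v ≤ M r := (Finset.mem_filter.1 (Finset.mem_filter.1 hrA).1).2
    have hsmall : ∀ x ∈ S, x ≠ r → C₀ * M x ≤ M r := by
      intro x hx hxr
      obtain ⟨u, hu, hxu⟩ := hSX x hx hxr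
      have h1 := (Finset.mem_filter.1 hu).2
      have h2 := (Finset.mem_filter.1 hxu).2
      push Not at h2
      calc _ ≤ C₀ * m u := Nat.mul_le_mul_left _ h2
        _ ≤ _ := h1.trans hrm
    have hmv := (hm v hv).1
    have hsum : 4 * ∑ x ∈ S.erase r, M x ≤ M r := by
      have h1 : C₀ * ∑ x ∈ S.erase r, M x ≤ S.card * M r := by
        rw [Finset.mul_sum]
        calc _ ≤ ∑ x ∈ S.erase r, M r := Finset.sum_le_sum fun x hx =>
              hsmall x (Finset.mem_of_mem_erase hx) (Finset.ne_of_mem_erase hx)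
          _ = (S.erase r).card * M r := by simp
          _ ≤ _ := Nat.mul_le_mul_right _ Finset.card_erase_le
      have h2 : S.card * (4 * ∑ x ∈ S.erase r, M x) ≤ S.card * M r := by
        refine le_trans ?_ h1
        calc _ = (4 * S.card) * ∑ x ∈ S.erase r, M x := by ring
          _ ≤ _ := Nat.mul_le_mul_right _ hSc
      exact Nat.le_of_mul_le_mul_left h2 (Finset.card_pos.2 ⟨r, hrS⟩)
    let D : ℕ → Finset V := fun j => (S.erase r).biUnion fun x => nbs G (Y j) x
    have hD : ∀ j ∈ I, 4 * (D j).card ≤ M r := by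
      intro j hj
      refine le_trans (Nat.mul_le_mul_left _ (Finset.card_biUnion_le.trans ?_)) hsum
      exact Finset.sum_le_sum fun x _ => hMj x j hj
    let new := nbs G (Y j) r \ D j
    have hnew : M r ≤ 2 * new.card := by
      have h1 := Finset.le_card_sdiff (D j) (nbs G (Y j) r)
      have h2 := hD j hj
      have h3 : new.card = (nbs G (Y j) r \ D j).card := rfl
      omega
    have hnewe : new.card ≤ e := by
      refine (Finset.card_le_card Finset.sdiff_subset).trans ?_
      rw [← hrM]
      exact hMle v hv r (hAX hrA)
    have hnewY : ∀ y ∈ new, y ∈ Y j := fun y hy => (mem_nbs.1 (Finset.mem_sdiff.1 hy).1).1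
    have hdisj : Disjoint Cl new := by
      rw [Finset.disjoint_left]
      intro y hy hy'
      exact hst.fresh y hy j hj (hnewY y hy')
    have hχnew : ∀ y ∈ new, χ y = j := fun y hy =>
      hcoh.color j (h.subI hj) y (hst.sub j hj (hnewY y hy))
    let Y' : ℕ → Finset V := fun j => Y j \ (nbs G (Y j) r ∪ D j)
    have hY'na : ∀ k, ∀ x ∈ S, ∀ z ∈ Y' k, ¬ G.Adj x z := by
      intro k x hx z hz hxz
      obtain ⟨h1, h2⟩ := Finset.mem_sdiff.1 hz
      apply h2
      by_cases hxr : x = r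
      · exact Finset.mem_union_left _ (mem_nbs.2 ⟨h1, hxr ▸ hxz⟩)
      · exact Finset.mem_union_right _ (Finset.mem_biUnion.2
          ⟨x, Finset.mem_erase.2 ⟨hxr, hx⟩, mem_nbs.2 ⟨h1, hxz⟩⟩)
    refine ⟨Y', Cl ∪ new, ⟨?_, ?_, ?_, ?_⟩, ?_, ?_⟩
    · exact fun k hk => Finset.sdiff_subset.trans (hst.sub k hk)
    · intro y hy
      rcases Finset.mem_union.1 hy with hy | hy
      · obtain ⟨h1, h2, i, hi, S', r', h3, h4, h5, h6⟩ := hst.clean y hy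
        exact ⟨h1, h2, i, hi, S', r', h3, h4, h5, fun k hk x hx z hz =>
          h6 k hk x hx z (Finset.mem_sdiff.1 hz).1⟩
      · have hyj := hχnew y hy
        refine ⟨hyj ▸ hj, ?_, v, hv, S, r, ?_, ?_, ?_, fun k _ => hY'na k⟩
        · rw [hyj]; exact hst.sub j hj (hnewY y hy)
        · rw [hyj]; exact hQ
        · exact (mem_nbs.1 (Finset.mem_sdiff.1 hy).1).2
        · intro x hx hxr hxy
          exact (Finset.mem_sdiff.1 hy).2 (Finset.mem_biUnion.2
            ⟨x, Finset.mem_erase.2 ⟨hxr, hx⟩, mem_nbs.2 ⟨hnewY y hy, hxy⟩⟩)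
    · intro k hk
      rw [Finset.card_union_of_disjoint hdisj]
      have h1 := hst.lost k hk
      have h2 := Finset.le_card_sdiff (nbs G (Y k) r ∪ D k) (Y k)
      have h3 := Finset.card_union_le (nbs G (Y k) r) (D k)
      have h4 := hMj r k hk
      have h5 := hD k hk
      have h6 : (Y' k).card = (Y k \ (nbs G (Y k) r ∪ D k)).card := rfl
      omega
    · intro y hy k hk hyk
      rcases Finset.mem_union.1 hy with hy | hy
      · exact hst.fresh y hy k hk (Finset.mem_sdiff.1 hyk).1
      · exact hY'na k r hrS y hyk (mem_nbs.1 (Finset.mem_sdiff.1 hy).1).2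
    · rw [Finset.card_union_of_disjoint hdisj]; omega
    · rw [Finset.card_union_of_disjoint hdisj]; omega
  · left
    push Not at hLt
    have hfib : ∀ i ∈ J \ Lt, ∃ j ∈ I, K * s ≤ (((X i).filter fun x => m i ≤ M x).filter
        fun x => M x = (nbs G (Y j) x).card).card := by
      intro i hi
      have hiJ := (Finset.mem_sdiff.1 hi).1
      refine exists_large_part _ I h.neI (fun j x => M x = (nbs G (Y j) x).card)
        (fun x _ => hMe x) ?_
      refine le_trans (le_of_eq ?_) (hm i hiJ).2.1
      rw [hL]; ring
    obtain ⟨j, hj, hjJ⟩ := exists_large_part (J \ Lt) I h.neI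
      (fun j i => K * s ≤ (((X i).filter fun x => m i ≤ M x).filter
        fun x => M x = (nbs G (Y j) x).card).card) hfib (k := τ) (by rw [mul_comm]; exact hLt.le)
    refine ⟨_, ((Finset.filter_subset _ _).trans Finset.sdiff_subset).trans h.subJ, hjJ, j,
      h.subI hj, ?_, Y j, hst.sub j hj, m v, (hm v hv).1, ?_⟩
    · intro hmem
      exact Finset.disjoint_left.1 h.disj
        (Finset.mem_sdiff.1 (Finset.mem_filter.1 hmem).1).1 hj
    · intro i hi
      obtain ⟨h1, h2⟩ := Finset.mem_filter.1 hi
      obtain ⟨hiJ, hiL⟩ := Finset.mem_sdiff.1 h1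
      have h3 : m v < C₀ * m i := by
        by_contra hcon
        exact hiL (Finset.mem_filter.2 ⟨hiJ, not_lt.1 hcon⟩)
      constructor
      · refine h2.trans (Finset.card_le_card ?_)
        intro x hx
        obtain ⟨h4, h5⟩ := Finset.mem_filter.1 hx
        obtain ⟨h6, h7⟩ := Finset.mem_filter.1 h4
        refine Finset.mem_filter.2 ⟨h6, ?_⟩
        rw [← h5]
        exact h3.le.trans (Nat.mul_le_mul_left _ h7)
      · refine le_trans (Finset.card_le_card ?_) (hm i hiJ).2.2.le
        intro x hx
        obtain ⟨h4, h5⟩ := Finset.mem_filter.1 hx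
        refine Finset.mem_filter.2 ⟨h4, ?_⟩
        exact lt_of_le_of_lt (hvmax i hiJ) (lt_of_lt_of_le h5 (hMj x j hj))

/-- Either the blocks contain a gadget, or two tiles can be joined by a single edge between their
roots. -/
theorem RunSetup.run (h : RunSetup G χ X Γ J I Q₁ Q₂ τ s K C₀ e) :
    Gadget G X Γ τ s K (K * I.card) C₀ ∨ ∃ i ∈ J, ∃ j ∈ I, ∃ S₁ r₁ S₂ r₂, Q₁ i j S₁ r₁ ∧
      Q₂ i j S₂ r₂ ∧ ∀ x ∈ S₁, ∀ y ∈ S₂, (G.Adj x y ↔ x = r₁ ∧ y = r₂) := by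
  classical
  by_cases hg : Gadget G X Γ τ s K (K * I.card) C₀
  · exact Or.inl hg
  right
  have key : ∀ n, ∃ Y Cl, RunState G χ X J I Q₁ Y Cl ∧ min n (J.card * I.card * s) ≤ Cl.card ∧
      Cl.card ≤ J.card * I.card * s + e := by
    intro n
    induction n with
    | zero =>
      exact ⟨X, ∅, ⟨fun _ _ => subset_rfl, by simp, by simp, by simp⟩, by simp, by simp⟩
    | succ n ih =>
      obtain ⟨Y, Cl, h1, h2, h3⟩ := ih
      rcases Nat.lt_or_ge Cl.card (J.card * I.card * s) with hlt | hge
      · rcases h.step h1 hlt with h4 | ⟨Y', Cl', h4, h5, h6⟩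
        · exact absurd h4 hg
        · exact ⟨Y', Cl', h4, by omega, by omega⟩
      · exact ⟨Y, Cl, h1, by omega, h3⟩
  obtain ⟨Y, Cl, hst, h2, h3⟩ := key (J.card * I.card * s)
  rw [min_self] at h2
  obtain ⟨⟨i, j⟩, hij, hA⟩ := exists_large_part Cl (J ×ˢ I) (h.neJ.product h.neI)
    (fun ij y => χ y = ij.2 ∧ ∃ S r, Q₁ ij.1 ij.2 S r ∧ G.Adj r y ∧
    (∀ x ∈ S, x ≠ r → ¬ G.Adj x y) ∧ ∀ j ∈ I, ∀ x ∈ S, ∀ z ∈ Y j, ¬ G.Adj x z) (by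
      intro y hy
      obtain ⟨h4, h5, i, hi, S, r, h6⟩ := hst.clean y hy
      exact ⟨(i, χ y), Finset.mem_product.2 ⟨hi, h4⟩, rfl, S, r, h6⟩) (k := s)
    (by rw [Finset.card_product]; exact h2)
  obtain ⟨hi, hj⟩ := Finset.mem_product.1 hij
  simp only at hi hj hA
  obtain ⟨S₂, r₂, hQ₂, hr₂, hS₂⟩ := h.tile₂ i hi j hj _ (by
    intro y hy
    obtain ⟨hy, hyj, -⟩ := Finset.mem_filter.1 hy
    rw [← hyj]
    exact (hst.clean y hy).2.1) hA Y (by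
    intro u hu
    refine ⟨hst.sub u hu, ?_⟩
    have h4 := hst.lost u hu
    have h5 := h.hX u (h.subI hu)
    have h6 := h.hes
    have h7 : (K * I.card + 4 * (J.card * I.card) + 5) * s =
      K * I.card * s + 4 * (J.card * I.card * s) + 5 * s := by ring
    have : 0 ≤ K * I.card * s := Nat.zero_le _
    omega)
  obtain ⟨-, -, S₁, r₁, hQ₁, h8, h9, h10⟩ := Finset.mem_filter.1 hr₂
  refine ⟨i, hi, j, hj, S₁, r₁, S₂, r₂, hQ₁, hQ₂, ?_⟩
  intro x hx y hy
  by_cases hyr : y = r₂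
  · subst hyr
    by_cases hxr : x = r₁
    · subst hxr; simp [h8]
    · simp [hxr, h9 x hx hxr]
  · obtain ⟨u, hu, hyu⟩ := hS₂ y hy hyr
    simp [hyr, h10 u hu x hx y hyu]

end Run

section Geometry

variable {V : Type*}

/-- A rainbow binomial tree whose root has the smallest colour. -/
def MinRooted (G : SimpleGraph V) (χ : V → ℕ) (X : ℕ → Finset V) (Γ : Finset ℕ) (c : ℕ) : Prop :=
  ∃ S r, Rainbow χ X Γ S ∧ IsBinomial G c S r ∧ ∀ x ∈ S, χ r ≤ χ x

/-- A rainbow binomial tree whose root has the largest colour. -/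
def MaxRooted (G : SimpleGraph V) (χ : V → ℕ) (X : ℕ → Finset V) (Γ : Finset ℕ) (c : ℕ) : Prop :=
  ∃ S r, Rainbow χ X Γ S ∧ IsBinomial G c S r ∧ ∀ x ∈ S, χ x ≤ χ r

/-- A binomial tree of order `c` can be placed with its root in block `i` and its other vertices
in blocks of `P`. -/
def Placeable (G : SimpleGraph V) (χ : V → ℕ) (X : ℕ → Finset V) (Γ : Finset ℕ) (c i : ℕ)
    (P : Finset ℕ) : Prop :=
  (MinRooted G χ X Γ c ∧ ∀ u ∈ P, i < u) ∨ (MaxRooted G χ X Γ c ∧ ∀ u ∈ P, u < i)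

variable {G : SimpleGraph V} {χ : V → ℕ} {X : ℕ → Finset V} {Γ : Finset ℕ}

lemma Rainbow.mono {S T : Finset V} (h : Rainbow χ X Γ S) (hT : T ⊆ S) : Rainbow χ X Γ T :=
  ⟨fun x hx => h.1 x (hT hx), h.2.mono (by exact_mod_cast hT)⟩

lemma MinRooted.mono {c d : ℕ} (h : MinRooted G χ X Γ d) (hcd : c ≤ d) :
    MinRooted G χ X Γ c := by
  obtain ⟨S, r, h1, h2, h3⟩ := h
  obtain ⟨T, hT, h4⟩ := h2.exists_sub hcd
  exact ⟨T, r, h1.mono hT, h4, fun x hx => h3 x (hT hx)⟩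

lemma MaxRooted.mono {c d : ℕ} (h : MaxRooted G χ X Γ d) (hcd : c ≤ d) :
    MaxRooted G χ X Γ c := by
  obtain ⟨S, r, h1, h2, h3⟩ := h
  obtain ⟨T, hT, h4⟩ := h2.exists_sub hcd
  exact ⟨T, r, h1.mono hT, h4, fun x hx => h3 x (hT hx)⟩

lemma hasRainbowTree_of_isBinomial {S : Finset V} {r : V} {n : ℕ} (hS : Rainbow χ X Γ S)
    (hB : IsBinomial G n S r) (p : ℕ → ℕ) (hp : ∀ b, 0 < b → p b < b) :
    HasRainbowTree G χ X Γ p n := by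
  obtain ⟨f, h1, h2, h3⟩ := hB.exists_tree p hp
  exact ⟨f, fun a ha => hS.1 _ (h1 a ha),
    fun a ha b hb hab => h2 a ha b hb (hS.2 (h1 a ha) (h1 b hb) hab), h3⟩

/-- A strictly monotone map on the colours of a set preserves the colour order of the root. -/
lemma Placeable.exists_tile {τ s c i : ℕ} {P : Finset ℕ} (hpl : Placeable G χ X Γ c i P)
    (hcol : ∀ j ∈ Γ, ∀ x ∈ X j, χ x = j)
    (ht : Transfer G χ X Γ τ s) (hi : i ∈ Γ) (hP : P ⊆ Γ) (hc : 2 ^ c ≤ τ)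
    (hPc : 2 ^ c ≤ P.card + 1) {A : Finset V} (hA : A ⊆ X i) (hAs : s ≤ A.card)
    {X' : ℕ → Finset V} (hX' : ∀ u ∈ P, X' u ⊆ X u ∧ s ≤ (X' u).card) :
    ∃ S r, IsBinomial G c S r ∧ Rainbow χ X Γ S ∧ r ∈ A ∧ χ r = i ∧
      ∀ x ∈ S, x ≠ r → χ x ∈ P ∧ x ∈ X' (χ x) := by
  classical
  have hiP : i ∉ P := by
    intro h
    rcases hpl with ⟨-, h1⟩ | ⟨-, h1⟩ <;> exact lt_irrefl _ (h1 i h)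
  obtain ⟨P', hP', hP'c⟩ := Finset.exists_subset_card_eq (s := P) (n := 2 ^ c - 1) (by omega)
  have hiP' : i ∉ P' := fun h => hiP (hP' h)
  have hpos : 0 < 2 ^ c := by positivity
  have key : ∃ S r, Rainbow χ X Γ S ∧ IsBinomial G c S r ∧ ∀ σ : ℕ → ℕ,
      (∀ x ∈ S, σ (χ x) ∈ insert i P') →
      (∀ x ∈ S, ∀ y ∈ S, χ x < χ y → σ (χ x) < σ (χ y)) →
      (∃ x ∈ S, σ (χ x) = i) → σ (χ r) = i := by
    rcases hpl with ⟨⟨S, r, h1, h2, h3⟩, h4⟩ | ⟨⟨S, r, h1, h2, h3⟩, h4⟩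
    all_goals
      refine ⟨S, r, h1, h2, fun σ h5 h6 ⟨x, hx, hxi⟩ => ?_⟩
      have hr := h2.root_mem
      by_contra hne
      have h7 : σ (χ r) ∈ P := by
        rcases Finset.mem_insert.1 (h5 r hr) with h | h
        · exact absurd h hne
        · exact hP' h
      have h8 := h4 _ h7
      have h9 := h3 x hx
      rcases h9.lt_or_eq with h10 | h10
    · have := h6 r hr x hx h10; omega
    · rw [h10] at hne; exact hne hxi
    · have := h6 x hx r hr h10; omega
    · rw [← h10] at hne; exact hne hxi
  obtain ⟨S, r, hS, hB, hroot⟩ := key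
  have hScard := hB.card_eq
  obtain ⟨σ, h1, h2, h3⟩ := ht S hS (hScard ▸ hc) (insert i P')
    (Finset.insert_subset hi (hP'.trans hP)) (by
      rw [Finset.card_insert_of_notMem hiP', hP'c, hScard]; omega)
  have hinj : Set.InjOn (fun x => σ (χ x)) S := by
    intro x hx y hy hxy
    rcases lt_trichotomy (χ x) (χ y) with h | h | h
    · exact absurd hxy (h2 x hx y hy h).ne
    · exact hS.2 hx hy h
    · exact absurd hxy (h2 y hy x hx h).ne'
  have himg : S.image (fun x => σ (χ x)) = insert i P' := by
    apply Finset.eq_of_subset_of_card_le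
    · intro u hu
      obtain ⟨x, hx, rfl⟩ := Finset.mem_image.1 hu
      exact h1 x hx
    · rw [Finset.card_image_of_injOn hinj, Finset.card_insert_of_notMem hiP', hP'c, hScard]; omega
  have hσr : σ (χ r) = i := by
    apply hroot σ h1 h2
    have : i ∈ S.image (fun x => σ (χ x)) := by rw [himg]; exact Finset.mem_insert_self _ _
    obtain ⟨x, hx, hxi⟩ := Finset.mem_image.1 this
    exact ⟨x, hx, hxi⟩
  let Z : ℕ → Finset V := fun u => if u = i then A else X' u
  have hZ : ∀ u ∈ insert i P', Z u ⊆ X u ∧ s ≤ (Z u).card := by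
    intro u hu
    by_cases hui : u = i
    · subst hui; simp only [Z, if_true]; exact ⟨hA, hAs⟩
    · simp only [Z, hui, if_false]
      exact hX' u (hP' ((Finset.mem_insert.1 hu).resolve_left hui))
  obtain ⟨φ, h4, h5⟩ := h3 Z hZ
  have hχφ : ∀ x ∈ S, χ (φ x) = σ (χ x) := fun x hx =>
    hcol _ ((Finset.insert_subset hi (hP'.trans hP)) (h1 x hx)) _ ((hZ _ (h1 x hx)).1 (h4 x hx))
  have hφinj : Set.InjOn φ S := by
    intro x hx y hy hxy
    apply hinj hx hy
    simp only
    rw [← hχφ x hx, ← hχφ y hy, hxy]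
  have hrφ := h4 r hB.root_mem
  rw [hσr] at hrφ
  simp only [Z, if_true] at hrφ
  refine ⟨S.image φ, φ r, hB.image hφinj h5, ⟨?_, ?_⟩, hrφ, ?_, ?_⟩
  · intro y hy
    obtain ⟨x, hx, rfl⟩ := Finset.mem_image.1 hy
    rw [hχφ x hx]
    exact ⟨(Finset.insert_subset hi (hP'.trans hP)) (h1 x hx), (hZ _ (h1 x hx)).1 (h4 x hx)⟩
  · intro y hy z hz hyz
    obtain ⟨x, hx, rfl⟩ := Finset.mem_image.1 (Finset.mem_coe.1 hy)
    obtain ⟨w, hw, rfl⟩ := Finset.mem_image.1 (Finset.mem_coe.1 hz)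
    rw [hχφ x hx, hχφ w hw] at hyz
    rw [hinj hx hw hyz]
  · rw [hχφ r hB.root_mem, hσr]
  · intro y hy hyr
    obtain ⟨x, hx, rfl⟩ := Finset.mem_image.1 hy
    have hne : σ (χ x) ≠ i := by
      intro h
      apply hyr
      rw [hinj hx hB.root_mem (h.trans hσr.symm)]
    rw [hχφ x hx]
    have h6 := h4 x hx
    simp only [Z, hne, if_false] at h6
    exact ⟨hP' ((Finset.mem_insert.1 (h1 x hx)).resolve_left hne), h6⟩

/-- A finite set of numbers has an initial segment of every size. -/
lemma exists_initial_segment (a : ℕ) : ∀ (S : Finset ℕ), a ≤ S.card →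
    ∃ T ⊆ S, T.card = a ∧ ∀ u ∈ T, ∀ v ∈ S \ T, u < v := by
  induction a with
  | zero => intro S _; exact ⟨∅, by simp⟩
  | succ a ih =>
    intro S hS
    have hne : S.Nonempty := Finset.card_pos.1 (by omega)
    obtain ⟨T, hT, hTc, hlt⟩ := ih (S.erase (S.min' hne)) (by
      rw [Finset.card_erase_of_mem (Finset.min'_mem _ _)]; omega)
    have hnot : S.min' hne ∉ T := fun h => by simpa using hT h
    refine ⟨insert (S.min' hne) T, ?_, by rw [Finset.card_insert_of_notMem hnot, hTc], ?_⟩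
    · exact Finset.insert_subset (Finset.min'_mem _ _) (hT.trans (Finset.erase_subset _ _))
    · intro u hu v hv
      simp only [Finset.mem_sdiff, Finset.mem_insert, not_or] at hv
      rcases Finset.mem_insert.1 hu with rfl | hu
      · exact lt_of_le_of_ne (Finset.min'_le _ _ hv.1) (Ne.symm hv.2.1)
      · exact hlt u hu v (by simp [hv.1, hv.2.1, hv.2.2])

/-- Three consecutive regions, each with two disjoint parts of given sizes. -/
lemma exists_regions (a b : ℕ) (hΓ : Γ.card = 3 * (a + b)) :
    ∃ A J I : Fin 3 → Finset ℕ, (∀ r, A r ⊆ Γ) ∧ (∀ r t, r < t → ∀ u ∈ A r, ∀ v ∈ A t, u < v) ∧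
      (∀ r, J r ⊆ A r) ∧ (∀ r, I r ⊆ A r) ∧ (∀ r t, Disjoint (J r) (I t)) ∧
      (∀ r, (J r).card = a) ∧ (∀ r, (I r).card = b) ∧
      (∀ r t, r ≠ t → Disjoint (A r) (A t)) := by
  obtain ⟨A₀, h0, h0c, h0lt⟩ := exists_initial_segment (a + b) Γ (by omega)
  have h0d : (Γ \ A₀).card = 2 * (a + b) := by rw [Finset.card_sdiff_of_subset h0]; omega
  obtain ⟨A₁, h1, h1c, h1lt⟩ := exists_initial_segment (a + b) (Γ \ A₀) (by omega)
  have h1d : ((Γ \ A₀) \ A₁).card = a + b := by rw [Finset.card_sdiff_of_subset h1]; omega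
  let A : Fin 3 → Finset ℕ := ![A₀, A₁, (Γ \ A₀) \ A₁]
  have hAΓ : ∀ r, A r ⊆ Γ := by
    intro r
    fin_cases r
    · exact h0
    · exact h1.trans Finset.sdiff_subset
    · exact Finset.sdiff_subset.trans Finset.sdiff_subset
  have hlt : ∀ r t, r < t → ∀ u ∈ A r, ∀ v ∈ A t, u < v := by
    intro r t hrt u hu v hv
    fin_cases r <;> fin_cases t <;> simp [A] at hrt hu hv
    · exact h0lt u hu v (h1 hv)
    · exact h0lt u hu v (by simp [hv])
    · exact h1lt u hu v (by simp [hv])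
  have hAd : ∀ r t, r ≠ t → Disjoint (A r) (A t) := by
    intro r t hrt
    rw [Finset.disjoint_left]
    intro u hu hv
    rcases lt_or_gt_of_ne hrt with h | h
    · exact lt_irrefl _ (hlt r t h u hu u hv)
    · exact lt_irrefl _ (hlt t r h u hv u hu)
  have hAc : ∀ r, (A r).card = a + b := by
    intro r; fin_cases r <;> simp [A, h0c, h1c, h1d]
  have hJ : ∀ r, ∃ J ⊆ A r, J.card = a := fun r =>
    Finset.exists_subset_card_eq (by have := hAc r; omega)
  choose J hJ hJc using hJ
  refine ⟨A, J, fun r => A r \ J r, hAΓ, hlt, hJ, fun r => Finset.sdiff_subset, ?_, hJc, ?_, hAd⟩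
  · intro r t
    by_cases hrt : r = t
    · subst hrt; exact Finset.disjoint_sdiff
    · exact (hAd r t hrt).mono (hJ r) Finset.sdiff_subset
  · intro r
    rw [Finset.card_sdiff_of_subset (hJ r), hAc, hJc]; omega

/-- Choice of the shape and region of a pair of tiles with roots in blocks `i` and `j`, such that
joining the tiles is impossible. -/
lemma exists_kind {k l : ℕ} (hk : MaxRooted G χ X Γ k) (hk' : ¬ MaxRooted G χ X Γ (k + 1))
    (hl : MinRooted G χ X Γ l) (hl' : ¬ MinRooted G χ X Γ (l + 1)) {A : Fin 3 → Finset ℕ}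
    (hA : ∀ r t, r < t → ∀ u ∈ A r, ∀ v ∈ A t, u < v) {i j : ℕ} (hi : ∃ r, i ∈ A r)
    (hj : ∃ r, j ∈ A r) :
    ∃ c r, (c = k ∨ c = l) ∧ Placeable G χ X Γ c i (A r) ∧ Placeable G χ X Γ c j (A r) ∧
      ∀ S r₁ r₂, Rainbow χ X Γ S → IsBinomial G (c + 1) S r₁ → IsBinomial G (c + 1) S r₂ →
        χ r₁ = i → χ r₂ = j → ¬ ∀ x ∈ S, x ≠ r₁ → x ≠ r₂ → χ x ∈ A r := by
  obtain ⟨ri, hi⟩ := hi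
  obtain ⟨rj, hj⟩ := hj
  have hmin : ∀ {S : Finset V} {r₁ r₂ : V} {r : Fin 3}, (∀ u ∈ A r, i < u) → (∀ u ∈ A r, j < u) →
      (∀ x ∈ S, x ≠ r₁ → x ≠ r₂ → χ x ∈ A r) → χ r₁ = i → χ r₂ = j →
      (∀ x ∈ S, χ r₁ ≤ χ x) ∨ ∀ x ∈ S, χ r₂ ≤ χ x := by
    intro S r₁ r₂ r h1 h2 h3 h4 h5
    rcases le_total i j with h | h
    · left
      intro x hx
      by_cases e1 : x = r₁
      · rw [e1]
      by_cases e2 : x = r₂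
      · rw [e2, h4, h5]; exact h
      · rw [h4]; exact (h1 _ (h3 x hx e1 e2)).le
    · right
      intro x hx
      by_cases e2 : x = r₂
      · rw [e2]
      by_cases e1 : x = r₁
      · rw [e1, h4, h5]; exact h
      · rw [h5]; exact (h2 _ (h3 x hx e1 e2)).le
  have hmax : ∀ {S : Finset V} {r₁ r₂ : V} {r : Fin 3}, (∀ u ∈ A r, u < i) → (∀ u ∈ A r, u < j) →
      (∀ x ∈ S, x ≠ r₁ → x ≠ r₂ → χ x ∈ A r) → χ r₁ = i → χ r₂ = j →
      (∀ x ∈ S, χ x ≤ χ r₁) ∨ ∀ x ∈ S, χ x ≤ χ r₂ := by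
    intro S r₁ r₂ r h1 h2 h3 h4 h5
    rcases le_total j i with h | h
    · left
      intro x hx
      by_cases e1 : x = r₁
      · rw [e1]
      by_cases e2 : x = r₂
      · rw [e2, h4, h5]; exact h
      · rw [h4]; exact (h1 _ (h3 x hx e1 e2)).le
    · right
      intro x hx
      by_cases e2 : x = r₂
      · rw [e2]
      by_cases e1 : x = r₁
      · rw [e1, h4, h5]; exact h
      · rw [h5]; exact (h2 _ (h3 x hx e1 e2)).le
  by_cases h2 : ri < 2 ∧ rj < 2
  · have hiu : ∀ u ∈ A 2, i < u := hA ri 2 h2.1 i hi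
    have hju : ∀ u ∈ A 2, j < u := hA rj 2 h2.2 j hj
    refine ⟨l, 2, Or.inr rfl, Or.inl ⟨hl, hiu⟩, Or.inl ⟨hl, hju⟩, ?_⟩
    intro S r₁ r₂ hS hB₁ hB₂ h₁ h₂ hx
    rcases hmin hiu hju hx h₁ h₂ with h | h
    · exact hl' ⟨S, r₁, hS, hB₁, h⟩
    · exact hl' ⟨S, r₂, hS, hB₂, h⟩
  by_cases h0 : 0 < ri ∧ 0 < rj
  · have hiu : ∀ u ∈ A 0, u < i := fun u hu => hA 0 ri h0.1 u hu i hi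
    have hju : ∀ u ∈ A 0, u < j := fun u hu => hA 0 rj h0.2 u hu j hj
    refine ⟨k, 0, Or.inl rfl, Or.inr ⟨hk, hiu⟩, Or.inr ⟨hk, hju⟩, ?_⟩
    intro S r₁ r₂ hS hB₁ hB₂ h₁ h₂ hx
    rcases hmax hiu hju hx h₁ h₂ with h | h
    · exact hk' ⟨S, r₁, hS, hB₁, h⟩
    · exact hk' ⟨S, r₂, hS, hB₂, h⟩
  have hc : ∃ c, (c = k ∨ c = l) ∧ MaxRooted G χ X Γ c ∧ MinRooted G χ X Γ c ∧
      ¬ (MaxRooted G χ X Γ (c + 1) ∧ MinRooted G χ X Γ (c + 1)) := by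
    rcases le_total k l with h | h
    · exact ⟨k, Or.inl rfl, hk, hl.mono h, fun hh => hk' hh.1⟩
    · exact ⟨l, Or.inr rfl, hk.mono h, hl, fun hh => hl' hh.2⟩
  obtain ⟨c, hckl, hcM, hcm, hc'⟩ := hc
  have hcase : ∀ a b : Fin 3, ¬ (a < 2 ∧ b < 2) → ¬ (0 < a ∧ 0 < b) →
      (a = 0 ∧ b = 2) ∨ (a = 2 ∧ b = 0) := by decide
  refine ⟨c, 1, hckl, ?_⟩
  rcases hcase ri rj h2 h0 with ⟨rfl, rfl⟩ | ⟨rfl, rfl⟩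
  · have hiu : ∀ u ∈ A 1, i < u := hA 0 1 (by decide) i hi
    have hju : ∀ u ∈ A 1, u < j := fun u hu => hA 1 2 (by decide) u hu j hj
    have hij : i < j := hA 0 2 (by decide) i hi j hj
    refine ⟨Or.inl ⟨hcm, hiu⟩, Or.inr ⟨hcM, hju⟩, ?_⟩
    intro S r₁ r₂ hS hB₁ hB₂ h₁ h₂ hx
    refine hc' ⟨⟨S, r₂, hS, hB₂, fun x hxS => ?_⟩, ⟨S, r₁, hS, hB₁, fun x hxS => ?_⟩⟩
    all_goals
      by_cases e1 : x = r₁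
      · have := congrArg χ e1; omega
      by_cases e2 : x = r₂
      · have := congrArg χ e2; omega
      have := hx x hxS e1 e2
      have := hiu _ this
      have := hju _ (hx x hxS e1 e2)
      omega
  · have hiu : ∀ u ∈ A 1, j < u := hA 0 1 (by decide) j hj
    have hju : ∀ u ∈ A 1, u < i := fun u hu => hA 1 2 (by decide) u hu i hi
    have hij : j < i := hA 0 2 (by decide) j hj i hi
    refine ⟨Or.inr ⟨hcM, hju⟩, Or.inl ⟨hcm, hiu⟩, ?_⟩
    intro S r₁ r₂ hS hB₁ hB₂ h₁ h₂ hx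
    refine hc' ⟨⟨S, r₁, hS, hB₁, fun x hxS => ?_⟩, ⟨S, r₂, hS, hB₂, fun x hxS => ?_⟩⟩
    all_goals
      by_cases e1 : x = r₁
      · have := congrArg χ e1; omega
      by_cases e2 : x = r₂
      · have := congrArg χ e2; omega
      have := hx x hxS e1 e2
      have := hiu _ this
      have := hju _ (hx x hxS e1 e2)
      omega

end Geometry

section ForestLemma

variable {V : Type*}

lemma hasRainbowTree_of_coherent (p : ℕ → ℕ) (hp : ∀ b, 0 < b → p b < b) (n : ℕ) :
    ∃ g C, ∀ {V : Type*} (G : SimpleGraph V) (χ : V → ℕ) (X : ℕ → Finset V) (Γ : Finset ℕ)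
      (e s : ℕ), Coherent G χ X Γ e → 1 ≤ e → e ≤ s → Γ.card = g →
      (∀ i ∈ Γ, C * s ≤ (X i).card) → Transfer G χ X Γ (2 ^ n) s → HasRainbowTree G χ X Γ p n := by
  classical
  set τ := 2 ^ n with hτ
  have hτ1 : 1 ≤ τ := Nat.one_le_two_pow
  have hnτ : n ≤ τ := Nat.lt_two_pow_self.le
  let a := 3 * (τ * τ) + τ
  let b := τ
  let C₀ := 4 * τ
  let K := 3 * C₀ * τ + 2
  refine ⟨3 * (a + b), K * (3 * b) + 4 * (3 * a * (3 * b)) + 5, ?_⟩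
  intro V G χ X Γ e s hcoh he hes hΓ hX ht
  have hΓne : Γ.Nonempty := Finset.card_pos.1 (by rw [hΓ]; simp only [a, b]; omega)
  by_contra hno
  have hM0 : ∃ x, ∃ i ∈ Γ, x ∈ X i := by
    obtain ⟨i, hi⟩ := hΓne
    have h1 : 0 < (X i).card := lt_of_lt_of_le (Nat.mul_pos (by omega) (by omega)) (hX i hi)
    obtain ⟨x, hx⟩ := Finset.card_pos.1 h1
    exact ⟨x, i, hi, hx⟩
  obtain ⟨x₀, i₀, hi₀, hx₀⟩ := hM0
  have hR0 : Rainbow χ X Γ {x₀} := by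
    refine ⟨?_, by simp⟩
    intro x hx
    rw [Finset.mem_singleton.1 hx, hcoh.color i₀ hi₀ x₀ hx₀]
    exact ⟨hi₀, hx₀⟩
  have hU0 : MaxRooted G χ X Γ 0 := ⟨{x₀}, x₀, hR0, rfl, by simp⟩
  have hD0 : MinRooted G χ X Γ 0 := ⟨{x₀}, x₀, hR0, rfl, by simp⟩
  have hUn : ¬ MaxRooted G χ X Γ n := fun ⟨S, r, h1, h2, _⟩ =>
    hno (hasRainbowTree_of_isBinomial h1 h2 p hp)
  have hDn : ¬ MinRooted G χ X Γ n := fun ⟨S, r, h1, h2, _⟩ =>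
    hno (hasRainbowTree_of_isBinomial h1 h2 p hp)
  have hlast : ∀ P : ℕ → Prop, P 0 → ¬ P n → ∃ k, k < n ∧ P k ∧ ¬ P (k + 1) := by
    intro P h0 hn
    by_contra hcon
    push Not at hcon
    have : ∀ k, k ≤ n → P k := by
      intro k
      induction k with
      | zero => exact fun _ => h0
      | succ k ih => exact fun hk => hcon k (by omega) (ih (by omega))
    exact hn (this n le_rfl)
  obtain ⟨k, hkn, hk, hk'⟩ := hlast _ hU0 hUn
  obtain ⟨l, hln, hl, hl'⟩ := hlast _ hD0 hDn
  obtain ⟨A, J, I, hAΓ, hAlt, hJA, hIA, hJI, hJc, hIc, hAd⟩ := exists_regions a b hΓ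
  set JJ := Finset.univ.biUnion J with hJJ
  set II := Finset.univ.biUnion I with hII
  have hJJc : JJ.card = 3 * a := by
    rw [hJJ, Finset.card_biUnion]
    · simp [hJc]
    · exact fun r _ t _ hrt => (hAd r t hrt).mono (hJA r) (hJA t)
  have hIIc : II.card = 3 * b := by
    rw [hII, Finset.card_biUnion]
    · simp [hIc]
    · exact fun r _ t _ hrt => (hAd r t hrt).mono (hIA r) (hIA t)
  have hJJm : ∀ i ∈ JJ, ∃ r, i ∈ A r := by
    intro i hi
    obtain ⟨r, -, hr⟩ := Finset.mem_biUnion.1 hi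
    exact ⟨r, hJA r hr⟩
  have hIIm : ∀ i ∈ II, ∃ r, i ∈ A r := by
    intro i hi
    obtain ⟨r, -, hr⟩ := Finset.mem_biUnion.1 hi
    exact ⟨r, hIA r hr⟩
  have hJJΓ : JJ ⊆ Γ := fun i hi => by obtain ⟨r, hr⟩ := hJJm i hi; exact hAΓ r hr
  have hIIΓ : II ⊆ Γ := fun i hi => by obtain ⟨r, hr⟩ := hIIm i hi; exact hAΓ r hr
  have hJJII : Disjoint JJ II := by
    rw [hJJ, hII, Finset.disjoint_biUnion_left]
    intro r _
    rw [Finset.disjoint_biUnion_right]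
    exact fun t _ => hJI r t
  have hkind : ∀ i j, ∃ c r, i ∈ JJ → j ∈ II → (c = k ∨ c = l) ∧ Placeable G χ X Γ c i (A r) ∧
      Placeable G χ X Γ c j (A r) ∧ ∀ S r₁ r₂, Rainbow χ X Γ S → IsBinomial G (c + 1) S r₁ →
        IsBinomial G (c + 1) S r₂ →
        χ r₁ = i → χ r₂ = j → ¬ ∀ x ∈ S, x ≠ r₁ → x ≠ r₂ → χ x ∈ A r := by
    intro i j
    by_cases hij : i ∈ JJ ∧ j ∈ II
    · obtain ⟨c, r, h⟩ := exists_kind hk hk' hl hl' hAlt (hJJm i hij.1) (hIIm j hij.2)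
      exact ⟨c, r, fun _ _ => h⟩
    · exact ⟨0, 0, fun h1 h2 => absurd ⟨h1, h2⟩ hij⟩
  choose c r hkind using hkind
  have hcn : ∀ i ∈ JJ, ∀ j ∈ II, 2 ^ c i j ≤ τ := by
    intro i hi j hj
    refine Nat.pow_le_pow_right (by norm_num) ?_
    rcases (hkind i j hi hj).1 with h | h <;> omega
  let Q₁ : ℕ → ℕ → Finset V → V → Prop := fun i j S x => IsBinomial G (c i j) S x ∧
    Rainbow χ X Γ S ∧ χ x = i ∧ ∀ y ∈ S, y ≠ x → χ y ∈ J (r i j)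
  let Q₂ : ℕ → ℕ → Finset V → V → Prop := fun i j S x => IsBinomial G (c i j) S x ∧
    Rainbow χ X Γ S ∧ χ x = j ∧ ∀ y ∈ S, y ≠ x → χ y ∈ I (r i j)
  have hsetup : RunSetup G χ X Γ JJ II Q₁ Q₂ τ s K C₀ e := by
    refine ⟨hcoh, hJJΓ, hIIΓ, hJJII, ?_, ?_, he, hes, by simp only [K]; omega, ?_, ?_, ?_⟩
    · exact Finset.card_pos.1 (by rw [hJJc]; simp only [a]; omega)
    · exact Finset.card_pos.1 (by rw [hIIc]; simp only [b]; omega)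
    · rw [hJJc, hIIc]; exact hX
    · intro i hi j hj Lt hLt hLtc B hB hBs X' hX'
      obtain ⟨-, hpl, -, -⟩ := hkind i j hi hj
      have hsub : J (r i j) ∩ Lt ⊆ A (r i j) := Finset.inter_subset_left.trans (hJA _)
      have hcard : τ ≤ (J (r i j) ∩ Lt).card := by
        have h1 : J (r i j) \ Lt ⊆ JJ \ Lt :=
          Finset.sdiff_subset_sdiff (Finset.subset_biUnion_of_mem J (Finset.mem_univ _)) subset_rfl
        have h2 := (Finset.card_le_card h1).trans hLtc
        rw [hIIc] at h2
        have h3 := Finset.card_inter_add_card_sdiff (J (r i j)) Lt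
        rw [hJc] at h3
        have h4 : τ * (3 * b) = 3 * (τ * τ) := by simp only [b]; ring
        simp only [a] at h3
        omega
      have hpl' : Placeable G χ X Γ (c i j) i (J (r i j) ∩ Lt) := hpl.imp
        (fun h => ⟨h.1, fun u hu => h.2 u (hsub hu)⟩) (fun h => ⟨h.1, fun u hu => h.2 u (hsub hu)⟩)
      obtain ⟨S, x, h1, h2, h3, h4, h5⟩ := hpl'.exists_tile hcoh.color ht (hJJΓ hi)
        (hsub.trans (hAΓ _)) (hcn i hi j hj) (by have := hcn i hi j hj; omega) hB hBs
        (X' := X') (fun u hu => hX' u (Finset.mem_inter.1 hu).2)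
      refine ⟨S, x, ⟨h1, h2, h4, fun y hy hyx => (Finset.mem_inter.1 (h5 y hy hyx).1).1⟩, h3, ?_,
        h1.root_mem, fun y hy hyx => ⟨χ y, (Finset.mem_inter.1 (h5 y hy hyx).1).2,
          (h5 y hy hyx).2⟩⟩
      rw [h1.card_eq]
      exact Nat.mul_le_mul_left _ (hcn i hi j hj)
    · intro i hi j hj B hB hBs X' hX'
      obtain ⟨-, -, hpl, -⟩ := hkind i j hi hj
      have hsub : I (r i j) ⊆ A (r i j) := hIA _
      have hsub' : I (r i j) ⊆ II := Finset.subset_biUnion_of_mem I (Finset.mem_univ _)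
      have hpl' : Placeable G χ X Γ (c i j) j (I (r i j)) := hpl.imp
        (fun h => ⟨h.1, fun u hu => h.2 u (hsub hu)⟩) (fun h => ⟨h.1, fun u hu => h.2 u (hsub hu)⟩)
      obtain ⟨S, x, h1, h2, h3, h4, h5⟩ := hpl'.exists_tile hcoh.color ht (hIIΓ hj)
        (hsub.trans (hAΓ _)) (hcn i hi j hj)
        (by have := hcn i hi j hj; rw [hIc]; simp only [b]; omega) hB hBs
        (X' := X') (fun u hu => hX' u (hsub' hu))
      exact ⟨S, x, ⟨h1, h2, h4, fun y hy hyx => (h5 y hy hyx).1⟩, h3,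
        fun y hy hyx => ⟨χ y, hsub' (h5 y hy hyx).1, (h5 y hy hyx).2⟩⟩
  rcases hsetup.run with hg | ⟨i, hi, j, hj, S₁, r₁, S₂, r₂, hQ₁, hQ₂, hadj⟩
  · refine hno (hg.hasRainbowTree hcoh ht (he.trans hes) hes le_rfl ?_ hΓne p hp n hnτ)
    intro i hi
    refine le_trans (Nat.mul_le_mul_right _ ?_) (hX i hi)
    rw [hIIc]
    omega
  · obtain ⟨hB₁, hR₁, hc₁, hx₁⟩ := hQ₁
    obtain ⟨hB₂, hR₂, hc₂, hx₂⟩ := hQ₂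
    obtain ⟨-, hpi, hpj, hnojoin⟩ := hkind i j hi hj
    have hiA : i ∉ A (r i j) := by
      intro h
      rcases hpi with ⟨-, h1⟩ | ⟨-, h1⟩ <;> exact lt_irrefl _ (h1 i h)
    have hjA : j ∉ A (r i j) := by
      intro h
      rcases hpj with ⟨-, h1⟩ | ⟨-, h1⟩ <;> exact lt_irrefl _ (h1 j h)
    have hχ : ∀ x ∈ S₁, ∀ y ∈ S₂, χ x ≠ χ y := by
      intro x hx y hy hxy
      by_cases e1 : x = r₁
      · by_cases e2 : y = r₂
        · rw [e1, e2, hc₁, hc₂] at hxy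
          exact Finset.disjoint_left.1 hJJII hi (hxy ▸ hj)
        · rw [e1, hc₁] at hxy
          have h1 := hIA _ (hx₂ y hy e2)
          rw [← hxy] at h1
          exact hiA h1
      · by_cases e2 : y = r₂
        · rw [e2, hc₂] at hxy
          have h1 := hJA _ (hx₁ x hx e1)
          rw [hxy] at h1
          exact hjA h1
        · exact Finset.disjoint_left.1 (hJI _ _) (hx₁ x hx e1) (hxy ▸ hx₂ y hy e2)
    have hdisj : Disjoint S₁ S₂ := by
      rw [Finset.disjoint_left]
      exact fun x hx hx' => hχ x hx x hx' rfl
    obtain ⟨hj₁, hj₂⟩ := hB₁.join hB₂ hdisj hadj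
    refine hnojoin (S₁ ∪ S₂) r₁ r₂ ⟨?_, ?_⟩ hj₁ hj₂ hc₁ hc₂ ?_
    · intro x hx
      rcases Finset.mem_union.1 hx with h | h
      · exact hR₁.1 x h
      · exact hR₂.1 x h
    · intro x hx y hy hxy
      rcases Finset.mem_union.1 (Finset.mem_coe.1 hx) with h | h <;>
        rcases Finset.mem_union.1 (Finset.mem_coe.1 hy) with h' | h'
      · exact hR₁.2 h h' hxy
      · exact absurd hxy (hχ x h y h')
      · exact absurd hxy.symm (hχ y h' x h)
      · exact hR₂.2 h h' hxy
    · intro x hx h₁ h₂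
      rcases Finset.mem_union.1 hx with h | h
      · exact hJA _ (hx₁ x h h₁)
      · exact hIA _ (hx₂ x h h₂)

/-- Many large blocks with small degrees between them and no large anticomplete pairs contain a
rainbow induced copy of any given forest. -/
theorem exists_rainbow_forest {W : Type*} [Fintype W] (F : SimpleGraph W) (hF : F.IsAcyclic) :
    ∃ N C, ∀ {V : Type*} (G : SimpleGraph V) (χ : V → ℕ) (X : ℕ → Finset V) (e : ℕ), 1 ≤ e →
      Coherent G χ X (Finset.range N) e → (∀ i < N, C * e ≤ (X i).card) →
      ∃ f : W → V, (∀ w, χ (f w) < N ∧ f w ∈ X (χ (f w))) ∧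
        (Function.Injective fun w => χ (f w)) ∧ ∀ u v, G.Adj (f u) (f v) ↔ F.Adj u v := by
  obtain ⟨p, n, g, hp, hgn, hginj, hgadj⟩ := forest_embeds_tree F hF
  obtain ⟨q, C, hC⟩ := hasRainbowTree_of_coherent p hp n
  obtain ⟨N, C', hN⟩ := exists_transfer (2 ^ n) q C
  refine ⟨N, C', ?_⟩
  intro V G χ X e he hcoh hX
  obtain ⟨Γ, hΓN, hΓc, X', s, hs, hX', ht⟩ := hN G χ X e hX
  have hcoh' : Coherent G χ X' Γ e := by
    refine ⟨?_, ?_, ?_⟩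
    · exact fun j hj x hx => hcoh.color j (Finset.mem_range.2 (hΓN j hj)) x ((hX' j hj).1 hx)
    · intro i hi x hx j hj
      exact (card_nbs_mono G (hX' j hj).1 x).trans (hcoh.degree i (Finset.mem_range.2 (hΓN i hi)) x
        ((hX' i hi).1 hx) j (Finset.mem_range.2 (hΓN j hj)))
    · intro i hi j hj hij A hA B hB
      exact hcoh.edge i (Finset.mem_range.2 (hΓN i hi)) j (Finset.mem_range.2 (hΓN j hj)) hij A
        (hA.trans (hX' i hi).1) B (hB.trans (hX' j hj).1)
  obtain ⟨f, h1, h2, h3⟩ := hC G χ X' Γ e s hcoh' he hs hΓc (fun i hi => (hX' i hi).2) ht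
  refine ⟨fun w => f (g w), ?_, ?_, ?_⟩
  · intro w
    obtain ⟨h4, h5⟩ := h1 (g w) (hgn w)
    exact ⟨hΓN _ h4, (hX' _ h4).1 h5⟩
  · intro u v huv
    exact hginj (h2 _ (hgn u) _ (hgn v) huv)
  · intro u v
    rw [hgadj]
    exact h3 _ (hgn u) _ (hgn v)

end ForestLemma

section Hole

variable {V : Type*} {G : SimpleGraph V}

/-- An induced path of length `n`, given by the sequence of its vertices. -/
def IsInducedPath (G : SimpleGraph V) (n : ℕ) (f : ℕ → V) : Prop :=
  (∀ i ≤ n, ∀ j ≤ n, f i = f j → i = j) ∧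
    ∀ i ≤ n, ∀ j ≤ n, (G.Adj (f i) (f j) ↔ i + 1 = j ∨ j + 1 = i)

/-- Two induced paths with the same ends and no other interaction form an induced cycle. -/
lemma IsInducedPath.cycleGraph_embedding {L d : ℕ} {f g : ℕ → V} (hf : IsInducedPath G L f)
    (hg : IsInducedPath G d g) (hL : 2 ≤ L) (hd : 2 ≤ d) (h0 : f 0 = g 0) (h1 : f L = g d)
    (hfg : ∀ i, 0 < i → i < L → ∀ j, 0 < j → j < d → f i ≠ g j ∧ ¬ G.Adj (f i) (g j)) :
    Nonempty (cycleGraph (L + d) ↪g G) := by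
  let c : ℕ → V := fun i => if i ≤ L then f i else g (L + d - i)
  have hc1 : ∀ i, i ≤ L → c i = f i := fun i hi => by simp [c, hi]
  have hc2 : ∀ i, L ≤ i → c i = g (L + d - i) := by
    intro i hi
    rcases hi.eq_or_lt with h | h
    · subst h; simp [c, h1]
    · simp [c, not_le.2 h]
  have hc0 : c 0 = g 0 := by rw [hc1 0 (by omega), h0]
  have hlt : ∀ i j, i < j → j < L + d →
      c i ≠ c j ∧ (G.Adj (c i) (c j) ↔ j = i + 1 ∨ (i = 0 ∧ j + 1 = L + d)) := by
    intro i j hij hj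
    by_cases hjL : j ≤ L
    · rw [hc1 i (by omega), hc1 j hjL]
      refine ⟨fun h => ?_, ?_⟩
      · have := hf.1 i (by omega) j hjL h; omega
      · rw [hf.2 i (by omega) j hjL]; omega
    by_cases hiL : L ≤ i
    · rw [hc2 i hiL, hc2 j (by omega)]
      refine ⟨fun h => ?_, ?_⟩
      · have := hg.1 _ (by omega) _ (by omega) h; omega
      · rw [hg.2 _ (by omega) _ (by omega)]; omega
    by_cases hi0 : i = 0
    · subst hi0
      rw [hc0, hc2 j (by omega)]
      refine ⟨fun h => ?_, ?_⟩
      · have := hg.1 _ (by omega) _ (by omega) h; omega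
      · rw [hg.2 _ (by omega) _ (by omega)]; omega
    · rw [hc1 i (by omega), hc2 j (by omega)]
      obtain ⟨h2, h3⟩ := hfg i (by omega) (by omega) (L + d - j) (by omega) (by omega)
      refine ⟨h2, ?_⟩
      simp only [h3, false_iff]
      omega
  have hadj : ∀ u v : Fin (L + d), u.val < v.val →
      ((cycleGraph (L + d)).Adj u v ↔ v.val = u.val + 1 ∨ (u.val = 0 ∧ v.val + 1 = L + d)) := by
    intro u v huv
    rw [cycleGraph_adj']
    have hu := u.isLt
    have hv := v.isLt
    have e1 : (u - v).val = L + d + u.val - v.val := Fin.coe_sub_iff_lt.2 huv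
    have e2 : (v - u).val = v.val - u.val := Fin.sub_val_of_le (by simpa using huv.le)
    rw [e1, e2]
    omega
  refine ⟨⟨⟨fun i => c i.val, ?_⟩, ?_⟩⟩
  · intro u v huv
    simp only at huv
    rcases lt_trichotomy u.val v.val with h | h | h
    · exact absurd huv (hlt _ _ h v.isLt).1
    · exact Fin.ext h
    · exact absurd huv.symm (hlt _ _ h u.isLt).1
  · intro u v
    change G.Adj (c u.val) (c v.val) ↔ _
    rcases lt_trichotomy u.val v.val with h | h | h
    · rw [(hlt _ _ h v.isLt).2, hadj u v h]
    · obtain rfl := Fin.ext h; simp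
    · rw [G.adj_comm, (cycleGraph _).adj_comm, (hlt _ _ h u.isLt).2, hadj v u h]

/-- Connectedness of a finite vertex set, in terms of cuts. -/
def ConnSet (G : SimpleGraph V) (A : Finset V) : Prop :=
  ∀ B ⊆ A, B.Nonempty → B ≠ A → ∃ x ∈ B, ∃ y ∈ A, y ∉ B ∧ G.Adj x y

lemma connSet_singleton (a : V) : ConnSet G {a} := by
  intro B hB hne hBA
  rcases Finset.subset_singleton_iff.1 hB with h | h
  · simp [h] at hne
  · exact absurd h hBA

lemma ConnSet.union [DecidableEq V] {A B : Finset V} (hA : ConnSet G A) (hB : ConnSet G B) {a b : V}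
    (ha : a ∈ A) (hb : b ∈ B) (hab : G.Adj a b) : ConnSet G (A ∪ B) := by
  intro S hS hne hSAB
  by_contra hcon
  push Not at hcon
  have key : ∀ C : Finset V, ConnSet G C → C ⊆ A ∪ B → (∃ x ∈ C, x ∈ S) → C ⊆ S := by
    intro C hC hCAB ⟨x, hx, hxS⟩
    by_contra hCS
    obtain ⟨x', hx', y, hy, hyS, hadj⟩ := hC (C ∩ S) Finset.inter_subset_left
      ⟨x, Finset.mem_inter.2 ⟨hx, hxS⟩⟩ (fun h => hCS (Finset.inter_eq_left.1 h))
    exact hcon x' (Finset.mem_inter.1 hx').2 y (hCAB hy)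
      (fun h => hyS (Finset.mem_inter.2 ⟨hy, h⟩)) hadj
  have hkA := key A hA Finset.subset_union_left
  have hkB := key B hB Finset.subset_union_right
  have haS : a ∈ S ↔ b ∈ S := by
    constructor
    · intro h
      by_contra hbS
      exact hcon a h b (Finset.mem_union_right _ hb) hbS hab
    · intro h
      by_contra haS
      exact hcon b h a (Finset.mem_union_left _ ha) haS hab.symm
  apply hSAB
  obtain ⟨x, hx⟩ := hne
  have haA : a ∈ S := by
    rcases Finset.mem_union.1 (hS hx) with h | h
    · exact hkA ⟨x, h, hx⟩ ha
    · exact haS.2 (hkB ⟨x, h, hx⟩ hb)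
  exact Finset.Subset.antisymm hS
    (Finset.union_subset (hkA ⟨a, ha, haA⟩) (hkB ⟨b, hb, haS.1 haA⟩))

lemma ConnSet.insert_vertex [DecidableEq V] {A : Finset V} (hA : ConnSet G A) {a b : V} (ha : a ∈ A)
    (hab : G.Adj a b) : ConnSet G (insert b A) := by
  have := hA.union (connSet_singleton (G := G) b) ha (Finset.mem_singleton_self b) hab
  rwa [Finset.union_comm] at this

/-- Two vertices of a connected set are joined by an induced path inside it. -/
lemma ConnSet.exists_inducedPath {D : Finset V} (hD : ConnSet G D) {u v : V} (hu : u ∈ D)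
    (hv : v ∈ D) : ∃ d f, IsInducedPath G d f ∧ f 0 = u ∧ f d = v ∧ ∀ i, f i ∈ D := by
  classical
  let H := G.induce (D : Set V)
  let u' : (D : Set V) := ⟨u, hu⟩
  let v' : (D : Set V) := ⟨v, hv⟩
  have hreach : H.Reachable u' v' := by
    by_contra hcon
    let B := D.filter fun x => ∃ h : x ∈ D, H.Reachable u' ⟨x, h⟩
    obtain ⟨x, hx, y, hy, hyB, hxy⟩ := hD B (Finset.filter_subset _ _)
      ⟨u, Finset.mem_filter.2 ⟨hu, hu, Reachable.refl _⟩⟩ (by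
        intro h
        rw [← h] at hv
        obtain ⟨-, h2, h3⟩ := Finset.mem_filter.1 hv
        exact hcon h3)
    obtain ⟨-, h2, h3⟩ := Finset.mem_filter.1 hx
    apply hyB
    refine Finset.mem_filter.2 ⟨hy, hy, h3.trans ?_⟩
    apply SimpleGraph.Adj.reachable
    exact hxy
  obtain ⟨p, hp⟩ := hreach.exists_walk_length_eq_dist
  have hdist : ∀ i ≤ p.length, H.dist u' (p.getVert i) = i := by
    intro i hi
    have h1 := H.dist_le (p.take i)
    have h2 := H.dist_le (p.drop i)
    have h3 : H.dist u' v' ≤ H.dist u' (p.getVert i) + H.dist (p.getVert i) v' := by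
      have hr : H.Reachable u' (p.getVert i) := ⟨p.take i⟩
      obtain ⟨q, hq⟩ := hr.exists_walk_length_eq_dist
      have hr' : H.Reachable (p.getVert i) v' := ⟨p.drop i⟩
      obtain ⟨q', hq'⟩ := hr'.exists_walk_length_eq_dist
      have := H.dist_le (q.append q')
      rw [Walk.length_append] at this
      omega
    rw [Walk.take_length] at h1
    rw [Walk.drop_length] at h2
    omega
  have hstep : ∀ i ≤ p.length, ∀ j ≤ p.length, H.Adj (p.getVert i) (p.getVert j) → j ≤ i + 1 := by
    intro i hi j hj hij
    have hr : H.Reachable u' (p.getVert i) := ⟨p.take i⟩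
    obtain ⟨q, hq⟩ := hr.exists_walk_length_eq_dist
    have := H.dist_le (q.concat hij)
    rw [Walk.length_concat, hq, hdist i hi, hdist j hj] at this
    exact this
  refine ⟨p.length, fun i => (p.getVert i).1, ⟨?_, ?_⟩, by simp [u'], by simp [v'],
    fun i => (p.getVert i).2⟩
  · intro i hi j hj hij
    have := Subtype.ext hij
    rw [← hdist i hi, ← hdist j hj, this]
  · intro i hi j hj
    constructor
    · intro hadj
      have h1 := hstep i hi j hj hadj
      have h2 := hstep j hj i hi hadj.symm
      have h3 : i ≠ j := by
        rintro rfl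
        exact hadj.ne rfl
      omega
    · rintro (rfl | rfl)
      · exact p.adj_getVert_succ (by omega)
      · exact (p.adj_getVert_succ (i := j) (by omega)).symm

/-- A vertex set in which small sets have few neighbours but any two large sets are joined by an
edge. -/
structure Linked (G : SimpleGraph V) (X : Finset V) (e : ℕ) : Prop where
  degree : ∀ x ∈ X, (nbs G X x).card ≤ e
  edge : ∀ A ⊆ X, ∀ B ⊆ X, Disjoint A B → e ≤ A.card → e ≤ B.card → ∃ a ∈ A, ∃ b ∈ B, G.Adj a b

lemma Linked.exists_component {X : Finset V} {e : ℕ} (h : Linked G X e) (he : 1 ≤ e)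
    {Z : Finset V} (hZ : Z ⊆ X) (hZc : 3 * e ≤ Z.card) :
    ∃ A ⊆ Z, ConnSet G A ∧ Z.card < A.card + e ∧ ∀ x ∈ A, ∀ y ∈ Z, y ∉ A → ¬ G.Adj x y := by
  classical
  let cand := Z.powerset.filter fun A => Z.card < A.card + e ∧
    ∀ x ∈ A, ∀ y ∈ Z, y ∉ A → ¬ G.Adj x y
  have hne : cand.Nonempty := by
    refine ⟨Z, Finset.mem_filter.2 ⟨by simp, by omega, fun x _ y hy hyZ => absurd hy hyZ⟩⟩
  obtain ⟨A, hA, hmin⟩ := Finset.exists_min_image cand Finset.card hne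
  simp only [cand, Finset.mem_filter, Finset.mem_powerset] at hA hmin
  obtain ⟨hAZ, hAc, hAcl⟩ := hA
  refine ⟨A, hAZ, ?_, hAc, hAcl⟩
  intro B hB hBne hBA
  by_contra hcon
  push Not at hcon
  have hclosed : ∀ C ⊆ A, C ≠ A → (∀ x ∈ C, ∀ y ∈ Z, y ∉ C → ¬ G.Adj x y) → C.card < e := by
    intro C hC hCA hcl
    by_contra hCe
    have hlt : C.card < A.card := Finset.card_lt_card (lt_of_le_of_ne hC hCA)
    by_cases hbig : Z.card < C.card + e
    · have := hmin C ⟨hC.trans hAZ, hbig, hcl⟩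
      omega
    · have h1 := Finset.card_sdiff_of_subset (hC.trans hAZ)
      obtain ⟨a, ha, b, hb, hab⟩ := h.edge C ((hC.trans hAZ).trans hZ) (Z \ C)
        (Finset.sdiff_subset.trans hZ) Finset.disjoint_sdiff (by omega) (by omega)
      exact hcl a ha b (Finset.mem_sdiff.1 hb).1 (Finset.mem_sdiff.1 hb).2 hab
  have h1 := hclosed B hB hBA (by
    intro x hx y hy hyB hxy
    by_cases hyA : y ∈ A
    · exact hcon x hx y hyA hyB hxy
    · exact hAcl x (hB hx) y hy hyA hxy)
  have h2 := hclosed (A \ B) Finset.sdiff_subset (by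
    obtain ⟨b, hb⟩ := hBne
    intro hh
    have : b ∈ A \ B := by rw [hh]; exact hB hb
    exact (Finset.mem_sdiff.1 this).2 hb) (by
    intro x hx y hy hyB hxy
    obtain ⟨hxA, hxB⟩ := Finset.mem_sdiff.1 hx
    by_cases hyA : y ∈ A
    · have hyB' : y ∈ B := by
        by_contra hh
        exact hyB (Finset.mem_sdiff.2 ⟨hyA, hh⟩)
      exact hcon y hyB' x hxA hxB hxy.symm
    · exact hAcl x hxA y hy hyA hxy)
  have h3 := Finset.card_sdiff_of_subset hB
  omega

end Hole

section LongHole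

variable {V : Type*} {G : SimpleGraph V}

lemma IsInducedPath.update {k : ℕ} {f : ℕ → V} (hf : IsInducedPath G k f) {v : V}
    (hv : ∀ i ≤ k, f i ≠ v) (hadj : ∀ i ≤ k, (G.Adj (f i) v ↔ i = k)) :
    IsInducedPath G (k + 1) (Function.update f (k + 1) v) := by
  have h1 : ∀ i, i ≤ k → Function.update f (k + 1) v i = f i := fun i hi =>
    Function.update_of_ne (by omega) _ _
  have h2 : Function.update f (k + 1) v (k + 1) = v := Function.update_self _ _ _
  constructor
  · intro i hi j hj hij
    rcases Nat.lt_or_ge i (k + 1) with h | h <;> rcases Nat.lt_or_ge j (k + 1) with h' | h'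
    · rw [h1 i (by omega), h1 j (by omega)] at hij
      exact hf.1 i (by omega) j (by omega) hij
    · obtain rfl : j = k + 1 := by omega
      rw [h1 i (by omega), h2] at hij
      exact absurd hij (hv i (by omega))
    · obtain rfl : i = k + 1 := by omega
      rw [h1 j (by omega), h2] at hij
      exact absurd hij.symm (hv j (by omega))
    · omega
  · intro i hi j hj
    rcases Nat.lt_or_ge i (k + 1) with h | h <;> rcases Nat.lt_or_ge j (k + 1) with h' | h'
    · rw [h1 i (by omega), h1 j (by omega)]
      exact hf.2 i (by omega) j (by omega)
    · obtain rfl : j = k + 1 := by omega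
      rw [h1 i (by omega), h2, hadj i (by omega)]
      omega
    · obtain rfl : i = k + 1 := by omega
      rw [h1 j (by omega), h2, G.adj_comm, hadj j (by omega)]
      omega
    · obtain rfl : i = k + 1 := by omega
      obtain rfl : j = k + 1 := by omega
      simp

/-- Gyárfás path argument. -/
lemma Linked.exists_gyarfas_path {X C₀ : Finset V} {e : ℕ} (h : Linked G X e) (he : 1 ≤ e)
    (hC₀ : C₀ ⊆ X) (hconn : ConnSet G C₀) {v₀ : V} (hv₀ : v₀ ∈ X) (hv₀C : v₀ ∉ C₀)
    (hnb : ∃ y ∈ C₀, G.Adj v₀ y) (k : ℕ) : (2 * k + 3) * e ≤ C₀.card →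
    ∃ (f : ℕ → V) (C : Finset V), IsInducedPath G k f ∧ f 0 = v₀ ∧ (∀ i, 0 < i → i ≤ k → f i ∈ C₀) ∧
      C ⊆ C₀ ∧ ConnSet G C ∧ C₀.card ≤ C.card + 2 * k * e ∧ (∀ i ≤ k, f i ∉ C) ∧
      (∃ y ∈ C, G.Adj (f k) y) ∧ ∀ i < k, ∀ y ∈ C, ¬ G.Adj (f i) y := by
  classical
  induction k with
  | zero =>
    intro _
    refine ⟨fun _ => v₀, C₀, ⟨?_, ?_⟩, rfl, ?_, subset_rfl, hconn, by simp, fun _ _ => hv₀C, hnb, ?_⟩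
    · intros; omega
    · intro i hi j hj
      obtain rfl : i = 0 := by omega
      obtain rfl : j = 0 := by omega
      simp
    · intros; omega
    · intros; omega
  | succ k ih =>
    intro hk
    have e1 : (2 * (k + 1) + 3) * e = 2 * k * e + 5 * e := by ring
    have e2 : (2 * k + 3) * e = 2 * k * e + 3 * e := by ring
    have e3 : 2 * (k + 1) * e = 2 * k * e + 2 * e := by ring
    obtain ⟨f, C, hf, hf0, hfC, hCC, hCconn, hCc, hfnC, ⟨y, hy, hfy⟩, hfn⟩ := ih (by omega)
    have hfX : ∀ i ≤ k, f i ∈ X := by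
      intro i hi
      rcases Nat.eq_zero_or_pos i with h0 | h0
      · rw [h0, hf0]; exact hv₀
      · exact hC₀ (hfC i h0 hi)
    have hZc := Finset.le_card_sdiff (nbs G X (f k)) C
    have hdeg := h.degree (f k) (hfX k le_rfl)
    obtain ⟨A, hAZ, hAconn, hAc, hAcl⟩ := h.exists_component he (Z := C \ nbs G X (f k))
      (Finset.sdiff_subset.trans (hCC.trans hC₀)) (by omega)
    have hAC : A ⊆ C := hAZ.trans Finset.sdiff_subset
    have hAne : A.Nonempty := Finset.card_pos.1 (by omega)
    have hAn : ∀ z ∈ A, ¬ G.Adj (f k) z := fun z hz hadj =>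
      (Finset.mem_sdiff.1 (hAZ hz)).2 (mem_nbs.2 ⟨hC₀ (hCC (hAC hz)), hadj⟩)
    obtain ⟨x, hx, v, hv, hvA, hxv⟩ := hCconn A hAC hAne (by
      rintro rfl
      exact hAn y hy hfy)
    have hkv : G.Adj (f k) v := by
      by_contra hcon
      refine hAcl x hx v (Finset.mem_sdiff.2 ⟨hv, fun hh => hcon (mem_nbs.1 hh).2⟩) hvA hxv
    have h1 : ∀ i, i ≤ k → Function.update f (k + 1) v i = f i := fun i hi =>
      Function.update_of_ne (by omega) _ _
    have h2 : Function.update f (k + 1) v (k + 1) = v := Function.update_self _ _ _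
    refine ⟨Function.update f (k + 1) v, A, hf.update ?_ ?_, ?_, ?_, hAC.trans hCC, hAconn, ?_, ?_,
      ⟨x, hx, ?_⟩, ?_⟩
    · exact fun i hi hh => hfnC i hi (hh ▸ hv)
    · intro i hi
      constructor
      · intro hadj
        by_contra hne
        exact hfn i (by omega) v hv hadj
      · rintro rfl; exact hkv
    · rw [h1 0 (by omega), hf0]
    · intro i hi hik
      rcases Nat.lt_or_ge i (k + 1) with hh | hh
      · rw [h1 i (by omega)]; exact hfC i hi (by omega)
      · obtain rfl : i = k + 1 := by omega
        rw [h2]; exact hCC hv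
    · omega
    · intro i hik
      rcases Nat.lt_or_ge i (k + 1) with hh | hh
      · rw [h1 i (by omega)]; exact fun hm => hfnC i (by omega) (hAC hm)
      · obtain rfl : i = k + 1 := by omega
        rw [h2]; exact hvA
    · rw [h2]; exact hxv.symm
    · intro i hi z hz
      rw [h1 i (by omega)]
      rcases Nat.lt_or_ge i k with hh | hh
      · exact hfn i hh z (hAC hz)
      · obtain rfl : i = k := by omega
        exact hAn z hz

open Classical in
/-- A connected set whose closed neighbourhood has prescribed size, up to an error `e`. -/
lemma ConnSet.exists_growth {Y : Finset V} {e t : ℕ} (hY : ConnSet G Y) (he : 1 ≤ e)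
    (hdeg : ∀ x ∈ Y, (nbs G Y x).card ≤ e) (ht : 2 * e ≤ t) (htY : t < Y.card) :
    ∃ A ⊆ Y, A.Nonempty ∧ ConnSet G A ∧ (A ∪ nbrsOf G Y A).card ≤ t ∧
      t < (A ∪ nbrsOf G Y A).card + e + 1 := by
  classical
  let cand := Y.powerset.filter fun A => A.Nonempty ∧ ConnSet G A ∧ (A ∪ nbrsOf G Y A).card ≤ t
  have hsing : ∀ a, nbrsOf G Y {a} = nbs G Y a := by
    intro a
    ext x
    simp [mem_nbrsOf, mem_nbs, G.adj_comm]
  have hne : cand.Nonempty := by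
    obtain ⟨y, hy⟩ : Y.Nonempty := Finset.card_pos.1 (by omega)
    refine ⟨{y}, ?_⟩
    simp only [cand, Finset.mem_filter, Finset.mem_powerset]
    refine ⟨by simpa using hy, by simp, connSet_singleton y, ?_⟩
    have := Finset.card_union_le {y} (nbrsOf G Y {y})
    rw [hsing] at this ⊢
    have := hdeg y hy
    simp at *
    omega
  obtain ⟨A, hA, hmax⟩ := Finset.exists_max_image cand Finset.card hne
  simp only [cand, Finset.mem_filter, Finset.mem_powerset] at hA hmax
  obtain ⟨hAY, hAne, hAconn, hAt⟩ := hA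
  refine ⟨A, hAY, hAne, hAconn, hAt, ?_⟩
  obtain ⟨x, hx, y, hy, hyA, hxy⟩ := hY A hAY hAne (by
    rintro rfl
    have := Finset.card_le_card (Finset.subset_union_left (s₁ := A) (s₂ := nbrsOf G A A))
    omega)
  by_contra hcon
  have hsub : insert y A ∪ nbrsOf G Y (insert y A) ⊆
      insert y ((A ∪ nbrsOf G Y A) ∪ nbs G Y y) := by
    intro z hz
    simp only [Finset.mem_union, Finset.mem_insert, mem_nbrsOf, mem_nbs, exists_eq_or_imp] at hz ⊢
    rw [G.adj_comm y z]
    rcases hz with (h | h) | ⟨h, h1 | h1⟩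
    · exact Or.inl h
    · exact Or.inr (Or.inl (Or.inl h))
    · exact Or.inr (Or.inr ⟨h, h1⟩)
    · exact Or.inr (Or.inl (Or.inr ⟨h, h1⟩))
  have h1 := Finset.card_le_card hsub
  have h2 := Finset.card_insert_le y ((A ∪ nbrsOf G Y A) ∪ nbs G Y y)
  have h3 := Finset.card_union_le (A ∪ nbrsOf G Y A) (nbs G Y y)
  have h4 := hdeg y hy
  have h5 := hmax (insert y A) ⟨Finset.insert_subset hy hAY, by simp, hAconn.insert_vertex hx hxy, by omega⟩
  rw [Finset.card_insert_of_notMem hyA] at h5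
  omega

/-- A large set with small degrees and no large anticomplete pairs contains a long induced
cycle. -/
theorem Linked.exists_long_hole {X : Finset V} {e : ℕ} (h : Linked G X e) (he : 1 ≤ e) {L : ℕ}
    (hL : 2 ≤ L) (hX : (3 * L + 20) * e ≤ X.card) : ∃ m, L ≤ m ∧ Nonempty (cycleGraph m ↪g G) := by
  classical
  have e1 : (3 * L + 20) * e = 3 * (L * e) + 20 * e := by ring
  have hLe : 2 * e ≤ L * e := Nat.mul_le_mul_right _ hL
  obtain ⟨Y, hYX, hYconn, hYc, -⟩ := h.exists_component he (Z := X) subset_rfl (by omega)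
  have hdegY : ∀ x ∈ Y, (nbs G Y x).card ≤ e := fun x hx =>
    (card_nbs_mono G hYX x).trans (h.degree x (hYX hx))
  obtain ⟨A, hAY, hAne, hAconn, hAt, hAt'⟩ := hYconn.exists_growth (e := e) (t := L * e + 7 * e) he
    hdegY (by omega) (by omega)
  set N := A ∪ nbrsOf G Y A with hN
  set B := nbrsOf G Y A \ A with hB
  set R := Y \ N with hR
  have hNY : N ⊆ Y := Finset.union_subset hAY fun x hx => (mem_nbrsOf.1 hx).1
  have hRc : R.card = Y.card - N.card := Finset.card_sdiff_of_subset hNY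
  have hAR : ∀ a ∈ A, ∀ r ∈ R, ¬ G.Adj a r := by
    intro a ha r hr har
    obtain ⟨h1, h2⟩ := Finset.mem_sdiff.1 hr
    exact h2 (Finset.mem_union_right _ (mem_nbrsOf.2 ⟨h1, a, ha, har.symm⟩))
  have hAe : A.card < e := by
    by_contra hcon
    obtain ⟨a, ha, r, hr, har⟩ := h.edge A (hAY.trans hYX) R (Finset.sdiff_subset.trans hYX)
      (Finset.disjoint_sdiff.mono_left Finset.subset_union_left) (by omega) (by omega)
    exact hAR a ha r hr har
  have hNB : N.card = A.card + B.card := by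
    rw [hN, hB, ← Finset.union_sdiff_self_eq_union, Finset.card_union_of_disjoint
      Finset.disjoint_sdiff]
  obtain ⟨C₀, hC₀R, hC₀conn, hC₀c, -⟩ := h.exists_component he (Z := R)
    (Finset.sdiff_subset.trans hYX) (by omega)
  have hRX : R ⊆ X := Finset.sdiff_subset.trans hYX
  have hBX : B ⊆ X := fun x hx => hYX (mem_nbrsOf.1 (Finset.mem_sdiff.1 hx).1).1
  have hBR : Disjoint B R := by
    rw [Finset.disjoint_left]
    intro x hx hx'
    exact (Finset.mem_sdiff.1 hx').2 (Finset.mem_union_right _ (Finset.mem_sdiff.1 hx).1)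
  obtain ⟨v₀, hv₀, y₀, hy₀, hv₀y₀⟩ := h.edge B hBX C₀ (hC₀R.trans hRX) (hBR.mono_right hC₀R)
    (by omega) (by omega)
  have e2 : (2 * L + 3) * e = 2 * (L * e) + 3 * e := by ring
  have e3 : 2 * L * e = 2 * (L * e) := by ring
  obtain ⟨f, C, hf, hf0, hfC, hCC, hCconn, hCc, hfnC, ⟨y, hy, hfy⟩, hfn⟩ :=
    h.exists_gyarfas_path he (hC₀R.trans hRX) hC₀conn (hBX hv₀)
      (fun hh => Finset.disjoint_left.1 hBR hv₀ (hC₀R hh)) ⟨y₀, hy₀, hv₀y₀⟩ L (by omega)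
  have hfX : ∀ i ≤ L, f i ∈ X := by
    intro i hi
    rcases Nat.eq_zero_or_pos i with h0 | h0
    · rw [h0, hf0]; exact hBX hv₀
    · exact hRX (hC₀R (hfC i h0 hi))
  -- a second vertex of `B` leading from `A` to the last component
  let bad := insert v₀ ((Finset.range (L + 1)).biUnion fun i => nbs G X (f i))
  have hbad : bad.card ≤ (L + 1) * e + 1 := by
    refine (Finset.card_insert_le _ _).trans (Nat.add_le_add_right ?_ 1)
    refine Finset.card_biUnion_le.trans ?_
    calc _ ≤ ∑ _i ∈ Finset.range (L + 1), e := Finset.sum_le_sum fun i hi =>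
          h.degree _ (hfX i (by simpa [Nat.lt_succ_iff] using hi))
      _ = _ := by simp
  have e4 : (L + 1) * e = L * e + e := by ring
  have hBbad := Finset.le_card_sdiff bad B
  obtain ⟨b, hb, z, hz, hbz⟩ := h.edge (B \ bad) (Finset.sdiff_subset.trans hBX) C
    ((hCC.trans hC₀R).trans hRX)
    ((hBR.mono_right (hCC.trans hC₀R)).mono_left Finset.sdiff_subset) (by omega) (by omega)
  obtain ⟨hbB, hbbad⟩ := Finset.mem_sdiff.1 hb
  have hbv₀ : b ≠ v₀ := fun hh => hbbad (Finset.mem_insert.2 (Or.inl hh))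
  have hbf : ∀ i ≤ L, ¬ G.Adj (f i) b := by
    intro i hi hadj
    refine hbbad (Finset.mem_insert_of_mem (Finset.mem_biUnion.2 ⟨i, ?_, mem_nbs.2 ⟨hBX hbB, hadj⟩⟩))
    simpa [Nat.lt_succ_iff] using hi
  obtain ⟨hbN, hbA⟩ := Finset.mem_sdiff.1 hbB
  obtain ⟨-, a₁, ha₁, hba₁⟩ := mem_nbrsOf.1 hbN
  obtain ⟨-, a₂, ha₂, hva₂⟩ := mem_nbrsOf.1 (Finset.mem_sdiff.1 hv₀).1
  -- connect the ends of the path through `A`, `b` and `C`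
  set D := insert b A ∪ C with hD
  have hDconn : ConnSet G D := (hAconn.insert_vertex ha₁ hba₁.symm).union hCconn
    (Finset.mem_insert_self _ _) hz hbz
  have hAD : ∀ a ∈ A, a ∈ D := fun a ha =>
    Finset.mem_union_left _ (Finset.mem_insert_of_mem ha)
  have hCD : ∀ c ∈ C, c ∈ D := fun c hc => Finset.mem_union_right _ hc
  have hE : ConnSet G (insert (f L) (insert v₀ D)) := by
    refine ConnSet.insert_vertex (hDconn.insert_vertex (hAD a₂ ha₂) hva₂.symm)
      (Finset.mem_insert_of_mem (hCD y hy)) hfy.symm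
  obtain ⟨d, g, hg, hg0, hgd, hgE⟩ := hE.exists_inducedPath (u := v₀) (v := f L)
    (by simp) (by simp)
  have hinner : ∀ i, 0 < i → i < L → (f i ∉ D ∧ ∀ x ∈ D, ¬ G.Adj (f i) x) := by
    intro i hi hiL
    have hfR := hC₀R (hfC i hi hiL.le)
    constructor
    · intro hm
      rcases Finset.mem_union.1 hm with hm | hm
      · rcases Finset.mem_insert.1 hm with hm | hm
        · exact Finset.disjoint_left.1 hBR hbB (hm ▸ hfR)
        · exact (Finset.mem_sdiff.1 hfR).2 (Finset.mem_union_left _ hm)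
      · exact hfnC i hiL.le hm
    · intro x hx
      rcases Finset.mem_union.1 hx with hm | hm
      · rcases Finset.mem_insert.1 hm with hm | hm
        · rw [hm]; exact hbf i hiL.le
        · exact fun hh => hAR x hm _ hfR hh.symm
      · exact hfn i hiL x hm
  have hne : v₀ ≠ f L := by
    rw [← hf0]
    intro hh
    have := hf.1 0 (by omega) L le_rfl hh
    omega
  have hnadj : ¬ G.Adj v₀ (f L) := by
    rw [← hf0, hf.2 0 (by omega) L le_rfl]
    omega
  have hd : 2 ≤ d := by
    by_contra hcon
    rcases Nat.eq_zero_or_pos d with h0 | h0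
    · rw [h0, hg0] at hgd; exact hne hgd
    · obtain rfl : d = 1 := by omega
      apply hnadj
      rw [← hg0, ← hgd, hg.2 0 (by omega) 1 le_rfl]
      omega
  have hgD : ∀ j, 0 < j → j < d → g j ∈ D := by
    intro j hj hjd
    rcases Finset.mem_insert.1 (hgE j) with hm | hm
    · rw [← hgd] at hm
      have := hg.1 j hjd.le d le_rfl hm
      omega
    · rcases Finset.mem_insert.1 hm with hm | hm
      · rw [← hg0] at hm
        have := hg.1 j hjd.le 0 (by omega) hm
        omega
      · exact hm
  refine ⟨L + d, by omega, hf.cycleGraph_embedding hg hL hd (by rw [hf0, hg0]) hgd.symm ?_⟩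
  intro i hi hiL j hj hjd
  obtain ⟨h1, h2⟩ := hinner i hi hiL
  exact ⟨fun hh => h1 (hh ▸ hgD j hj hjd), h2 _ (hgD j hj hjd)⟩

end LongHole

section Comb

variable {V : Type*} {G : SimpleGraph V}

/-- If the stars with centres in `T` cover two thirds of their total maximal size, then at least a
sixth of them have a sixth of their vertices to themselves. -/
lemma exists_private_neighbors {T B : Finset V} {Δ : ℕ} (hdeg : ∀ s ∈ T, (nbs G B s).card ≤ Δ)
    (hcov : 2 * Δ * T.card ≤ 3 * (nbrsOf G B T).card) (hΔ : 1 ≤ Δ) :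
    ∃ A ⊆ T, T.card ≤ 6 * A.card ∧ ∃ P : V → Finset V, ∀ a ∈ A, P a ⊆ B ∧
      (P a).card = (Δ + 5) / 6 ∧ ∀ b ∈ P a, ∀ x ∈ T, (G.Adj x b ↔ x = a) := by
  classical
  let Q : V → Finset V := fun a => B.filter fun b => ∀ x ∈ T, (G.Adj x b ↔ x = a)
  let A := T.filter fun a => Δ ≤ 6 * (Q a).card
  have hQdeg : ∀ a ∈ T, (Q a).card ≤ Δ := by
    intro a ha
    refine (Finset.card_le_card ?_).trans (hdeg a ha)
    intro b hb
    obtain ⟨h1, h2⟩ := Finset.mem_filter.1 hb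
    exact mem_nbs.2 ⟨h1, (h2 a ha).2 rfl⟩
  have hpt : ∀ b ∈ nbrsOf G B T,
      2 ≤ (nbs G T b).card + (T.filter fun a => b ∈ Q a).card := by
    intro b hb
    obtain ⟨hbB, x, hx, hbx⟩ := mem_nbrsOf.1 hb
    have hmem : x ∈ nbs G T b := mem_nbs.2 ⟨hx, hbx⟩
    have h1 : 1 ≤ (nbs G T b).card := Finset.card_pos.2 ⟨x, hmem⟩
    by_cases h2 : (nbs G T b).card = 1
    · have : x ∈ T.filter fun a => b ∈ Q a := by
        refine Finset.mem_filter.2 ⟨hx, Finset.mem_filter.2 ⟨hbB, fun y hy => ?_⟩⟩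
        constructor
        · intro hadj
          exact Finset.card_le_one.1 h2.le y (mem_nbs.2 ⟨hy, hadj.symm⟩) x hmem
        · rintro rfl; exact hbx.symm
      have := Finset.card_pos.2 ⟨x, this⟩
      omega
    · omega
  have hsum1 : ∑ b ∈ nbrsOf G B T, (nbs G T b).card ≤ Δ * T.card := by
    calc _ ≤ ∑ b ∈ B, (nbs G T b).card :=
          Finset.sum_le_sum_of_subset (fun b hb => (mem_nbrsOf.1 hb).1)
      _ = ∑ s ∈ T, (nbs G B s).card := sum_nbs_comm G B T
      _ ≤ ∑ _s ∈ T, Δ := Finset.sum_le_sum hdeg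
      _ = _ := by simp [mul_comm]
  have hsum2 : ∑ b ∈ nbrsOf G B T, (T.filter fun a => b ∈ Q a).card ≤ ∑ a ∈ T, (Q a).card := by
    simp only [Finset.card_filter]
    rw [Finset.sum_comm]
    refine Finset.sum_le_sum fun a _ => ?_
    rw [← Finset.card_filter]
    refine Finset.card_le_card fun b hb => (Finset.mem_filter.1 hb).2
  have hsum3 : 2 * (nbrsOf G B T).card ≤ Δ * T.card + ∑ a ∈ T, (Q a).card := by
    calc _ = ∑ _b ∈ nbrsOf G B T, 2 := by simp [mul_comm]
      _ ≤ _ := Finset.sum_le_sum hpt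
      _ = _ := Finset.sum_add_distrib
      _ ≤ _ := Nat.add_le_add hsum1 hsum2
  have hsum4 : 6 * ∑ a ∈ T, (Q a).card ≤ 6 * (Δ * A.card) + Δ * T.card := by
    rw [Finset.mul_sum]
    calc _ ≤ ∑ a ∈ T, ((if Δ ≤ 6 * (Q a).card then 6 * Δ else 0) + Δ) := by
          refine Finset.sum_le_sum fun a ha => ?_
          have := hQdeg a ha
          split_ifs <;> omega
      _ = _ := by
          rw [Finset.sum_add_distrib, ← Finset.sum_filter]
          simp [A]; ring
  have hA : T.card ≤ 6 * A.card := by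
    have h1 : Δ * T.card ≤ Δ * (6 * A.card) := by
      have e1 : 2 * Δ * T.card = 2 * (Δ * T.card) := by ring
      have e2 : Δ * (6 * A.card) = 6 * (Δ * A.card) := by ring
      omega
    exact Nat.le_of_mul_le_mul_left h1 hΔ
  have hP : ∀ a, ∃ P ⊆ Q a, a ∈ A → P.card = (Δ + 5) / 6 := by
    intro a
    by_cases ha : a ∈ A
    · obtain ⟨P, h1, h2⟩ := Finset.exists_subset_card_eq (s := Q a) (n := (Δ + 5) / 6) (by
        have := (Finset.mem_filter.1 ha).2
        omega)
      exact ⟨P, h1, fun _ => h2⟩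
    · exact ⟨∅, by simp, fun h => absurd h ha⟩
  choose P hP hPc using hP
  refine ⟨A, Finset.filter_subset _ _, hA, P, fun a ha => ⟨?_, hPc a ha, ?_⟩⟩
  · exact (hP a).trans (Finset.filter_subset _ _)
  · exact fun b hb => (Finset.mem_filter.1 (hP a hb)).2

/-- A comb: a set `A` whose members have private neighbourhoods of size `w` in `B`. -/
theorem exists_comb {S : Finset V} {m : ℕ} (Δ : ℕ) : ∀ B : Finset V,
    (∀ s ∈ S, (nbs G B s).card ≤ Δ) → (∀ b ∈ B, ∃ s ∈ S, G.Adj s b) →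
    100 * Real.sqrt (m * Δ) < B.card →
    ∃ A ⊆ S, ∃ w, 1 ≤ w ∧ m ≤ A.card ^ 2 * w ∧ ∃ P : V → Finset V, ∀ a ∈ A, P a ⊆ B ∧
      (P a).card = w ∧ ∀ b ∈ P a, ∀ x ∈ A, (G.Adj x b ↔ x = a) := by
  classical
  induction Δ using Nat.strong_induction_on with
  | _ Δ ih =>
  intro B hdeg hnb hB
  have hBpos : 0 < B.card := by
    have : (0 : ℝ) < B.card := lt_of_le_of_lt (by positivity) hB
    exact_mod_cast this
  have hΔ : 1 ≤ Δ := by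
    obtain ⟨b, hb⟩ := Finset.card_pos.1 hBpos
    obtain ⟨s, hs, hsb⟩ := hnb b hb
    exact le_trans (Finset.card_pos.2 ⟨b, mem_nbs.2 ⟨hb, hsb⟩⟩) (hdeg s hs)
  let cand := S.powerset.filter fun T => 2 * Δ * T.card ≤ 3 * (nbrsOf G B T).card
  have hne : cand.Nonempty := ⟨∅, by simp [cand]⟩
  obtain ⟨T, hT, hmax⟩ := Finset.exists_max_image cand Finset.card hne
  simp only [cand, Finset.mem_filter, Finset.mem_powerset] at hT hmax
  obtain ⟨hTS, hTcov⟩ := hT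
  obtain ⟨A, hAT, hAc, P, hP⟩ := exists_private_neighbors (fun s hs => hdeg s (hTS hs)) hTcov hΔ
  by_cases hm : m ≤ A.card ^ 2 * ((Δ + 5) / 6)
  · exact ⟨A, hAT.trans hTS, (Δ + 5) / 6, by omega, hm, P, fun a ha =>
      ⟨(hP a ha).1, (hP a ha).2.1, fun b hb x hx => (hP a ha).2.2 b hb x (hAT hx)⟩⟩
  push Not at hm
  have hTΔ : T.card ^ 2 * Δ ≤ 216 * m := by
    have h1 : T.card ^ 2 ≤ 36 * A.card ^ 2 := by
      calc T.card ^ 2 ≤ (6 * A.card) ^ 2 := Nat.pow_le_pow_left hAc 2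
        _ = _ := by ring
    calc T.card ^ 2 * Δ ≤ (36 * A.card ^ 2) * (6 * ((Δ + 5) / 6)) :=
          Nat.mul_le_mul h1 (by omega)
      _ = 216 * (A.card ^ 2 * ((Δ + 5) / 6)) := by ring
      _ ≤ _ := Nat.mul_le_mul_left _ hm.le
  have hcovle : (nbrsOf G B T).card ≤ T.card * Δ := by
    have hsub : nbrsOf G B T ⊆ T.biUnion fun s => nbs G B s := by
      intro b hb
      obtain ⟨h1, x, hx, hbx⟩ := mem_nbrsOf.1 hb
      exact Finset.mem_biUnion.2 ⟨x, hx, mem_nbs.2 ⟨h1, hbx.symm⟩⟩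
    exact Finset.card_biUnion_le_card_mul _ _ _ (fun s hs => hdeg s (hTS hs)) |>
      (Finset.card_le_card hsub).trans
  have hreal : ((nbrsOf G B T).card : ℝ) ≤ 15 * Real.sqrt (m * Δ) := by
    have h1 : ((nbrsOf G B T).card : ℝ) ≤ T.card * Δ := by exact_mod_cast hcovle
    refine h1.trans ?_
    have h2 : ((T.card : ℝ) * Δ) ^ 2 ≤ (15 * Real.sqrt (m * Δ)) ^ 2 := by
      rw [mul_pow 15, Real.sq_sqrt (by positivity)]
      have h3 : (T.card : ℝ) ^ 2 * Δ ≤ 216 * m := by exact_mod_cast hTΔ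
      have h4 : (0 : ℝ) ≤ Δ := by positivity
      have h5 : (0 : ℝ) ≤ m * Δ := by positivity
      nlinarith [mul_le_mul_of_nonneg_right h3 h4]
    exact le_of_sq_le_sq h2 (by positivity)
  have hsq : Real.sqrt (m * ((2 * Δ / 3 : ℕ) : ℝ)) ≤ 83 / 100 * Real.sqrt (m * Δ) := by
    rw [← Real.sqrt_sq (show (0 : ℝ) ≤ 83 / 100 by norm_num), ← Real.sqrt_mul (by positivity)]
    apply Real.sqrt_le_sqrt
    have h1 : ((2 * Δ / 3 : ℕ) : ℝ) ≤ 2 * Δ / 3 := by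
      have := Nat.cast_div_le (α := ℝ) (m := 2 * Δ) (n := 3)
      push_cast at this
      exact this
    have h4 : (0 : ℝ) ≤ m := by positivity
    have h5 : (0 : ℝ) ≤ m * Δ := by positivity
    nlinarith [mul_le_mul_of_nonneg_left h1 h4]
  obtain ⟨A', hA', w, hw, hmw, P', hP'⟩ := ih (2 * Δ / 3) (by omega) (B \ nbrsOf G B T) (by
    intro s hs
    by_cases hsT : s ∈ T
    · have : nbs G (B \ nbrsOf G B T) s = ∅ := by
        rw [Finset.eq_empty_iff_forall_notMem]
        intro b hb
        obtain ⟨h1, h2⟩ := mem_nbs.1 hb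
        obtain ⟨h3, h4⟩ := Finset.mem_sdiff.1 h1
        exact h4 (mem_nbrsOf.2 ⟨h3, s, hsT, h2.symm⟩)
      simp [this]
    · by_contra hcon
      have h1 := hmax (insert s T) ⟨Finset.insert_subset hs hTS, by
        rw [card_nbrsOf_insert, Finset.card_insert_of_notMem hsT, Nat.mul_add]
        omega⟩
      rw [Finset.card_insert_of_notMem hsT] at h1
      omega) (fun b hb => hnb b (Finset.mem_sdiff.1 hb).1) (by
    have h1 : ((B.card : ℝ)) - (nbrsOf G B T).card ≤ (B \ nbrsOf G B T).card := by
      have := Finset.le_card_sdiff (nbrsOf G B T) B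
      have h2 : B.card ≤ (B \ nbrsOf G B T).card + (nbrsOf G B T).card := by omega
      have h3 : (B.card : ℝ) ≤ (B \ nbrsOf G B T).card + (nbrsOf G B T).card := by exact_mod_cast h2
      linarith
    have h2 : (0 : ℝ) ≤ Real.sqrt (m * Δ) := Real.sqrt_nonneg _
    linarith)
  exact ⟨A', hA', w, hw, hmw, P', fun a ha =>
    ⟨(hP' a ha).1.trans Finset.sdiff_subset, (hP' a ha).2⟩⟩

end Comb

section PurePairs

variable {V : Type*}

/-- Two disjoint subsets of `X`, each of size at least `|X| / D`, that are complete or anticomplete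
to each other. -/
def HasPurePair (G : SimpleGraph V) (X : Finset V) (D : ℕ) : Prop :=
  ∃ A ⊆ X, ∃ B ⊆ X, Disjoint A B ∧ X.card ≤ D * A.card ∧ X.card ≤ D * B.card ∧
    ((∀ a ∈ A, ∀ b ∈ B, G.Adj a b) ∨ ∀ a ∈ A, ∀ b ∈ B, ¬ G.Adj a b)

end PurePairs

lemma nonempty_compl_embedding {U V : Type*} {H : SimpleGraph U} {G : SimpleGraph V}
    (h : Nonempty (H ↪g Gᶜ)) : Nonempty (Hᶜ ↪g G) := by
  obtain ⟨f⟩ := h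
  refine ⟨⟨f.toEmbedding, fun {a b} => ?_⟩⟩
  have h1 := f.map_adj_iff (v := a) (w := b)
  rw [compl_adj] at h1
  rw [compl_adj, ← h1]
  constructor
  · intro h
    exact ⟨fun hab => G.ne_of_adj h (congrArg f hab), fun h2 => h2.2 h⟩
  · rintro ⟨h2, h3⟩
    by_contra h4
    exact h3 ⟨fun h5 => h2 (f.injective h5), h4⟩

lemma exists_sparse_or_purePair {U : Type*} [Fintype U] (H : SimpleGraph U) {L : ℕ} (hL : 2 ≤ L)
    (E : ℕ) : ∃ D : ℕ, 1 ≤ D ∧ ∀ {V : Type*} (G : SimpleGraph V), ¬ Nonempty (H ↪g G) →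
      (∀ m : ℕ, L ≤ m → ¬ Nonempty ((cycleGraph m)ᶜ ↪g G)) →
      ∀ X : Finset V, D ≤ X.card → HasPurePair G X D ∨
        ∃ Y ⊆ X, ∃ e, 1 ≤ e ∧ X.card ≤ D * e ∧ E * e ≤ Y.card ∧
          ∀ x ∈ Y, (nbs G Y x).card ≤ e := by
  classical
  obtain ⟨D, hD⟩ := rodl (H.overFin rfl) (2 * E + 2 * (3 * L + 20))
  refine ⟨2 * (D + 1), by omega, fun G hH hC X hX => ?_⟩
  have hH' : ¬ Nonempty (H.overFin rfl ↪g G) := fun ⟨f⟩ =>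
    hH ⟨(H.overFinIso rfl).toEmbedding.trans f⟩
  set w := X.card / (D + 1) with hw
  have hw1 : 1 ≤ w := (Nat.one_le_div_iff (by omega)).2 (by omega)
  have h1 : (D + 1) * w ≤ X.card := Nat.mul_div_le _ _
  have h2 : X.card < (D + 1) * (w + 1) := by
    rw [hw]; exact Nat.lt_mul_div_succ _ (by omega)
  have h3 : X.card ≤ 2 * (D + 1) * (2 * w) := by nlinarith
  obtain ⟨Y, hYX, hYc, hY⟩ := hD G hH' w X (by nlinarith)
  rcases hY with hY | hY
  · exact Or.inr ⟨Y, hYX, 2 * w, by omega, h3, by rw [hYc]; nlinarith, hY⟩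
  · left
    by_contra hno
    have hlink : Linked Gᶜ Y (2 * w) := by
      refine ⟨hY, fun A hA B hB hAB hAc hBc => ?_⟩
      by_contra! hadj
      refine hno ⟨A, hA.trans hYX, B, hB.trans hYX, hAB, h3.trans (Nat.mul_le_mul_left _ hAc),
        h3.trans (Nat.mul_le_mul_left _ hBc), Or.inl fun a ha b hb => ?_⟩
      have := hadj a ha b hb
      rw [compl_adj] at this
      by_contra h5
      exact this ⟨fun h6 => Finset.disjoint_left.1 hAB ha (h6 ▸ hb), h5⟩
    obtain ⟨m, hm, hf⟩ := hlink.exists_long_hole (by omega) hL (by rw [hYc]; nlinarith)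
    exact hC m hm (nonempty_compl_embedding hf)

/-- Colour classes of size at most `w` can be merged into `N` groups of size at least `T`. -/
lemma exists_grouping {V ι : Type*} [DecidableEq ι] (col : V → ι) (w T : ℕ) :
    ∀ (N : ℕ) (Y : Finset V), (∀ i, (Y.filter fun x => col x = i).card ≤ w) →
      N * (T + w) ≤ Y.card → ∃ κ : ι → ℕ, ∀ j < N, T ≤ (Y.filter fun x => κ (col x) = j).card := by
  classical
  intro N
  induction N with
  | zero => intro Y _ _; exact ⟨fun _ => 0, by simp⟩
  | succ N ih =>
    intro Y hw hY
    -- choose a minimal set of colours covering at least `T` vertices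
    have hex : ∃ I : Finset ι, T ≤ (Y.filter fun x => col x ∈ I).card := by
      refine ⟨Y.image col, ?_⟩
      rw [Finset.filter_true_of_mem fun x hx => Finset.mem_image_of_mem _ hx]
      nlinarith
    have hex' : ∃ I : Finset ι, T ≤ (Y.filter fun x => col x ∈ I).card ∧
        (Y.filter fun x => col x ∈ I).card ≤ T + w := by
      obtain ⟨I, hI⟩ := hex
      induction I using Finset.induction_on with
      | empty => exact ⟨∅, hI, by simp⟩
      | insert a I ha ih2 =>
        by_cases hT : T ≤ (Y.filter fun x => col x ∈ I).card
        · exact ih2 hT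
        · refine ⟨insert a I, hI, ?_⟩
          have : (Y.filter fun x => col x ∈ insert a I) ⊆
              (Y.filter fun x => col x ∈ I) ∪ (Y.filter fun x => col x = a) := by
            intro x hx
            simp only [Finset.mem_filter, Finset.mem_insert, Finset.mem_union] at hx ⊢
            tauto
          have h1 := (Finset.card_le_card this).trans (Finset.card_union_le _ _)
          have := hw a
          omega
    obtain ⟨I, hI1, hI2⟩ := hex'
    have hsplit := Finset.card_filter_add_card_filter_not (s := Y) (fun x => col x ∈ I)
    obtain ⟨κ, hκ⟩ := ih (Y.filter fun x => col x ∉ I) (fun i =>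
        (Finset.card_le_card (Finset.filter_subset_filter _ (Finset.filter_subset _ _))).trans
          (hw i)) (by nlinarith)
    refine ⟨fun i => if i ∈ I then N else if κ i = N then N + 1 else κ i, fun j hj => ?_⟩
    rcases Nat.lt_succ_iff_lt_or_eq.1 hj with h | rfl
    · refine (hκ j h).trans (Finset.card_le_card ?_)
      intro x hx
      simp only [Finset.mem_filter] at hx ⊢
      refine ⟨hx.1.1, ?_⟩
      rw [if_neg hx.1.2, if_neg (by omega)]
      exact hx.2
    · refine hI1.trans (Finset.card_le_card ?_)
      intro x hx
      simp only [Finset.mem_filter] at hx ⊢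
      exact ⟨hx.1, if_pos hx.2⟩

lemma exists_purePair_or_rainbow {U W : Type*} [Fintype U] [Fintype W] (H : SimpleGraph U) {L : ℕ}
    (hL : 2 ≤ L) (F : SimpleGraph W) (hF : F.IsAcyclic) :
    ∃ D M : ℕ, 1 ≤ D ∧ 1 ≤ M ∧ ∀ {V : Type*} (G : SimpleGraph V), ¬ Nonempty (H ↪g G) →
      (∀ m : ℕ, L ≤ m → ¬ Nonempty ((cycleGraph m)ᶜ ↪g G)) →
      ∀ (S : Finset V) (col : V → V) (w : ℕ), 1 ≤ w →
        (∀ i, ∀ P ⊆ S, (∀ x ∈ P, col x = i) → P.card ≤ w) → M * w ≤ S.card →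
        HasPurePair G S D ∨ ∃ f : W → V, (∀ u, f u ∈ S) ∧ (Function.Injective fun u => col (f u)) ∧
          ∀ u v, G.Adj (f u) (f v) ↔ F.Adj u v := by
  classical
  obtain ⟨N, C, hNC⟩ := exists_rainbow_forest F hF
  obtain ⟨D, hD1, hD⟩ := exists_sparse_or_purePair H hL (N * (C + 1))
  refine ⟨D, D, hD1, hD1, fun G hH hC S col w hw hcol hS => ?_⟩
  rcases hD G hH hC S (by nlinarith) with h | ⟨Y, hYS, e, he, hSe, hEY, hdeg⟩
  · exact Or.inl h
  by_contra! hno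
  obtain ⟨hno1, hno2⟩ := hno
  have hwe : w ≤ e := Nat.le_of_mul_le_mul_left (hS.trans hSe) hD1
  obtain ⟨κ, hκ⟩ := exists_grouping col w (C * e) N Y
    (fun i => hcol i _ ((Finset.filter_subset _ _).trans hYS) fun x hx => (Finset.mem_filter.1 hx).2)
    (by nlinarith [Nat.mul_le_mul_left N hwe])
  have hcoh : Coherent G (fun x => κ (col x)) (fun j => Y.filter fun x => κ (col x) = j)
      (Finset.range N) e := by
    refine ⟨fun j _ x hx => (Finset.mem_filter.1 hx).2, fun i _ x hx j _ => ?_,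
      fun i _ j _ hij A hA B hB hAc hBc => ?_⟩
    · exact (card_nbs_mono G (Finset.filter_subset _ _) x).trans
        (hdeg x (Finset.mem_filter.1 hx).1)
    · by_contra! hadj
      refine hno1 ⟨A, (hA.trans (Finset.filter_subset _ _)).trans hYS, B,
        (hB.trans (Finset.filter_subset _ _)).trans hYS, ?_, hSe.trans (Nat.mul_le_mul_left _ hAc),
        hSe.trans (Nat.mul_le_mul_left _ hBc), Or.inr hadj⟩
      refine Finset.disjoint_left.2 fun x hx hx' => hij ?_
      rw [← (Finset.mem_filter.1 (hA hx)).2, ← (Finset.mem_filter.1 (hB hx')).2]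
  obtain ⟨f, hf1, hf2, hf3⟩ := hNC G _ _ e he hcoh hκ
  obtain ⟨u, v, huv⟩ := hno2 f (fun u => hYS (Finset.mem_filter.1 (hf1 u).2).1)
    (fun u v huv => hf2 (congrArg κ huv))
  have := hf3 u v
  tauto

section Homogeneous

variable {V : Type*}

open Classical in
/-- The largest size of a clique contained in `X`. -/
noncomputable def cliqueNumOn (G : SimpleGraph V) (X : Finset V) : ℕ :=
  (X.powerset.filter fun K : Finset V => G.IsClique (K : Set V)).sup Finset.card

/-- The product of the largest sizes of a clique and of a stable set contained in `X`. -/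
noncomputable def homNum (G : SimpleGraph V) (X : Finset V) : ℕ :=
  cliqueNumOn G X * cliqueNumOn Gᶜ X

variable {G : SimpleGraph V} {X Y A B K : Finset V}

lemma card_le_cliqueNumOn (hK : K ⊆ X) (h : G.IsClique (K : Set V)) :
    K.card ≤ cliqueNumOn G X := by
  classical
  exact Finset.le_sup (f := Finset.card)
    (Finset.mem_filter.2 ⟨Finset.mem_powerset.2 hK, h⟩)

lemma exists_card_eq_cliqueNumOn (G : SimpleGraph V) (X : Finset V) :
    ∃ K ⊆ X, G.IsClique (K : Set V) ∧ K.card = cliqueNumOn G X := by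
  classical
  obtain ⟨K, hK, h⟩ := Finset.exists_mem_eq_sup
    (X.powerset.filter fun K : Finset V => G.IsClique (K : Set V))
    ⟨∅, Finset.mem_filter.2 ⟨by simp, by simp⟩⟩ Finset.card
  rw [Finset.mem_filter, Finset.mem_powerset] at hK
  exact ⟨K, hK.1, hK.2, h.symm⟩

lemma cliqueNumOn_mono (h : X ⊆ Y) : cliqueNumOn G X ≤ cliqueNumOn G Y := by
  obtain ⟨K, h1, h2, h3⟩ := exists_card_eq_cliqueNumOn G X
  exact h3 ▸ card_le_cliqueNumOn (h1.trans h) h2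

lemma one_le_cliqueNumOn (h : X.Nonempty) : 1 ≤ cliqueNumOn G X := by
  obtain ⟨x, hx⟩ := h
  exact card_le_cliqueNumOn (K := {x}) (by simpa using hx) (by simp)

lemma homNum_mono (h : X ⊆ Y) : homNum G X ≤ homNum G Y :=
  Nat.mul_le_mul (cliqueNumOn_mono h) (cliqueNumOn_mono h)

lemma homNum_compl : homNum Gᶜ X = homNum G X := by
  rw [homNum, homNum, compl_compl, mul_comm]

lemma cliqueNumOn_add_le (hA : A ⊆ X) (hB : B ⊆ X) (hAB : Disjoint A B)
    (h : ∀ a ∈ A, ∀ b ∈ B, G.Adj a b) : cliqueNumOn G A + cliqueNumOn G B ≤ cliqueNumOn G X := by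
  classical
  obtain ⟨K, h1, h2, h3⟩ := exists_card_eq_cliqueNumOn G A
  obtain ⟨J, j1, j2, j3⟩ := exists_card_eq_cliqueNumOn G B
  rw [← h3, ← j3, ← Finset.card_union_of_disjoint (Finset.disjoint_of_subset_left h1
    (Finset.disjoint_of_subset_right j1 hAB))]
  refine card_le_cliqueNumOn (Finset.union_subset (h1.trans hA) (j1.trans hB)) ?_
  intro x hx y hy hxy
  rw [Finset.mem_coe, Finset.mem_union] at hx hy
  rcases hx with hx | hx <;> rcases hy with hy | hy
  · exact h2 hx hy hxy
  · exact h x (h1 hx) y (j1 hy)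
  · exact (h y (h1 hy) x (j1 hx)).symm
  · exact j2 hx hy hxy

lemma homNum_add_le_of_complete (hA : A ⊆ X) (hB : B ⊆ X) (hAB : Disjoint A B)
    (h : ∀ a ∈ A, ∀ b ∈ B, G.Adj a b) : homNum G A + homNum G B ≤ homNum G X := by
  have h1 := cliqueNumOn_add_le hA hB hAB h
  have h2 : cliqueNumOn Gᶜ A ≤ cliqueNumOn Gᶜ X := cliqueNumOn_mono hA
  have h3 : cliqueNumOn Gᶜ B ≤ cliqueNumOn Gᶜ X := cliqueNumOn_mono hB
  unfold homNum
  calc _ ≤ cliqueNumOn G A * cliqueNumOn Gᶜ X + cliqueNumOn G B * cliqueNumOn Gᶜ X := by gcongr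
    _ = (cliqueNumOn G A + cliqueNumOn G B) * cliqueNumOn Gᶜ X := by ring
    _ ≤ _ := by gcongr

lemma homNum_add_le (hA : A ⊆ X) (hB : B ⊆ X) (hAB : Disjoint A B)
    (h : (∀ a ∈ A, ∀ b ∈ B, G.Adj a b) ∨ ∀ a ∈ A, ∀ b ∈ B, ¬ G.Adj a b) :
    homNum G A + homNum G B ≤ homNum G X := by
  rcases h with h | h
  · exact homNum_add_le_of_complete hA hB hAB h
  · have := homNum_add_le_of_complete (G := Gᶜ) hA hB hAB fun a ha b hb =>
      (compl_adj _ _ _).2 ⟨fun hab => Finset.disjoint_left.1 hAB ha (hab ▸ hb), h a ha b hb⟩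
    simpa only [homNum_compl] using this

lemma one_le_homNum (h : X.Nonempty) : 1 ≤ homNum G X :=
  Nat.mul_pos (one_le_cliqueNumOn h) (one_le_cliqueNumOn h)

lemma two_le_homNum (h : 2 ≤ X.card) : 2 ≤ homNum G X := by
  obtain ⟨x, hx, y, hy, hxy⟩ := Finset.one_lt_card.1 h
  have := homNum_add_le (G := G) (A := {x}) (B := {y}) (X := X) (by simpa using hx)
    (by simpa using hy) (by simpa using hxy) (by simpa using em (G.Adj x y))
  have h1 := one_le_homNum (G := G) (Finset.singleton_nonempty x)
  have h2 := one_le_homNum (G := G) (Finset.singleton_nonempty y)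
  omega

/-- Both sides of a pure pair in a nonempty set are smaller than the whole set. -/
lemma HasPurePair.exists_homNum_le {D : ℕ} (h : HasPurePair G X D) (hX : X.Nonempty) :
    ∃ A ⊂ X, ∃ B ⊂ X, X.card ≤ D * A.card ∧ X.card ≤ D * B.card ∧
      homNum G A + homNum G B ≤ homNum G X := by
  obtain ⟨A, hA, B, hB, hAB, hAc, hBc, h⟩ := h
  have hX := hX.card_pos
  have hA0 : A.Nonempty :=
    Finset.card_pos.1 (Nat.pos_of_ne_zero fun h0 => by rw [h0] at hAc; omega)
  have hB0 : B.Nonempty :=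
    Finset.card_pos.1 (Nat.pos_of_ne_zero fun h0 => by rw [h0] at hBc; omega)
  refine ⟨A, ⟨hA, fun hXA => ?_⟩, B, ⟨hB, fun hXB => ?_⟩, hAc, hBc, homNum_add_le hA hB hAB h⟩
  · obtain ⟨b, hb⟩ := hB0
    exact Finset.disjoint_left.1 hAB (hXA (hB hb)) hb
  · obtain ⟨a, ha⟩ := hA0
    exact Finset.disjoint_left.1 hAB ha (hXB (hA ha))

/-- If `x ≤ D a` and `D ^ c ≤ 2`, then `x ^ c ≤ 2 a ^ c`. -/
lemma rpow_le_two_mul_rpow {D x a : ℝ} {c : ℝ} (hD : 0 ≤ D) (hx : 0 ≤ x) (ha : 0 ≤ a) (hc : 0 ≤ c)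
    (hDc : D ^ c ≤ 2) (h : x ≤ D * a) : x ^ c ≤ 2 * a ^ c := by
  calc x ^ c ≤ (D * a) ^ c := Real.rpow_le_rpow hx h hc
    _ = D ^ c * a ^ c := Real.mul_rpow hD ha
    _ ≤ 2 * a ^ c := by gcongr

lemma le_homNum_of_hasPurePair {D₁ M w : ℕ} {c c₁ : ℝ} (hM : 1 ≤ M) (hw : 1 ≤ w)
    (hc : 0 < c) (hcc : c ≤ c₁) (hD : (D₁ : ℝ) ^ c₁ ≤ 2)
    (hpure : ∀ S ⊆ X, M * w ≤ S.card → HasPurePair G S D₁)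
    (hsmall : ∀ S ⊆ X, (S.card : ℝ) ^ c ≤ homNum G S) :
    ∀ S ⊆ X, ((S.card : ℝ) / (M * w)) ^ c₁ * (w : ℝ) ^ c ≤ homNum G S := by
  intro S
  have hw' : (1 : ℝ) ≤ w := by exact_mod_cast hw
  have hM' : (1 : ℝ) ≤ M := by exact_mod_cast hM
  have hc₁ : 0 < c₁ := hc.trans_le hcc
  have hMw : (0 : ℝ) < M * w := by positivity
  induction S using Finset.strongInduction with
  | H S ih =>
    intro hS
    by_cases h1 : M * w ≤ S.card
    · have h0 : S.Nonempty := Finset.card_pos.1 (lt_of_lt_of_le (by positivity) h1)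
      obtain ⟨A, hA, B, hB, hAc, hBc, hAB⟩ := (hpure S hS h1).exists_homNum_le h0
      have key : ∀ Z ⊂ S, S.card ≤ D₁ * Z.card →
          ((S.card : ℝ) / (M * w)) ^ c₁ * (w : ℝ) ^ c ≤ 2 * homNum G Z := by
        intro Z hZ hZc
        have h2 := ih Z hZ (hZ.1.trans hS)
        have h3 : ((S.card : ℝ) / (M * w)) ^ c₁ ≤ 2 * ((Z.card : ℝ) / (M * w)) ^ c₁ := by
          refine rpow_le_two_mul_rpow (D := D₁) (by positivity) (by positivity) (by positivity) hc₁.le hD ?_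
          rw [← mul_div_assoc]
          gcongr
          exact_mod_cast hZc
        calc _ ≤ (2 * ((Z.card : ℝ) / (M * w)) ^ c₁) * (w : ℝ) ^ c := by gcongr
          _ = 2 * (((Z.card : ℝ) / (M * w)) ^ c₁ * (w : ℝ) ^ c) := by ring
          _ ≤ _ := by gcongr
      have h4 := key A hA hAc
      have h5 := key B hB hBc
      have h6 : (homNum G A : ℝ) + homNum G B ≤ homNum G S := by exact_mod_cast hAB
      linarith
    · refine le_trans ?_ (hsmall S hS)
      by_cases h2 : w ≤ S.card
      · have h3 : ((S.card : ℝ) / (M * w)) ^ c₁ ≤ 1 := by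
          refine Real.rpow_le_one (by positivity) ((div_le_one hMw).2 ?_) hc₁.le
          exact_mod_cast (not_le.1 h1).le
        calc _ ≤ 1 * (w : ℝ) ^ c := by gcongr
          _ ≤ _ := by
            rw [one_mul]
            exact Real.rpow_le_rpow (by positivity) (by exact_mod_cast h2) hc.le
      · rcases Nat.eq_zero_or_pos S.card with h0 | h0
        · simp [h0, Real.zero_rpow hc.ne', Real.zero_rpow hc₁.ne']
        have h0' : (0 : ℝ) < S.card := by exact_mod_cast h0
        have h3 : (S.card : ℝ) / (M * w) ≤ (S.card : ℝ) / w := by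
          gcongr
          nlinarith
        have h4 : (S.card : ℝ) / w ≤ 1 := (div_le_one (by positivity)).2
          (by exact_mod_cast (not_le.1 h2).le)
        calc _ ≤ ((S.card : ℝ) / w) ^ c₁ * (w : ℝ) ^ c := by gcongr
          _ ≤ ((S.card : ℝ) / w) ^ c * (w : ℝ) ^ c := by
            gcongr ?_ * _
            exact Real.rpow_le_rpow_of_exponent_ge (by positivity) h4 hcc
          _ = (S.card : ℝ) ^ c := by
            rw [← Real.mul_rpow (by positivity) (by positivity), div_mul_cancel₀ _ (by positivity)]

end Homogeneous

section Main

variable {V : Type*} {G : SimpleGraph V}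

/-- In a sparse set in which small sets have large stable subsets, growing a stable set greedily
by stable subsets of neighbourhoods must run into a stable set in a neighbourhood that has many
neighbours. -/
lemma exists_expanding_stable {Y : Finset V} {e a : ℕ} (heY : e ≤ Y.card)
    (hdeg : ∀ x ∈ Y, (nbs G Y x).card ≤ e) (hstab : cliqueNumOn Gᶜ Y ≤ a) (haY : 2 * a < Y.card)
    (hlarge : ∀ Z ⊆ Y, Z.Nonempty → Z.card ≤ e →
      204 * (a : ℝ) * Real.sqrt (Y.card * Z.card) ≤ cliqueNumOn Gᶜ Z * Y.card) :
    ∃ v ∈ Y, ∃ Δ, Δ ≤ e ∧ ∃ S ⊆ nbs G Y v, ∃ B ⊆ Y, (∀ b ∈ B, b ≠ v ∧ ¬ G.Adj v b) ∧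
      Gᶜ.IsClique (S : Set V) ∧
      (∀ s ∈ S, (nbs G B s).card ≤ Δ) ∧ (∀ b ∈ B, ∃ s ∈ S, G.Adj s b) ∧
      100 * Real.sqrt (Y.card * Δ) < B.card := by
  classical
  suffices h : ∀ k : ℕ, ∀ T ⊆ Y, ∀ Z ⊆ Y, Z.card = k → Disjoint T Z →
      (∀ t ∈ T, ∀ z ∈ Z, ¬ G.Adj t z) → Gᶜ.IsClique (T : Set V) →
      2 * (a : ℝ) * (Y.card - Z.card) ≤ T.card * Y.card →
      ∃ v ∈ Y, ∃ Δ, Δ ≤ e ∧ ∃ S ⊆ nbs G Y v, ∃ B ⊆ Y, (∀ b ∈ B, b ≠ v ∧ ¬ G.Adj v b) ∧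
      Gᶜ.IsClique (S : Set V) ∧
      (∀ s ∈ S, (nbs G B s).card ≤ Δ) ∧ (∀ b ∈ B, ∃ s ∈ S, G.Adj s b) ∧
      100 * Real.sqrt (Y.card * Δ) < B.card from
    h _ ∅ (by simp) Y subset_rfl rfl (by simp) (by simp) (by simp) (by simp)
  intro k
  induction k using Nat.strong_induction_on with
  | _ k ih =>
  intro T hT Z hZ hZk hTZ hanti hTst hinv
  have hY0 : (0 : ℝ) < Y.card := by exact_mod_cast (by omega : 0 < Y.card)
  have hTa : T.card ≤ a := (card_le_cliqueNumOn hT hTst).trans hstab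
  have hTa' : (T.card : ℝ) ≤ a := by exact_mod_cast hTa
  have haY' : 2 * (a : ℝ) < Y.card := by exact_mod_cast haY
  have hYne : Y.Nonempty := Finset.card_pos.1 (by omega)
  have ha1 : 1 ≤ a := (one_le_cliqueNumOn hYne).trans hstab
  have ha1' : (1 : ℝ) ≤ a := by exact_mod_cast ha1
  have hZhalf : (Y.card : ℝ) ≤ 2 * Z.card := by
    by_contra! hlt
    nlinarith
  have hZa : a < Z.card := by
    have : (a : ℝ) < Z.card := by linarith
    exact_mod_cast this
  obtain ⟨v, hvZ, hvmax⟩ := Finset.exists_max_image Z (fun x => (nbs G Z x).card)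
    (Finset.card_pos.1 (by omega))
  set Δ := (nbs G Z v).card with hΔ
  have hΔe : Δ ≤ e := (card_nbs_mono G hZ v).trans (hdeg v (hZ hvZ))
  have hΔ0 : 1 ≤ Δ := by
    by_contra! h0
    have hst : Gᶜ.IsClique (Z : Set V) := by
      intro x hx y hy hxy
      refine (compl_adj _ _ _).2 ⟨hxy, fun hadj => ?_⟩
      have h1 := hvmax x hx
      have h2 : 0 < (nbs G Z x).card := Finset.card_pos.2 ⟨y, mem_nbs.2 ⟨hy, hadj⟩⟩
      omega
    have := (card_le_cliqueNumOn hZ hst).trans hstab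
    omega
  have hNZ : nbs G Z v ⊆ Z := nbs_subset ..
  obtain ⟨S, hSN, hSst, hSc⟩ := exists_card_eq_cliqueNumOn Gᶜ (nbs G Z v)
  have hSlarge := hlarge _ (hNZ.trans hZ) (Finset.card_pos.1 hΔ0) hΔe
  rw [← hSc, ← hΔ] at hSlarge
  set B := nbrsOf G (Z \ insert v (nbs G Z v)) S with hB
  have hBmem : ∀ b ∈ B, b ∈ Z ∧ b ≠ v ∧ ¬ G.Adj v b ∧ ∃ s ∈ S, G.Adj s b := by
    intro b hb
    obtain ⟨h1, s, hs, h2⟩ := mem_nbrsOf.1 hb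
    rw [Finset.mem_sdiff, Finset.mem_insert, mem_nbs] at h1
    refine ⟨h1.1, fun h => h1.2 (Or.inl h), fun h => h1.2 (Or.inr ⟨h1.1, h⟩), s, hs, h2.symm⟩
  by_cases hBc : 100 * Real.sqrt (Y.card * Δ) < B.card
  · refine ⟨v, hZ hvZ, Δ, hΔe, S, fun s hs => ?_, B, fun b hb => hZ (hBmem b hb).1,
      fun b hb => ⟨(hBmem b hb).2.1, (hBmem b hb).2.2.1⟩, hSst, fun s hs => ?_,
      fun b hb => (hBmem b hb).2.2.2, hBc⟩
    · have := mem_nbs.1 (hSN hs)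
      exact mem_nbs.2 ⟨hZ this.1, this.2⟩
    · exact (card_nbs_mono G (fun b hb => (hBmem b hb).1) s).trans (hvmax s (hNZ (hSN hs)))
  · set Z' := Z \ (insert v (nbs G Z v) ∪ B) with hZ'
    have hZ'Z : Z' ⊆ Z := Finset.sdiff_subset
    have hST : Disjoint T S := Finset.disjoint_of_subset_right (hSN.trans hNZ) hTZ
    have hZ'not : ∀ z ∈ Z', z ∉ nbs G Z v ∧ z ∉ B ∧ z ≠ v := by
      intro z hz
      have := (Finset.mem_sdiff.1 hz).2
      simp only [Finset.mem_union, Finset.mem_insert] at this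
      tauto
    have hvZ' : v ∉ Z' := fun h => (hZ'not v h).2.2 rfl
    have hcard : Z.card ≤ Z'.card + (Δ + 1 + B.card) := by
      have h1 : Z ⊆ Z' ∪ (insert v (nbs G Z v) ∪ B) := by
        rw [hZ', Finset.sdiff_union_self_eq_union]; exact Finset.subset_union_left
      have h2 := (Finset.card_le_card h1).trans (Finset.card_union_le _ _)
      have h3 := Finset.card_union_le (insert v (nbs G Z v)) B
      have h4 := Finset.card_insert_le v (nbs G Z v)
      omega
    have hcard' : (Z.card : ℝ) ≤ Z'.card + (Δ + 1 + B.card) := by exact_mod_cast hcard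
    have hΔs : (Δ : ℝ) ≤ Real.sqrt (Y.card * Δ) := by
      refine Real.le_sqrt_of_sq_le ?_
      have : (Δ : ℝ) ≤ Y.card := by exact_mod_cast hΔe.trans heY
      nlinarith
    have hΔ0' : (1 : ℝ) ≤ Δ := by exact_mod_cast hΔ0
    refine ih Z'.card ?_ (T ∪ S) (Finset.union_subset hT ((hSN.trans hNZ).trans hZ)) Z'
      (hZ'Z.trans hZ) rfl ?_ ?_ ?_ ?_
    · rw [← hZk]
      exact Finset.card_lt_card ⟨hZ'Z, fun h => hvZ' (h hvZ)⟩
    · refine Finset.disjoint_union_left.2 ⟨Finset.disjoint_of_subset_right hZ'Z hTZ, ?_⟩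
      exact Finset.disjoint_left.2 fun s hs hs' => (hZ'not s hs').1 (hSN hs)
    · intro t ht z hz
      rcases Finset.mem_union.1 ht with ht | ht
      · exact hanti t ht z (hZ'Z hz)
      · intro hadj
        refine (hZ'not z hz).2.1 (mem_nbrsOf.2 ⟨Finset.mem_sdiff.2 ⟨hZ'Z hz, ?_⟩, t, ht, hadj.symm⟩)
        rw [Finset.mem_insert, not_or]
        exact ⟨(hZ'not z hz).2.2, (hZ'not z hz).1⟩
    · have hTS : ∀ t ∈ T, ∀ s ∈ S, Gᶜ.Adj t s := fun t ht s hs =>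
        (compl_adj _ _ _).2 ⟨fun h => Finset.disjoint_left.1 hST ht (h ▸ hs),
          hanti t ht s (hNZ (hSN hs))⟩
      intro x hx y hy hxy
      rw [Finset.mem_coe, Finset.mem_union] at hx hy
      rcases hx with hx | hx <;> rcases hy with hy | hy
      · exact hTst hx hy hxy
      · exact hTS x hx y hy
      · exact (hTS y hy x hx).symm
      · exact hSst hx hy hxy
    · rw [Finset.card_union_of_disjoint hST]
      push_cast
      have h5 : (Z.card : ℝ) - Z'.card ≤ 102 * Real.sqrt (Y.card * Δ) := by linarith
      have h6 : 2 * (a : ℝ) * (Z.card - Z'.card) ≤ 2 * a * (102 * Real.sqrt (Y.card * Δ)) := by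
        gcongr
      linarith

lemma starExpansion_embedding {W : Type*} {F : SimpleGraph W} {v : V} {f g : W → V}
    (hf : ∀ u u', G.Adj (f u) (f u') ↔ F.Adj u u') (hg : Function.Injective g)
    (hgf : ∀ u u', G.Adj (g u) (f u') ↔ u = u') (hgg : ∀ u u', ¬ G.Adj (g u) (g u'))
    (hvg : ∀ u, G.Adj v (g u)) (hvf : ∀ u, f u ≠ v ∧ ¬ G.Adj v (f u)) :
    Nonempty (starExpansion F ↪g G) := by
  have hfinj : Function.Injective f := fun u u' h => (hgf u u').1 (h ▸ (hgf u u).2 rfl)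
  have hfg : ∀ u u', f u ≠ g u' := fun u u' h => (hvf u).2 (h ▸ hvg u')
  have hvg' : ∀ u, g u ≠ v := fun u h => G.irrefl (h ▸ hvg u)
  have hfg' : ∀ u u', G.Adj (f u) (g u') ↔ u = u' := fun u u' => by
    rw [G.adj_comm, hgf, eq_comm]
  have hfv : ∀ u, ¬ G.Adj (f u) v := fun u h => (hvf u).2 h.symm
  have hgv : ∀ u, G.Adj (g u) v := fun u => (hvg u).symm
  have hadj : ∀ x y, G.Adj (Sum.elim f (Sum.elim g fun _ => v) x)
      (Sum.elim f (Sum.elim g fun _ => v) y) ↔ (starExpansion F).Adj x y := by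
    rintro (x | x | x) (y | y | y)
    all_goals
      simp only [Sum.elim_inl, Sum.elim_inr, starExpansion, fromRel_adj]
    · rw [hf]
      simp only [ne_eq, Sum.inl.injEq, F.adj_comm y x, or_self]
      exact ⟨fun h => ⟨h.ne, h⟩, fun h => h.2⟩
    · simp [hfg']
    · simp [hfv]
    · simp [hgf, eq_comm]
    · simp [hgg]
    · simp [hgv]
    · simp [hvf]
    · simp [hvg]
    · simp
  refine ⟨⟨⟨Sum.elim f (Sum.elim g fun _ => v), ?_⟩, hadj _ _⟩⟩
  rintro (x | x | x) (y | y | y) h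
  all_goals simp only [Sum.elim_inl, Sum.elim_inr] at h
  · rw [hfinj h]
  · exact absurd h (hfg x y)
  · exact absurd h (hvf x).1
  · exact absurd h.symm (hfg y x)
  · rw [hg h]
  · exact absurd h (hvg' x)
  · exact absurd h.symm (hvf y).1
  · exact absurd h.symm (hvg' y)
  · rfl

end Main

section Conclusion

/-- In the leaves of an induced comb hanging off the neighbourhood of a vertex `v`, a rainbow copy
of `F` extends to a copy of the star-expansion of `F`. -/
lemma hasPurePair_of_comb {V W : Type*} {G : SimpleGraph V} {F : SimpleGraph W}
    (hG : ¬ Nonempty (starExpansion F ↪g G)) {D M w : ℕ} (hw : 1 ≤ w)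
    (hpair : ∀ (S : Finset V) (col : V → V) (w : ℕ), 1 ≤ w →
      (∀ i, ∀ P ⊆ S, (∀ x ∈ P, col x = i) → P.card ≤ w) → M * w ≤ S.card →
      HasPurePair G S D ∨ ∃ f : W → V, (∀ u, f u ∈ S) ∧ (Function.Injective fun u => col (f u)) ∧
        ∀ u v, G.Adj (f u) (f v) ↔ F.Adj u v)
    {v : V} {A B Q : Finset V} {P : V → Finset V} (hAst : Gᶜ.IsClique (A : Set V))
    (hvA : ∀ a ∈ A, G.Adj v a) (hvB : ∀ b ∈ B, b ≠ v ∧ ¬ G.Adj v b)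
    (hP : ∀ a ∈ A, P a ⊆ B ∧ (P a).card = w ∧ ∀ b ∈ P a, ∀ x ∈ A, (G.Adj x b ↔ x = a))
    (hQ : ∀ b ∈ Q, ∃ a ∈ A, b ∈ P a) (hQc : M * w ≤ Q.card) : HasPurePair G Q D := by
  classical
  let col : V → V := fun b => if h : ∃ a ∈ A, b ∈ P a then h.choose else b
  have hcol : ∀ b ∈ Q, col b ∈ A ∧ b ∈ P (col b) := by
    intro b hb
    have h := hQ b hb
    simp only [col, dif_pos h]
    exact h.choose_spec
  have hclass : ∀ i, ∀ R ⊆ Q, (∀ x ∈ R, col x = i) → R.card ≤ w := by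
    intro i R hR hRi
    rcases R.eq_empty_or_nonempty with rfl | ⟨r, hr⟩
    · simp
    · have hi := (hcol r (hR hr)).1
      rw [hRi r hr] at hi
      rw [← (hP i hi).2.1]
      refine Finset.card_le_card fun x hx => ?_
      have := (hcol x (hR hx)).2
      rwa [hRi x hx] at this
  rcases hpair Q col w hw hclass hQc with h | ⟨f, hf1, hf2, hf3⟩
  · exact h
  · refine absurd (starExpansion_embedding (v := v) (g := fun u => col (f u)) hf3 hf2 ?_ ?_ ?_ ?_) hG
    · intro u u'
      have h1 := hcol _ (hf1 u)
      have h2 := hcol _ (hf1 u')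
      rw [(hP _ h2.1).2.2 _ h2.2 _ h1.1]
      exact hf2.eq_iff
    · intro u u' hadj
      exact ((compl_adj _ _ _).1 (hAst (hcol _ (hf1 u)).1 (hcol _ (hf1 u')).1 hadj.ne)).2 hadj
    · exact fun u => hvA _ (hcol _ (hf1 u)).1
    · exact fun u => hvB _ ((hP _ (hcol _ (hf1 u)).1).1 (hcol _ (hf1 u)).2)

lemma exists_rpow_le_two (K : ℕ) :
    ∃ c : ℝ, 0 < c ∧ ∀ c' : ℝ, 0 ≤ c' → c' ≤ c → (K : ℝ) ^ c' ≤ 2 := by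
  have hK : (1 : ℝ) < K + 2 := by
    have : (0 : ℝ) ≤ K := by positivity
    linarith
  have hlog : 0 < Real.log (K + 2) := Real.log_pos hK
  refine ⟨Real.log 2 / Real.log (K + 2), div_pos (Real.log_pos (by norm_num)) hlog,
    fun c' h0 h1 => ?_⟩
  calc (K : ℝ) ^ c' ≤ (K + 2) ^ c' := by gcongr; linarith
    _ ≤ (K + 2) ^ (Real.log 2 / Real.log (K + 2)) := by
        exact Real.rpow_le_rpow_of_exponent_le hK.le h1
    _ = 2 := by
        rw [Real.rpow_def_of_pos (by linarith), mul_div_cancel₀ _ hlog.ne',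
          Real.exp_log (by norm_num)]

lemma exists_le_rpow {c : ℝ} (hc : 0 < c) (x : ℝ) :
    ∃ k₀ : ℕ, ∀ k : ℕ, k₀ ≤ k → x ≤ (k : ℝ) ^ c := by
  have h := ((tendsto_rpow_atTop hc).comp tendsto_natCast_atTop_atTop).eventually_ge_atTop x
  exact Filter.eventually_atTop.1 h

/-- `(z / n) ^ c` dominates `√(z / m)` when `z / m` is small and `m` is comparable to `n`. -/
lemma sqrt_le_rpow_of_small {D m n z c : ℝ} (hD : 0 < D) (hn : 0 < n) (hz : 0 < z)
    (hnm : n ≤ D * m) (hzm : 408 ^ 4 * z ≤ m) (hc : 0 ≤ c) (hc4 : c ≤ 1 / 4) (hDc : D ^ c ≤ 2) :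
    204 * Real.sqrt (m * z) * n ^ c ≤ z ^ c * m := by
  have hm : 0 < m := by nlinarith
  set x := z / m with hx
  have hx0 : 0 < x := by positivity
  have hx1 : x ≤ (1 / 408) ^ 4 := by
    rw [hx, div_le_iff₀ hm]; linarith
  set y := x ^ (1 / 4 : ℝ) with hy
  have hy0 : 0 < y := by positivity
  have hy4 : y ^ 4 = x := by
    rw [hy, ← Real.rpow_natCast, ← Real.rpow_mul hx0.le]; norm_num
  have hy1 : y ≤ 1 / 408 := by
    refine le_of_pow_le_pow_left₀ (n := 4) (by norm_num) (by norm_num) ?_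
    rw [hy4]; exact hx1
  have hsq : Real.sqrt (m * z) = y ^ 2 * m := by
    have : m * z = (y ^ 2 * m) ^ 2 := by
      rw [mul_pow, ← pow_mul, hy4, hx]; field_simp
    rw [this, Real.sqrt_sq (by positivity)]
  have h1 : n ^ c ≤ 2 * m ^ c := rpow_le_two_mul_rpow hD.le hn.le hm.le hc hDc hnm
  have h2 : y ≤ x ^ c :=
    Real.rpow_le_rpow_of_exponent_ge hx0 (hx1.trans (by norm_num)) hc4
  have h3 : z ^ c = x ^ c * m ^ c := by
    rw [← Real.mul_rpow hx0.le hm.le, hx, div_mul_cancel₀ _ hm.ne']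
  have hmc : 0 < m ^ c := by positivity
  calc 204 * Real.sqrt (m * z) * n ^ c ≤ 204 * (y ^ 2 * m) * (2 * m ^ c) := by
        rw [hsq]; gcongr
    _ = (408 * y) * y * m ^ c * m := by ring
    _ ≤ 1 * y * m ^ c * m := by gcongr; linarith
    _ ≤ x ^ c * m ^ c * m := by rw [one_mul]; gcongr
    _ = _ := by rw [h3]

lemma two_mul_lt_of_lt_rpow {D m n a c : ℝ} (hD : 0 < D) (hn : 1 ≤ n) (hDn : 4 * D ^ 2 ≤ n)
    (hnm : n ≤ D * m) (hc : c ≤ 1 / 2) (ha : a < n ^ c) : 2 * a < m := by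
  have h2 : n ^ c ≤ Real.sqrt n := by
    rw [Real.sqrt_eq_rpow]
    exact Real.rpow_le_rpow_of_exponent_le hn hc
  have h3 : Real.sqrt n ^ 2 = n := Real.sq_sqrt (by linarith)
  have h4 : 2 * D ≤ Real.sqrt n := Real.le_sqrt_of_sq_le (by linarith)
  have h7 : D * (2 * a) < D * m := by nlinarith
  exact lt_of_mul_lt_mul_left h7 hD.le

lemma rpow_le_of_gain {D M n k w c c₁ : ℝ} (hD : 0 ≤ D) (hn : 0 ≤ n) (hk : 1 ≤ k) (hw : 0 ≤ w)
    (hM : 0 < M) (hc : 0 ≤ c) (hcc : c ≤ c₁ / 4) (hDc : D ^ c ≤ 2) (hnk : n ≤ D * (k ^ 2 * w))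
    (hkM : 2 * M ^ c₁ ≤ k ^ (c₁ / 2)) : n ^ c ≤ k ^ c₁ / M ^ c₁ * w ^ c := by
  have hnw : n ^ c ≤ 2 * (k ^ (c₁ / 2) * w ^ c) := by
    refine (rpow_le_two_mul_rpow hD hn (by positivity) hc hDc hnk).trans ?_
    rw [Real.mul_rpow (by positivity) hw, ← Real.rpow_natCast, ← Real.rpow_mul (by positivity)]
    gcongr
    push_cast
    linarith
  refine hnw.trans ?_
  have h3 : k ^ c₁ = k ^ (c₁ / 2) * k ^ (c₁ / 2) := by
    rw [← Real.rpow_add (by positivity)]; ring_nf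
  have hMc : 0 < M ^ c₁ := by positivity
  rw [h3, div_mul_eq_mul_div, le_div_iff₀ hMc]
  calc _ = (2 * M ^ c₁) * (k ^ (c₁ / 2) * w ^ c) := by ring
    _ ≤ k ^ (c₁ / 2) * (k ^ (c₁ / 2) * w ^ c) := by gcongr
    _ = _ := by ring

theorem exists_rpow_le_homNum {W : Type*} [Fintype W] (F : SimpleGraph W) (hF : F.IsAcyclic)
    {L : ℕ} (hL : 2 ≤ L) : ∃ c : ℝ, 0 < c ∧ ∀ {V : Type*} (G : SimpleGraph V),
      ¬ Nonempty (starExpansion F ↪g G) →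
      (∀ m : ℕ, L ≤ m → ¬ Nonempty ((cycleGraph m)ᶜ ↪g G)) →
      ∀ X : Finset V, (X.card : ℝ) ^ c ≤ homNum G X := by
  classical
  obtain ⟨D₁, M, hD₁, hM, hpair⟩ := exists_purePair_or_rainbow (starExpansion F) hL F hF
  obtain ⟨c₁, hc₁, hD₁c⟩ := exists_rpow_le_two D₁
  obtain ⟨k₀, hk₀⟩ := exists_le_rpow (half_pos hc₁) (2 * (M : ℝ) ^ c₁)
  obtain ⟨D₂, hD₂, hsparse⟩ := exists_sparse_or_purePair (starExpansion F) hL (k₀ ^ 2 + 408 ^ 4)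
  obtain ⟨c₂, hc₂, hD₂c⟩ := exists_rpow_le_two (4 * D₂ ^ 2)
  have hM' : (1 : ℝ) ≤ M := by exact_mod_cast hM
  have hD₂' : (1 : ℝ) ≤ D₂ := by exact_mod_cast hD₂
  obtain ⟨c, hc, hcc₁, hcc₂, hc4⟩ : ∃ c : ℝ, 0 < c ∧ c ≤ c₁ / 4 ∧ c ≤ c₂ ∧ c ≤ 1 / 4 :=
    ⟨min (c₁ / 4) (min c₂ (1 / 4)), by positivity, min_le_left _ _,
      (min_le_right _ _).trans (min_le_left _ _), (min_le_right _ _).trans (min_le_right _ _)⟩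
  have hn₀c : ((4 * D₂ ^ 2 : ℕ) : ℝ) ^ c ≤ 2 := hD₂c c hc.le hcc₂
  have hD₂2 : (D₂ : ℝ) ^ c ≤ 2 := by
    refine (Real.rpow_le_rpow (by positivity) ?_ hc.le).trans hn₀c
    push_cast
    nlinarith
  refine ⟨c, hc, fun {V} G hG hC X => ?_⟩
  induction X using Finset.strongInduction with
  | H X ih =>
  by_contra! hlt
  have hXne : X.Nonempty := by
    rw [Finset.nonempty_iff_ne_empty]
    rintro rfl
    rw [Finset.card_empty, Nat.cast_zero, Real.zero_rpow hc.ne'] at hlt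
    exact hlt.not_ge (Nat.cast_nonneg _)
  set n := X.card with hn
  have hnlarge : 4 * D₂ ^ 2 < n := by
    by_contra! hle
    have h1 : (n : ℝ) ^ c ≤ 2 := by
      refine (Real.rpow_le_rpow (by positivity) ?_ hc.le).trans hn₀c
      exact_mod_cast hle
    rcases Nat.lt_or_ge n 2 with h2 | h2
    · have h3 : n = 1 := by have := hXne.card_pos; omega
      have h4 : (1 : ℝ) ≤ homNum G X := by exact_mod_cast one_le_homNum hXne
      rw [h3] at hlt
      rw [Nat.cast_one, Real.one_rpow] at hlt
      linarith
    · have h4 : (2 : ℝ) ≤ homNum G X := by exact_mod_cast two_le_homNum h2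
      linarith
  have hn1 : (1 : ℝ) ≤ n := by exact_mod_cast hXne.card_pos
  have hn0 : (0 : ℝ) < n := by linarith
  have hnc : 0 < (n : ℝ) ^ c := by positivity
  rcases hsparse G hG hC X (by nlinarith) with hpp | ⟨Y, hYX, e, he, hXe, hEe, hdeg⟩
  · obtain ⟨A, hA, B, hB, hAc, hBc, hAB⟩ := hpp.exists_homNum_le hXne
    have key : ∀ Z ⊂ X, n ≤ D₂ * Z.card → (n : ℝ) ^ c ≤ 2 * homNum G Z := by
      intro Z hZ hZc
      have h1 : (n : ℝ) ^ c ≤ 2 * (Z.card : ℝ) ^ c := by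
        refine rpow_le_two_mul_rpow (D := D₂) (by positivity) (by positivity) (by positivity)
          hc.le hD₂2 ?_
        exact_mod_cast hZc
      linarith [ih Z hZ]
    have h1 := key A hA hAc
    have h2 := key B hB hBc
    have h3 : (homNum G A : ℝ) + homNum G B ≤ homNum G X := by exact_mod_cast hAB
    linarith
  set m := Y.card with hm
  set a := cliqueNumOn Gᶜ X with ha
  have hem : e ≤ m := by nlinarith
  have hnm : (n : ℝ) ≤ D₂ * m := by
    have : n ≤ D₂ * m := hXe.trans (Nat.mul_le_mul_left _ hem)
    exact_mod_cast this
  have ha1 : (1 : ℝ) ≤ a := by exact_mod_cast one_le_cliqueNumOn hXne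
  have hω1 : (1 : ℝ) ≤ cliqueNumOn G X := by exact_mod_cast one_le_cliqueNumOn hXne
  have hωa : (cliqueNumOn G X : ℝ) * a < (n : ℝ) ^ c := by
    have := hlt
    rw [homNum] at this
    push_cast at this
    exact this
  -- stable sets in proper subsets
  have hstab : ∀ Z ⊂ X, a * (Z.card : ℝ) ^ c ≤ cliqueNumOn Gᶜ Z * (n : ℝ) ^ c := by
    intro Z hZ
    have h1 := ih Z hZ
    rw [homNum] at h1
    push_cast at h1
    have h2 : (cliqueNumOn G Z : ℝ) ≤ cliqueNumOn G X := by exact_mod_cast cliqueNumOn_mono hZ.1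
    have h3 : (0 : ℝ) ≤ cliqueNumOn Gᶜ Z := by positivity
    calc (a : ℝ) * (Z.card : ℝ) ^ c ≤ a * (cliqueNumOn G X * cliqueNumOn Gᶜ Z) := by
          gcongr
          exact h1.trans (by gcongr)
      _ = cliqueNumOn Gᶜ Z * (cliqueNumOn G X * a) := by ring
      _ ≤ _ := by gcongr
  have ham : 2 * a < m := by
    have h1 : (a : ℝ) < (n : ℝ) ^ c := by nlinarith
    have h2 : (4 * (D₂ : ℝ) ^ 2) ≤ n := by exact_mod_cast hnlarge.le
    exact_mod_cast two_mul_lt_of_lt_rpow (by positivity) hn1 h2 hnm (by linarith) h1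
  have hproper : ∀ Z ⊆ Y, Z.card ≤ e → Z ⊂ X := by
    intro Z hZ hZe
    refine ⟨hZ.trans hYX, fun h => ?_⟩
    have h1 := Finset.card_le_card h
    have h2 := Finset.card_le_card hYX
    nlinarith
  obtain ⟨v, hvY, Δ, hΔe, S, hSv, B, hBY, hvB, hSst, hSdeg, hBS, hBc⟩ :=
    exists_expanding_stable (G := G) (Y := Y) (e := e) (a := a) hem hdeg (cliqueNumOn_mono hYX) ham
      (by
        intro Z hZ hZne hZe
        have hZ0 : (0 : ℝ) < Z.card := by exact_mod_cast hZne.card_pos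
        have h1 := hstab Z (hproper Z hZ hZe)
        have h2 := sqrt_le_rpow_of_small (D := D₂) (m := m) (n := n) (z := Z.card) (c := c)
          (by positivity) hn0 hZ0 hnm (by
            have : 408 ^ 4 * Z.card ≤ m := by nlinarith
            exact_mod_cast this) hc.le hc4 hD₂2
        have h3 : 204 * (a : ℝ) * Real.sqrt (m * Z.card) * (n : ℝ) ^ c ≤
            cliqueNumOn Gᶜ Z * m * (n : ℝ) ^ c := by
          calc _ = a * (204 * Real.sqrt (m * Z.card) * (n : ℝ) ^ c) := by ring
            _ ≤ a * ((Z.card : ℝ) ^ c * m) := by gcongr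
            _ = a * (Z.card : ℝ) ^ c * m := by ring
            _ ≤ cliqueNumOn Gᶜ Z * (n : ℝ) ^ c * m := by gcongr
            _ = _ := by ring
        exact le_of_mul_le_mul_right h3 hnc)
  obtain ⟨A, hAS, w, hw, hmA, P, hP⟩ := exists_comb Δ B hSdeg hBS hBc
  set k := A.card with hk
  have hA0 : A.Nonempty := Finset.card_pos.1 (Nat.pos_of_ne_zero fun h0 => by
    rw [← hk] at h0
    rw [h0, zero_pow two_ne_zero, zero_mul] at hmA
    omega)
  have hwe : w ≤ e := by
    obtain ⟨x, hx⟩ := hA0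
    rw [← (hP x hx).2.1]
    refine (Finset.card_le_card fun b hb => ?_).trans ((hSdeg x (hAS hx)).trans hΔe)
    exact mem_nbs.2 ⟨(hP x hx).1 hb, ((hP x hx).2.2 b hb x hx).2 rfl⟩
  have hkk : k₀ ≤ k := by
    have h1 : k₀ ^ 2 * w ≤ k ^ 2 * w := by nlinarith
    exact le_of_pow_le_pow_left₀ (by norm_num) (by positivity) (Nat.le_of_mul_le_mul_right h1 hw)
  set Q := A.biUnion P with hQ
  have hQX : Q ⊂ X := by
    have h1 : Q ⊆ B := Finset.biUnion_subset.2 fun x hx => (hP x hx).1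
    exact ⟨(h1.trans hBY).trans hYX, fun h => (hvB v (h1 (h (hYX hvY)))).1 rfl⟩
  have hQc : Q.card = k * w := by
    rw [hQ, Finset.card_biUnion]
    · rw [Finset.sum_congr rfl fun x hx => (hP x hx).2.1, Finset.sum_const, smul_eq_mul]
    · intro x hx y hy hxy
      refine Finset.disjoint_left.2 fun b hb hb' => hxy ?_
      exact ((hP y hy).2.2 b hb' x hx).1 (((hP x hx).2.2 b hb x hx).2 rfl)
  have hgain := le_homNum_of_hasPurePair (G := G) (X := Q) (D₁ := D₁) (M := M) (w := w) (c := c)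
    (c₁ := c₁) hM hw hc (by linarith) (hD₁c c₁ hc₁.le le_rfl)
    (fun R hR hRc => hasPurePair_of_comb hG hw (hpair G hG hC) (hSst.subset (by exact_mod_cast hAS))
      (fun x hx => (mem_nbs.1 (hSv (hAS hx))).2) hvB hP
      (fun b hb => Finset.mem_biUnion.1 (hR hb)) hRc)
    (fun R hR => ih R (lt_of_le_of_lt hR hQX)) Q subset_rfl
  have hw' : (1 : ℝ) ≤ w := by exact_mod_cast hw
  have hk' : (1 : ℝ) ≤ k := by exact_mod_cast hA0.card_pos
  have hratio : (Q.card : ℝ) / (M * w) = k / M := by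
    rw [hQc]; push_cast; field_simp
  rw [hratio, Real.div_rpow (by positivity) (by positivity)] at hgain
  have h1 : (homNum G Q : ℝ) ≤ homNum G X := by exact_mod_cast homNum_mono hQX.1
  have h2 : (n : ℝ) ≤ D₂ * ((k : ℝ) ^ 2 * w) := by
    refine hnm.trans ?_
    gcongr
    exact_mod_cast hmA
  have h3 := rpow_le_of_gain (by positivity) hn0.le hk' (by positivity) (by positivity) hc.le hcc₁
    hD₂2 h2 (hk₀ k hkk)
  linarith

end Conclusion

/-- For `H` the star-expansion of a forest and any `ℓ ≥ 3`, the set consisting of `H`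
together with the complements of all cycles of length at least `ℓ` has the Erdős–Hajnal
property. -/
theorem stmt_18 {W : Type*} [Fintype W] (F : SimpleGraph W) (hF : F.IsAcyclic)
    (ℓ : ℕ) (hℓ : 3 ≤ ℓ) :
    ∃ τ : ℝ, 0 < τ ∧
      ∀ (V : Type) [Fintype V] (G : SimpleGraph V),
        ¬ Nonempty (starExpansion F ↪g G) →
        (∀ m : ℕ, ℓ ≤ m → ¬ Nonempty ((cycleGraph m)ᶜ ↪g G)) →
        (Fintype.card V : ℝ) ^ τ ≤ ((max (alphaNum G) (omegaNum G) : ℕ) : ℝ) := by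
  obtain ⟨c, hc, h⟩ := exists_rpow_le_homNum F hF (L := ℓ) (by omega)
  refine ⟨c / 2, half_pos hc, fun V _ G hG hC => ?_⟩
  have h1 := h G hG hC Finset.univ
  have hle : ∀ H : SimpleGraph V, cliqueNumOn H Finset.univ ≤ H.cliqueNum := by
    intro H
    obtain ⟨K, -, hK, hKc⟩ := exists_card_eq_cliqueNumOn H Finset.univ
    exact hKc ▸ hK.card_le_cliqueNum
  have h2 : homNum G Finset.univ ≤ max (alphaNum G) (omegaNum G) ^ 2 := by
    rw [sq]
    exact Nat.mul_le_mul ((hle G).trans (le_max_right _ _)) ((hle Gᶜ).trans (le_max_left _ _))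
  have h3 : (homNum G Finset.univ : ℝ) ≤ ((max (alphaNum G) (omegaNum G) : ℕ) : ℝ) ^ 2 := by
    exact_mod_cast h2
  refine le_of_pow_le_pow_left₀ (n := 2) (by norm_num) (by positivity) ?_
  rw [← Real.rpow_natCast, ← Real.rpow_mul (by positivity)]
  refine le_trans (le_of_eq ?_) (h1.trans h3)
  rw [Finset.card_univ]
  congr 1
  push_cast
  ring
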